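/- arXiv:math/0402334 — 2 statements merged into one kernel-verified Lean document; each statement's English description precedes it below -/
import Mathlib

section
/- Let X be the punctured Möbius band with boundary circles C₁ and C₂. If f : X → X is a boundary-preserving map such that both restrictions f|C₁ : C₁ → ∂X and f|C₂ : C₂ → ∂X are inessential and f(∂X) is contained in a single boundary circle (that is, f(∂X) ⊆ C₁ or f(∂X) ⊆ C₂), then f is boundary-homotopic to a map g : X → X having exactly one fixed point. -/
open Set

namespace PMB

/-- The square [0,1] × [−1,1] as a subspace of ℝ². -/
def Sq : Set (ℝ × ℝ) := Set.Icc 0 1 ×ˢ Set.Icc (-1) 1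

/-- The identification (0,y) ∼ (1,−y) on the square. -/
def rel (p q : Sq) : Prop :=
  (p : ℝ × ℝ) = (q : ℝ × ℝ) ∨
  ((p : ℝ × ℝ).1 = 0 ∧ (q : ℝ × ℝ).1 = 1 ∧ (p : ℝ × ℝ).2 = -(q : ℝ × ℝ).2) ∨
  ((p : ℝ × ℝ).1 = 1 ∧ (q : ℝ × ℝ).1 = 0 ∧ (q : ℝ × ℝ).2 = -(p : ℝ × ℝ).2)

/-- The Möbius band: the quotient of the square by the identification. -/
def M := Quot rel

instance : TopologicalSpace M := inferInstanceAs (TopologicalSpace (Quot rel))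

/-- The quotient map. -/
def qm : Sq → M := Quot.mk rel

/-- The open disc of radius 1/4 centred at (1/2, 0). -/
def Bdisc : Set (ℝ × ℝ) := Metric.ball (1/2, 0) (1/4)

/-- The circle of radius 1/4 centred at (1/2, 0). -/
def Scirc : Set (ℝ × ℝ) := Metric.sphere (1/2, 0) (1/4)

/-- The punctured Möbius band, as a subset of the Möbius band. -/
def Xset : Set M := {m | m ∉ qm '' {p : Sq | (p : ℝ × ℝ) ∈ Bdisc}}

/-- The punctured Möbius band as a topological space. -/
abbrev X : Type := ↥Xset

/-- The boundary circle of the Möbius band. -/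
def C1 : Set X := {x | ∃ p : Sq, qm p = (x : M) ∧ ((p : ℝ × ℝ).2 = 1 ∨ (p : ℝ × ℝ).2 = -1)}

/-- The boundary circle coming from the removed disc. -/
def C2 : Set X := {x | ∃ p : Sq, qm p = (x : M) ∧ (p : ℝ × ℝ) ∈ Scirc}

/-- The boundary of the punctured Möbius band. -/
def Bd : Set X := C1 ∪ C2

/-- A self-map of the punctured Möbius band is boundary-preserving if it sends ∂X into ∂X. -/
def BoundaryPreserving (f : C(X, X)) : Prop := MapsTo f Bd Bd

/-- Two self-maps are boundary-homotopic if there is a homotopy between them keeping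
∂X inside ∂X at all times. -/
def BoundaryHomotopic (f g : C(X, X)) : Prop :=
  ∃ H : ContinuousMap.Homotopy f g, ∀ x : X, x ∈ Bd → ∀ t : unitInterval, H (t, x) ∈ Bd

/-- A continuous map is inessential if it is homotopic to a constant map. -/
def Inessential {α β : Type*} [TopologicalSpace α] [TopologicalSpace β] (f : C(α, β)) : Prop :=
  ∃ b : β, ContinuousMap.Homotopic f (ContinuousMap.const α b)

/-- A continuous map is essential if it is not homotopic to a constant map. -/
def Essential {α β : Type*} [TopologicalSpace α] [TopologicalSpace β] (f : C(α, β)) : Prop :=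
  ¬ Inessential f

/-- The restriction of a self-map of X to a subset `s` mapped into a subset `t`,
as a continuous map between the subspaces. -/
def restrictMap (f : C(X, X)) {s t : Set X} (h : MapsTo f s t) : C(s, t) :=
  ⟨fun x => ⟨f x, h x.2⟩, Continuous.subtype_mk (f.continuous.comp continuous_subtype_val) _⟩

/-!
After a boundary homotopy, `f` is constant on `C₁` and constant on `C₂`, so it factors through the
projective plane obtained from `X` by collapsing each of the two circles to a point. The fundamental
group of the projective plane has order two, whereas the free group `π₁(X)` has no torsion; hence
`f` lifts to the universal covering of the bouquet of two circles onto which `X` retracts. This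
covering is a tree, and shrinking the tree contracts `f` through maps that are constant on each
boundary circle. The tracks of the two circles turn the contraction into a boundary homotopy from
`f` to a map of the form `γ ∘ radius`, where `γ` is a path between two points of the same boundary
circle. Pushing `γ` off the other circle leaves room to reparametrise the radius so that it is
constant on all values that it takes along `γ`, and then only one point can be fixed.
-/

/-! ### The tree of words -/

section WordTree

open unitInterval
open scoped UniformConvergence

/-- `IsTreePoint c` says that `c` encodes a point of the tree whose vertices are the words over
`β`, rooted at `[]`, with an edge from `w` to `b :: w`: the function `c` is the indicator of the
path from the root to that point, and its value at the last word of the path is the portion of the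
last edge which is covered. -/
structure IsTreePoint {β : Type*} (c : List β →ᵤ I) : Prop where
  root : c [] = 1
  comparable : ∀ {v w}, c v ≠ 0 → c w ≠ 0 → v <:+ w ∨ w <:+ v
  saturated : ∀ {v w}, c w ≠ 0 → v <:+ w → v ≠ w → c v = 1
  finite_height : ∃ n : ℕ, ∀ w, n < w.length → c w = 0

/-- The geometric realization of the tree of words over `β`, with the supremum metric. -/
abbrev WordTree (β : Type*) : Type _ := {c : List β →ᵤ I // IsTreePoint c}

namespace WordTree

variable {β : Type*}

lemma dist_le {c c' : WordTree β} {ε : ℝ} (hε : 0 ≤ ε) :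
    dist c c' ≤ ε ↔ ∀ w, dist (c.1 w) (c'.1 w) ≤ ε :=
  UniformFun.dist_le hε

lemma dist_apply_le (c c' : WordTree β) (w : List β) : dist (c.1 w) (c'.1 w) ≤ dist c c' :=
  (dist_le dist_nonneg).1 le_rfl w

lemma continuous_apply (w : List β) : Continuous fun c : WordTree β => c.1 w :=
  LipschitzWith.continuous (K := 1) <| .of_dist_le_mul fun c c' => by
    simpa using dist_apply_le c c' w

lemma eq_of_ne_zero_of_ne_one {c : WordTree β} {v w : List β} (hv₀ : c.1 v ≠ 0) (hv₁ : c.1 v ≠ 1)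
    (hw₀ : c.1 w ≠ 0) (hw₁ : c.1 w ≠ 1) : v = w := by
  by_contra hne
  rcases c.2.comparable hv₀ hw₀ with h | h
  · exact hv₁ (c.2.saturated hw₀ h hne)
  · exact hw₁ (c.2.saturated hv₀ h (Ne.symm hne))

lemma suffix_tail {v w : List β} (h : v <:+ w) (hne : v ≠ w) : v <:+ w.tail := by
  cases w with
  | nil => exact h
  | cons b w => exact (List.suffix_cons_iff.1 h).resolve_left hne

open Classical in
/-- The point of the tree reached after covering the portion `s` of the edge leading to `w`. -/
noncomputable def point (w : List β) (s : I) : WordTree β where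
  val := UniformFun.ofFun fun v => if v <:+ w.tail then 1 else if v = w then s else 0
  property := by
    have suffix_of_ne_zero {v : List β}
        (hv : (if v <:+ w.tail then 1 else if v = w then s else 0) ≠ 0) : v <:+ w := by
      split_ifs at hv with h₁ h₂
      · exact h₁.trans w.tail_suffix
      · exact h₂ ▸ List.suffix_rfl
      · exact absurd rfl hv
    refine ⟨?_, fun hu hv => ?_, fun {u v} hv huv hne => if_pos ?_,
      w.length, fun v hv => by_contra fun h => ?_⟩
    · change (if [] <:+ w.tail then 1 else if [] = w then s else 0) = (1 : I)
      exact if_pos List.nil_suffix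
    · exact List.suffix_or_suffix_of_suffix (suffix_of_ne_zero hu) (suffix_of_ne_zero hv)
    · refine suffix_tail (huv.trans (suffix_of_ne_zero hv)) ?_
      rintro rfl
      exact hne (huv.eq_of_length_le (suffix_of_ne_zero hv).length_le)
    · exact (suffix_of_ne_zero h).length_le.not_gt hv

open Classical in
lemma point_apply (w : List β) (s : I) (v : List β) :
    (point w s).1 v = if v <:+ w.tail then 1 else if v = w then s else 0 := rfl

lemma point_cons_zero (b : β) (w : List β) : point (b :: w) 0 = point w 1 := by
  refine Subtype.ext (funext fun v => ?_)
  rw [point_apply, point_apply]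
  by_cases hv : v <:+ w
  · by_cases hvw : v = w <;> simp [hv, hvw, suffix_tail hv]
  · have h₁ : ¬ v <:+ w.tail := fun h => hv (h.trans w.tail_suffix)
    have h₂ : v ≠ w := fun h => hv (h ▸ List.suffix_rfl)
    simp [hv, h₁, h₂]

lemma point_cons_apply_self (b : β) (w : List β) (s : I) : (point (b :: w) s).1 (b :: w) = s := by
  have h : ¬ b :: w <:+ w := fun h => by simpa using h.length_le
  simp [point_apply, h]

lemma point_one_apply (w v : List β) : (point w 1).1 v = 0 ∨ (point w 1).1 v = 1 := by
  rw [point_apply]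
  split_ifs <;> simp

lemma continuous_point (w : List β) : Continuous (point w) := by
  refine LipschitzWith.continuous (K := 1) <| .of_dist_le_mul fun s s' => ?_
  rw [NNReal.coe_one, one_mul, dist_le dist_nonneg]
  intro v
  rw [point_apply, point_apply]
  split_ifs <;> simp

lemma exists_forall_apply_eq_zero_of_dist_lt (c : WordTree β) :
    ∃ n : ℕ, ∀ c' : WordTree β, dist c' c < 1 → ∀ w, n < w.length → c'.1 w = 0 := by
  obtain ⟨n, hn⟩ := c.2.finite_height
  refine ⟨n + 1, fun c' hc' w hw => by_contra fun hw₀ => ?_⟩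
  obtain ⟨b, w, rfl⟩ : ∃ b v, w = b :: v := List.exists_cons_of_length_pos (by omega)
  have hw₁ : c'.1 w = 1 := c'.2.saturated hw₀ (List.suffix_cons b w) (List.cons_ne_self b w).symm
  have h := (dist_apply_le c' c w).trans_lt hc'
  rw [hw₁, hn w (by simpa using hw)] at h
  simp [Subtype.dist_eq] at h

lemma exists_forall_apply_eq_zero {A : Type*} [TopologicalSpace A] [CompactSpace A]
    (f : C(A, WordTree β)) : ∃ n : ℕ, ∀ a w, n < w.length → (f a).1 w = 0 := by
  choose n hn using exists_forall_apply_eq_zero_of_dist_lt (β := β)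
  obtain ⟨t, -, ht⟩ := (isCompact_range f.continuous).elim_nhds_subcover
    (fun c => Metric.ball c 1) fun c _ => Metric.ball_mem_nhds c one_pos
  refine ⟨t.sup n, fun a w hw => ?_⟩
  obtain ⟨c, hct, hc⟩ := mem_iUnion₂.1 (ht (mem_range_self a))
  exact hn c (f a) hc w ((Finset.le_sup hct).trans_lt hw)

/-- The retraction of the tree onto the ball of radius `max s 0` about the root. -/
noncomputable def truncate (s : ℝ) (c : WordTree β) : WordTree β where
  val := UniformFun.ofFun fun w =>
    min (c.1 w) (projIcc (0 : ℝ) 1 zero_le_one (max s 0 + 1 - w.length))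
  property := by
    have min_ne_zero {a b : I} (h : min a b ≠ 0) : a ≠ 0 ∧ b ≠ 0 := by
      simpa only [← unitInterval.pos_iff_ne_zero, lt_min_iff] using h
    obtain ⟨n, hn⟩ := c.2.finite_height
    refine ⟨?_, fun hv hw => c.2.comparable (min_ne_zero hv).1 (min_ne_zero hw).1,
      fun {v w} hw hvw hne => ?_, n, fun w hw => ?_⟩
    · change min (c.1 []) _ = _
      rw [c.2.root, projIcc_of_right_le _ (by simp)]
      exact min_self _
    · have hlt : v.length < w.length :=
        hvw.length_le.lt_of_ne fun h => hne (hvw.eq_of_length h)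
      have hpos : 0 < max s 0 + 1 - w.length := by
        by_contra! h
        exact (min_ne_zero hw).2 (projIcc_of_le_left _ h)
      have hlt' : (v.length : ℝ) + 1 ≤ w.length := by exact_mod_cast hlt
      change min (c.1 v) _ = _
      rw [c.2.saturated (min_ne_zero hw).1 hvw hne, projIcc_of_right_le _ (by linarith)]
      exact min_self _
    · change min (c.1 w) _ = _
      rw [hn w hw]
      exact min_eq_left bot_le

lemma truncate_apply (s : ℝ) (c : WordTree β) (w : List β) :
    (truncate s c).1 w = min (c.1 w) (projIcc (0 : ℝ) 1 zero_le_one (max s 0 + 1 - w.length)) := rfl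

lemma truncate_of_nonpos {s : ℝ} (hs : s ≤ 0) (c : WordTree β) : truncate s c = point [] 1 := by
  refine Subtype.ext (funext fun w => ?_)
  rw [truncate_apply, point_apply, max_eq_right hs]
  cases w with
  | nil => simp [c.2.root]
  | cons b w =>
    rw [projIcc_of_le_left _ (by simp)]
    simp

lemma truncate_eq_self {n : ℕ} {c : WordTree β} (hc : ∀ w, n < w.length → c.1 w = 0) :
    truncate n c = c := by
  refine Subtype.ext (funext fun w => min_eq_left ?_)
  by_cases hw : n < w.length
  · exact (hc w hw).trans_le bot_le
  · have hw' : (w.length : ℝ) ≤ n := by exact_mod_cast not_lt.1 hw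
    rw [projIcc_of_right_le _ (by linarith [le_max_left (n : ℝ) 0])]
    exact le_top

lemma continuous_truncate : Continuous fun p : ℝ × WordTree β => truncate p.1 p.2 := by
  refine LipschitzWith.continuous (K := 1) <| .of_dist_le_mul fun p q => ?_
  rw [NNReal.coe_one, one_mul, dist_le dist_nonneg]
  intro w
  refine (abs_min_sub_min_le_max _ _ _ _).trans (max_le ?_ ((abs_projIcc_sub_projIcc _).trans ?_))
  · exact (dist_apply_le p.2 q.2 w).trans (le_max_right _ _)
  · rw [sub_sub_sub_cancel_right, add_sub_add_right_eq_sub]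
    exact (abs_max_sub_max_le_abs _ _ _).trans (le_max_left _ _)

/-! ### Maps from the tree to a bouquet of loops -/

variable {Y : Type*} [TopologicalSpace Y] {y₀ : Y} (ℓ : β → Path y₀ y₀)

open Classical in
/-- The map on the tree that runs along the loop `ℓ b` on every edge from `w` to `b :: w`. -/
noncomputable def bouquetMap (c : WordTree β) : Y :=
  if h : ∃ p : β × List β, c.1 (p.1 :: p.2) ≠ 0 ∧ c.1 (p.1 :: p.2) ≠ 1 then
    ℓ h.choose.1 (c.1 (h.choose.1 :: h.choose.2))
  else y₀

lemma bouquetMap_of_ne {c : WordTree β} {b : β} {w : List β} (h₀ : c.1 (b :: w) ≠ 0)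
    (h₁ : c.1 (b :: w) ≠ 1) : bouquetMap ℓ c = ℓ b (c.1 (b :: w)) := by
  have h : ∃ p : β × List β, c.1 (p.1 :: p.2) ≠ 0 ∧ c.1 (p.1 :: p.2) ≠ 1 := ⟨(b, w), h₀, h₁⟩
  have heq := eq_of_ne_zero_of_ne_one h.choose_spec.1 h.choose_spec.2 h₀ h₁
  rw [bouquetMap, dif_pos h, heq, (List.cons.inj heq).1]

lemma bouquetMap_of_forall {c : WordTree β} (h : ∀ w, c.1 w = 0 ∨ c.1 w = 1) :
    bouquetMap ℓ c = y₀ :=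
  dif_neg fun ⟨p, h₀, h₁⟩ => (h (p.1 :: p.2)).elim h₀ h₁

lemma bouquetMap_point_one (w : List β) : bouquetMap ℓ (point w 1) = y₀ :=
  bouquetMap_of_forall ℓ (point_one_apply w)

lemma bouquetMap_point_cons (b : β) (w : List β) (s : I) :
    bouquetMap ℓ (point (b :: w) s) = ℓ b s := by
  have hs := point_cons_apply_self b w s
  by_cases h₀ : s = 0
  · rw [h₀, point_cons_zero, bouquetMap_point_one, Path.source]
  by_cases h₁ : s = 1
  · rw [h₁, bouquetMap_point_one, Path.target]
  rw [bouquetMap_of_ne ℓ (by rwa [hs]) (by rwa [hs]), hs]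

lemma continuousAt_bouquetMap_of_ne {c : WordTree β} {b : β} {w : List β} (h₀ : c.1 (b :: w) ≠ 0)
    (h₁ : c.1 (b :: w) ≠ 1) : ContinuousAt (bouquetMap ℓ) c := by
  have hcont := (continuous_apply (b :: w)).continuousAt (x := c)
  refine ((ℓ b).continuous.continuousAt.comp hcont).congr ?_
  filter_upwards [hcont.eventually_ne h₀, hcont.eventually_ne h₁] with c' h₀' h₁'
  exact (bouquetMap_of_ne ℓ h₀' h₁').symm

lemma exists_forall_mem_of_dist_lt [Finite β] {N : Set Y} (hN : N ∈ nhds y₀) :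
    ∃ δ > 0, ∀ b, ∀ s t : I, t = 0 ∨ t = 1 → dist s t < δ → ℓ b s ∈ N := by
  have key (b : β) : ∀ᶠ δ in nhdsWithin (0 : ℝ) (Ioi 0),
      ∀ s t : I, t = 0 ∨ t = 1 → dist s t < δ → ℓ b s ∈ N := by
    obtain ⟨δ₀, hδ₀, h₀⟩ := Metric.mem_nhds_iff.1
      ((ℓ b).continuous.continuousAt.preimage_mem_nhds ((ℓ b).source.symm ▸ hN))
    obtain ⟨δ₁, hδ₁, h₁⟩ := Metric.mem_nhds_iff.1
      ((ℓ b).continuous.continuousAt.preimage_mem_nhds ((ℓ b).target.symm ▸ hN))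
    filter_upwards [nhdsWithin_le_nhds (Iio_mem_nhds (lt_min hδ₀ hδ₁))] with δ hδ s t ht hst
    rcases ht with rfl | rfl
    · exact h₀ (hst.trans (hδ.trans_le (min_le_left _ _)))
    · exact h₁ (hst.trans (hδ.trans_le (min_le_right _ _)))
  obtain ⟨δ, hδ, hδ₀⟩ := ((Filter.eventually_all.2 key).and self_mem_nhdsWithin).exists
  exact ⟨δ, hδ₀, hδ⟩

lemma continuousAt_bouquetMap_of_forall [Finite β] {c : WordTree β}
    (hc : ∀ w, c.1 w = 0 ∨ c.1 w = 1) : ContinuousAt (bouquetMap ℓ) c := by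
  refine Filter.tendsto_def.2 fun N hN => ?_
  rw [bouquetMap_of_forall ℓ hc] at hN
  obtain ⟨δ, hδ, hℓ⟩ := exists_forall_mem_of_dist_lt ℓ hN
  refine Filter.mem_of_superset (Metric.ball_mem_nhds c hδ) fun c' hc' => ?_
  by_cases h : ∃ p : β × List β, c'.1 (p.1 :: p.2) ≠ 0 ∧ c'.1 (p.1 :: p.2) ≠ 1
  · obtain ⟨⟨b, w⟩, h₀, h₁⟩ := h
    rw [mem_preimage, bouquetMap_of_ne ℓ h₀ h₁]
    exact hℓ b _ _ (hc _) ((dist_apply_le c' c _).trans_lt hc')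
  · rw [mem_preimage, bouquetMap, dif_neg h]
    exact mem_of_mem_nhds hN

lemma continuous_bouquetMap [Finite β] : Continuous (bouquetMap ℓ) := by
  refine continuous_iff_continuousAt.2 fun c => ?_
  by_cases hc : ∀ w, c.1 w = 0 ∨ c.1 w = 1
  · exact continuousAt_bouquetMap_of_forall ℓ hc
  · push Not at hc
    obtain ⟨w, h₀, h₁⟩ := hc
    cases w with
    | nil => exact absurd c.2.root h₁
    | cons b w => exact continuousAt_bouquetMap_of_ne ℓ h₀ h₁

/-- Shrinking the tree to its root contracts every map that factors through it. -/
lemma exists_homotopy_bouquetMap_comp [Finite β] {A : Type*} [TopologicalSpace A] [CompactSpace A]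
    (f : C(A, WordTree β)) : ∃ K : C(I × A, Y), (∀ a, K (0, a) = bouquetMap ℓ (f a)) ∧
      (∀ a, K (1, a) = y₀) ∧ ∀ t a a', f a = f a' → K (t, a) = K (t, a') := by
  obtain ⟨n, hn⟩ := exists_forall_apply_eq_zero f
  refine ⟨⟨fun p => bouquetMap ℓ (truncate (n * (1 - p.1)) (f p.2)), ?_⟩, fun a => ?_,
    fun a => ?_, fun t a a' h => ?_⟩
  · have hcont : Continuous fun p : I × A => ((n * (1 - p.1) : ℝ), f p.2) := by fun_prop
    exact (continuous_bouquetMap ℓ).comp (continuous_truncate.comp hcont)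
  · simp [truncate_eq_self (hn a)]
  · simp [truncate_of_nonpos, bouquetMap_point_one]
  · simp [h]

end WordTree

end WordTree

/-! ### The Cayley graph of a free group as a tree -/

section CayleyTree

open unitInterval FreeGroup

variable {α : Type*} [DecidableEq α]

lemma toWord_of_mul (a : α) (g : FreeGroup α) :
    (of a * g).toWord = (a, true) :: g.toWord ∨ g.toWord = (a, false) :: (of a * g).toWord := by
  have h : (of a * g).toWord = reduce ((a, true) :: g.toWord) := by rw [toWord_mul]; rfl
  rw [h, reduce.cons, reduce_toWord]
  rcases g.toWord with _ | ⟨⟨b, ε⟩, w⟩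
  · exact .inl rfl
  · by_cases hb : a = b ∧ ε = false <;> simp_all

namespace WordTree

/-- The element `g` of the free group as a vertex of the tree of words. -/
noncomputable def vertex (g : FreeGroup α) : WordTree (α × Bool) := point g.toWord 1

/-- The edge of the Cayley graph of the free group from `g` to `of a * g`. -/
noncomputable def edge (g : FreeGroup α) (a : α) (s : I) : WordTree (α × Bool) :=
  if (of a * g).toWord = (a, true) :: g.toWord then point ((a, true) :: g.toWord) s
  else point ((a, false) :: (of a * g).toWord) (σ s)

lemma edge_zero (g : FreeGroup α) (a : α) : edge g a 0 = vertex g := by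
  rw [edge, vertex]
  split_ifs with h
  · exact point_cons_zero _ _
  · rw [symm_zero, ← (toWord_of_mul a g).resolve_left h]

lemma edge_one (g : FreeGroup α) (a : α) : edge g a 1 = vertex (of a * g) := by
  rw [edge, vertex]
  split_ifs with h
  · rw [h]
  · rw [symm_one, point_cons_zero]

@[fun_prop]
lemma continuous_edge (g : FreeGroup α) (a : α) : Continuous (edge g a) := by
  unfold edge
  split_ifs
  · exact continuous_point _
  · exact (continuous_point _).comp continuous_symm

variable {Y : Type*} [TopologicalSpace Y] {y₀ : Y} (γ : α → Path y₀ y₀)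

/-- The map from the Cayley graph of the free group on `α` to a bouquet of loops `γ a`; it is the
universal covering of the bouquet. -/
noncomputable def cayleyMap : WordTree (α × Bool) → Y :=
  bouquetMap fun b => if b.2 then γ b.1 else (γ b.1).symm

lemma cayleyMap_edge (g : FreeGroup α) (a : α) (s : I) : cayleyMap γ (edge g a s) = γ a s := by
  rw [cayleyMap, edge]
  split_ifs <;> simp [bouquetMap_point_cons, Path.symm_apply]

end WordTree

end CayleyTree

/-! ### Lifting along locally constant cocycles -/

section Flat

open Filter Topology

variable {ι A B G : Type*} [TopologicalSpace A] [Group G]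

/-- A flat section along `φ` of the `G`-covering of `B` defined by the cocycle `(e i)⁻¹ * e j`: in
the chart over `W i` it is given by `(e i)⁻¹ * g`. -/
def IsFlatAlong (W : ι → Set B) (e : ι → B → G) (φ : A → B) (g : A → G) : Prop :=
  ∀ i a, φ a ∈ W i → ∀ᶠ a' in 𝓝 a, (e i (φ a'))⁻¹ * g a' = (e i (φ a))⁻¹ * g a

variable {W : ι → Set B} {e : ι → B → G}

lemma IsFlatAlong.comp {A' : Type*} [TopologicalSpace A'] {φ : A → B} {g : A → G}
    (hg : IsFlatAlong W e φ g) (k : C(A', A)) : IsFlatAlong W e (φ ∘ k) (g ∘ k) :=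
  fun i a ha => k.continuous.continuousAt.eventually (hg i (k a) ha)

lemma IsFlatAlong.isLocallyConstant_inv_mul {φ : A → B} {g g' : A → G} (hW : ∀ b, ∃ i, b ∈ W i)
    (hg : IsFlatAlong W e φ g) (hg' : IsFlatAlong W e φ g') :
    IsLocallyConstant fun a => (g a)⁻¹ * g' a := by
  refine (IsLocallyConstant.iff_eventually_eq _).2 fun a => ?_
  obtain ⟨i, hi⟩ := hW (φ a)
  filter_upwards [hg i a hi, hg' i a hi] with a' ha ha'
  simpa [mul_assoc] using congrArg₂ (fun u v => u⁻¹ * v) ha ha'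

variable [TopologicalSpace B]

/-- A Čech cocycle on `B` with values in the discrete group `G`, presented as the ratios
`(e i)⁻¹ * e j`, which have to be locally constant on the overlaps of an open cover `W`. -/
structure IsFlatCocycle (W : ι → Set B) (e : ι → B → G) : Prop where
  isOpen : ∀ i, IsOpen (W i)
  exists_mem : ∀ b, ∃ i, b ∈ W i
  ratio_eventually_eq : ∀ i j, ∀ b ∈ W i ∩ W j,
    ∀ᶠ b' in 𝓝 b, (e i b')⁻¹ * e j b' = (e i b)⁻¹ * e j b

/-- The covering of `B` with fibre `G` defined by a flat cocycle. -/
noncomputable def IsFlatCocycle.core [TopologicalSpace G] [DiscreteTopology G]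
    (h : IsFlatCocycle W e) : FiberBundleCore ι B G where
  baseSet := W
  isOpen_baseSet := h.isOpen
  indexAt b := (h.exists_mem b).choose
  mem_baseSet_at b := (h.exists_mem b).choose_spec
  coordChange i j b v := (e j b)⁻¹ * e i b * v
  coordChange_self i b _ v := by simp
  coordChange_comp i j k b _ v := by group
  continuousOn_coordChange i j := by
    rintro ⟨b, v⟩ ⟨⟨hi, hj⟩, -⟩
    refine ContinuousAt.continuousWithinAt (continuousAt_const (y := (e j b)⁻¹ * e i b * v) |>.congr
      (EventuallyEq.symm ?_))
    filter_upwards [continuous_fst.continuousAt.eventually (h.ratio_eventually_eq j i b ⟨hj, hi⟩),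
      continuous_snd.continuousAt.eventually_mem ((isOpen_discrete {v}).mem_nhds rfl)] with p hp hv
    rw [hp, hv]

theorem IsFlatCocycle.exists_isFlatAlong [SimplyConnectedSpace A] [LocallyPathConnectedSpace A]
    (h : IsFlatCocycle W e) (φ : C(A, B)) : ∃ g : A → G, IsFlatAlong W e φ g := by
  let _ : TopologicalSpace G := ⊥
  have : DiscreteTopology G := ⟨rfl⟩
  let Z := h.core
  have hcov : IsCoveringMap (Bundle.TotalSpace.proj : Bundle.TotalSpace G Z.Fiber → B) :=
    FiberBundle.isCoveringMap
  obtain ⟨a₀⟩ : Nonempty A := inferInstance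
  obtain ⟨F, ⟨-, hF⟩, -⟩ := hcov.existsUnique_continuousMap_lifts φ a₀ ⟨φ a₀, (1 : G)⟩ rfl
  have proj_eq (a : A) : (F a).proj = φ a := congrFun hF a
  let v (a : A) : G := (F a).2
  let g (a : A) : G := e (Z.indexAt (φ a)) (φ a) * v a
  have localTriv_snd (i : ι) (a : A) : (Z.localTriv i (F a)).2 = (e i (φ a))⁻¹ * g a := by
    rw [Z.localTriv_apply, proj_eq]
    exact mul_assoc (e i (φ a))⁻¹ (e (Z.indexAt (φ a)) (φ a)) (v a)
  refine ⟨g, fun i a ha => ?_⟩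
  have hsource : F a ∈ (Z.localTriv i).source := by
    rw [Z.mem_localTriv_source, proj_eq]
    exact ha
  have hcont : ContinuousAt (fun a' => (Z.localTriv i (F a')).2) a :=
    continuous_snd.continuousAt.comp
      (((Z.localTriv i).continuousAt hsource).comp F.continuous.continuousAt)
  simp only [localTriv_snd] at hcont
  exact hcont.eventually_mem ((isOpen_discrete {_}).mem_nhds rfl)

end Flat

/-! ### Coordinates on the punctured Möbius band -/

section Coordinates

open Topology unitInterval

theorem isQuotientMap_restrictPreimage_of_isClosed {A B : Type*} [TopologicalSpace A]
    [TopologicalSpace B] {f : A → B} (hf : IsQuotientMap f) {s : Set B} (hs : IsClosed s) :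
    IsQuotientMap (s.restrictPreimage f) := by
  refine isQuotientMap_iff_isClosed.2 ⟨hf.surjective.restrictPreimage _, fun t => ?_⟩
  rw [hs.isClosedEmbedding_subtypeVal.isClosed_iff_image_isClosed, ← hf.isClosed_preimage,
    (hs.preimage hf.continuous).isClosedEmbedding_subtypeVal.isClosed_iff_image_isClosed,
    image_val_preimage_restrictPreimage]

/-- The square with the open disc around its centre removed. -/
def holedSq : Set (ℝ × ℝ) := Sq \ Bdisc

/-- The distance to the centre of the hole, in the supremum metric of `ℝ × ℝ`. -/
noncomputable def centreDist (p : ℝ × ℝ) : ℝ := max |p.1 - 1 / 2| |p.2|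

lemma continuous_centreDist : Continuous centreDist := by
  unfold centreDist
  fun_prop

lemma dist_centre (p : ℝ × ℝ) : dist p (1 / 2, 0) = centreDist p := by
  simp [Prod.dist_eq, Real.dist_eq, centreDist]

lemma mem_holedSq {p : ℝ × ℝ} :
    p ∈ holedSq ↔ p.1 ∈ Icc (0 : ℝ) 1 ∧ p.2 ∈ Icc (-1 : ℝ) 1 ∧ 1 / 4 ≤ centreDist p := by
  rw [holedSq, mem_sdiff, Bdisc, Metric.mem_ball, dist_centre, not_lt, Sq, mem_prod, and_assoc]

/-- Functions on the square that are compatible with the identification `(0, y) ∼ (1, -y)`. -/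
def SeamInvariant {Z : Type*} (φ : ℝ × ℝ → Z) : Prop :=
  ∀ y ∈ Icc (-1 : ℝ) 1, φ (0, y) = φ (1, -y)

lemma SeamInvariant.eq_of_qm_eq {Z : Type*} {φ : ℝ × ℝ → Z} (hφ : SeamInvariant φ) {p q : Sq}
    (h : qm p = qm q) : φ p = φ q := by
  have hrel : ∀ p q : Sq, rel p q → φ p = φ q := by
    rintro ⟨⟨x, y⟩, hp⟩ ⟨⟨x', y'⟩, hq⟩ (h | ⟨h₀, h₁, h₂⟩ | ⟨h₀, h₁, h₂⟩)
    · exact congrArg φ h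
    · obtain rfl : x = 0 := h₀
      obtain rfl : x' = 1 := h₁
      obtain rfl : y = -y' := h₂
      simpa using hφ _ hp.2
    · obtain rfl : x = 1 := h₀
      obtain rfl : x' = 0 := h₁
      obtain rfl : y' = -y := h₂
      simpa using (hφ _ hq.2).symm
  exact congrArg (Quot.lift (fun p : Sq => φ p) hrel) h

lemma seamInvariant_centreDist : SeamInvariant centreDist := by
  intro y _
  norm_num [centreDist]

lemma qm_mem_Xset {p : Sq} : qm p ∈ Xset ↔ (p : ℝ × ℝ) ∈ holedSq := by
  refine ⟨fun h => ⟨p.2, fun hp => h ⟨p, hp, rfl⟩⟩, fun h => ?_⟩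
  rintro ⟨q, hq, hqp⟩
  refine h.2 ?_
  rw [mem_ofPred_eq, Bdisc, Metric.mem_ball, dist_centre] at hq
  rwa [Bdisc, Metric.mem_ball, dist_centre, ← seamInvariant_centreDist.eq_of_qm_eq hqp]

lemma isQuotientMap_qm : IsQuotientMap qm := isQuotientMap_quot_mk

lemma isClosed_Xset : IsClosed Xset := by
  rw [← isQuotientMap_qm.isClosed_preimage]
  have h : qm ⁻¹' Xset = {p : Sq | 1 / 4 ≤ centreDist p} := by
    ext p
    rw [mem_preimage, qm_mem_Xset, mem_holedSq]
    exact ⟨fun h => h.2.2, fun h => ⟨p.2.1, p.2.2, h⟩⟩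
  rw [h]
  exact isClosed_le continuous_const (continuous_centreDist.comp continuous_subtype_val)

lemma mem_holedSq_of_fst_eq_zero {y : ℝ} (hy : y ∈ Icc (-1 : ℝ) 1) : (0, y) ∈ holedSq :=
  mem_holedSq.2 ⟨by norm_num, hy, le_max_of_le_left (by norm_num)⟩

lemma mem_holedSq_of_fst_eq_one {y : ℝ} (hy : y ∈ Icc (-1 : ℝ) 1) : (1, y) ∈ holedSq :=
  mem_holedSq.2 ⟨by norm_num, hy, le_max_of_le_left (by norm_num)⟩

open Classical in
/-- The quotient map from the square with a hole, extended by a junk value to the plane. -/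
noncomputable def toX (p : ℝ × ℝ) : X :=
  if h : p ∈ holedSq then ⟨qm ⟨p, h.1⟩, qm_mem_Xset.2 h⟩
  else ⟨qm ⟨(0, 0), by simp [Sq]⟩, qm_mem_Xset.2 (mem_holedSq_of_fst_eq_zero (by simp))⟩

lemma coe_toX {p : ℝ × ℝ} (hp : p ∈ holedSq) : (toX p : M) = qm ⟨p, hp.1⟩ := by
  rw [toX, dif_pos hp]

lemma exists_toX_eq (x : X) : ∃ p ∈ holedSq, toX p = x := by
  obtain ⟨p, hp⟩ := isQuotientMap_qm.surjective x.1
  have hpX : (p : ℝ × ℝ) ∈ holedSq := qm_mem_Xset.1 (hp ▸ x.2)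
  exact ⟨p, hpX, Subtype.ext ((coe_toX hpX).trans hp)⟩

lemma seamInvariant_toX : SeamInvariant toX := by
  intro y hy
  have hy' : -y ∈ Icc (-1 : ℝ) 1 := ⟨by linarith [hy.2], by linarith [hy.1]⟩
  refine Subtype.ext ?_
  rw [coe_toX (mem_holedSq_of_fst_eq_zero hy), coe_toX (mem_holedSq_of_fst_eq_one hy')]
  exact Quot.sound (.inr (.inl ⟨rfl, rfl, (neg_neg y).symm⟩))

lemma continuousOn_toX : ContinuousOn toX holedSq := by
  rw [continuousOn_iff_continuous_domRestrict]
  refine continuous_induced_rng.2 ?_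
  have h : Continuous fun p : holedSq => qm ⟨p, p.2.1⟩ :=
    isQuotientMap_qm.continuous.comp (continuous_subtype_val.subtype_mk _)
  exact h.congr fun p => (coe_toX p.2).symm

/-- A representative in the square of a point of `X`. -/
noncomputable def coords (x : X) : ℝ × ℝ := (exists_toX_eq x).choose

lemma coords_mem (x : X) : coords x ∈ holedSq := (exists_toX_eq x).choose_spec.1

lemma toX_coords (x : X) : toX (coords x) = x := (exists_toX_eq x).choose_spec.2

lemma SeamInvariant.apply_coords_toX {Z : Type*} {φ : ℝ × ℝ → Z} (hφ : SeamInvariant φ)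
    {p : ℝ × ℝ} (hp : p ∈ holedSq) : φ (coords (toX p)) = φ p := by
  have hc := coords_mem (toX p)
  refine hφ.eq_of_qm_eq (p := ⟨_, hc.1⟩) (q := ⟨p, hp.1⟩) ?_
  rw [← coe_toX hc, ← coe_toX hp, toX_coords]

variable {Z : Type*} [TopologicalSpace Z]

lemma continuous_prod_coords {T : Type*} [TopologicalSpace T] [LocallyCompactSpace T]
    {φ : T → ℝ × ℝ → Z} (hφ : ∀ t, SeamInvariant (φ t))
    (hcont : ContinuousOn (fun p : T × ℝ × ℝ => φ p.1 p.2) (univ ×ˢ holedSq)) :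
    Continuous fun p : T × X => φ p.1 (coords p.2) := by
  refine (isQuotientMap_restrictPreimage_of_isClosed isQuotientMap_qm
    isClosed_Xset).continuous_lift_prod_right ?_
  have h : Continuous fun p : T × ↥(qm ⁻¹' Xset) => φ p.1 p.2.1.1 :=
    hcont.comp_continuous (f := fun p : T × ↥(qm ⁻¹' Xset) => (p.1, p.2.1.1)) (by fun_prop)
      fun p => ⟨trivial, qm_mem_Xset.1 p.2.2⟩
  refine h.congr fun p => ?_
  have hp := qm_mem_Xset.1 p.2.2
  have heq : Xset.restrictPreimage qm p.2 = toX p.2.1.1 := Subtype.ext (coe_toX hp).symm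
  rw [heq, (hφ p.1).apply_coords_toX hp]

lemma continuous_coords {φ : ℝ × ℝ → Z} (hφ : SeamInvariant φ) (hcont : ContinuousOn φ holedSq) :
    Continuous fun x : X => φ (coords x) :=
  (continuous_prod_coords (T := Unit) (fun _ => hφ)
    (hcont.comp continuousOn_snd fun _ hp => hp.2)).comp (Continuous.prodMk_right ())

/-- The distance of a point of `X` to the centre of the hole. -/
noncomputable def radius (x : X) : ℝ := centreDist (coords x)

lemma continuous_radius : Continuous radius :=
  continuous_coords seamInvariant_centreDist continuous_centreDist.continuousOn

lemma radius_toX {p : ℝ × ℝ} (hp : p ∈ holedSq) : radius (toX p) = centreDist p :=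
  seamInvariant_centreDist.apply_coords_toX hp

lemma radius_mem_Icc (x : X) : radius x ∈ Icc (1 / 4 : ℝ) 1 := by
  obtain ⟨⟨h₀, h₁⟩, hy, hr⟩ := mem_holedSq.1 (coords_mem x)
  exact ⟨hr, max_le (abs_le.2 ⟨by linarith, by linarith⟩) (abs_le.2 hy)⟩

lemma exists_qm_eq_iff {x : X} {P : ℝ × ℝ → Prop} :
    (∃ p : Sq, qm p = (x : M) ∧ P p) ↔ ∃ p ∈ holedSq, toX p = x ∧ P p := by
  refine ⟨fun ⟨p, hpx, hP⟩ => ?_, fun ⟨p, hp, hpx, hP⟩ => ⟨⟨p, hp.1⟩, hpx ▸ (coe_toX hp).symm, hP⟩⟩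
  have hp : (p : ℝ × ℝ) ∈ holedSq := qm_mem_Xset.1 (hpx ▸ x.2)
  exact ⟨p, hp, Subtype.ext ((coe_toX hp).trans hpx), hP⟩

lemma mem_C1_iff {x : X} : x ∈ C1 ↔ radius x = 1 := by
  refine (exists_qm_eq_iff (P := fun p => p.2 = 1 ∨ p.2 = -1)).trans
    ⟨?_, fun h => ⟨coords x, coords_mem x, toX_coords x, ?_⟩⟩
  · rintro ⟨p, hp, rfl, hy⟩
    have habs : |p.2| = 1 := by rcases hy with h | h <;> simp [h]
    have hge : |p.2| ≤ centreDist p := le_max_right _ _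
    exact le_antisymm (radius_mem_Icc _).2 (by rw [radius_toX hp]; linarith)
  · obtain ⟨⟨h₀, h₁⟩, -, -⟩ := mem_holedSq.1 (coords_mem x)
    have hx : |(coords x).1 - 1 / 2| < 1 := abs_lt.2 ⟨by linarith, by linarith⟩
    exact eq_or_eq_neg_of_abs_eq ((max_eq_iff.1 h).resolve_left fun h' => hx.ne h'.1).1

lemma mem_C2_iff {x : X} : x ∈ C2 ↔ radius x = 1 / 4 := by
  refine exists_qm_eq_iff.trans ⟨?_, fun h => ⟨coords x, coords_mem x, toX_coords x, ?_⟩⟩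
  · rintro ⟨p, hp, rfl, hS⟩
    rwa [radius_toX hp, ← dist_centre]
  · rwa [Scirc, Metric.mem_sphere, dist_centre]

end Coordinates

/-! ### Radial deformations -/

section Radial

open unitInterval

lemma continuous_toX_coords {T : Type*} [TopologicalSpace T] [LocallyCompactSpace T]
    {φ : T → ℝ × ℝ → ℝ × ℝ} (hmem : ∀ t, MapsTo (φ t) holedSq holedSq)
    (hφ : ∀ t, SeamInvariant (toX ∘ φ t)) (hcont : ContinuousOn (Function.uncurry φ)
      (univ ×ˢ holedSq)) : Continuous fun p : T × X => toX (φ p.1 (coords p.2)) :=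
  continuous_prod_coords (φ := fun t => toX ∘ φ t) hφ
    (continuousOn_toX.comp hcont fun p hp => hmem p.1 hp.2)

/-- The point at distance `r` from the centre of the hole on the curve through `p` that is radial
inside the disc of radius `1 / 2` and vertical outside of it. -/
noncomputable def stretch (r : ℝ) (p : ℝ × ℝ) : ℝ × ℝ :=
  (1 / 2 + min r (1 / 2) / min (centreDist p) (1 / 2) * (p.1 - 1 / 2), r / centreDist p * p.2)

/-- The reparametrisations of the radius that can be realised by moving the points of `X` along
the curves of `stretch`. -/
structure IsRadial (h : ℝ → ℝ) : Prop where
  monotone : Monotone h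
  apply_half : h (1 / 2) = 1 / 2
  mapsTo : MapsTo h (Icc (1 / 4) 1) (Icc (1 / 4) 1)

lemma abs_stretch_fst {r : ℝ} (hr : 0 ≤ r) (p : ℝ × ℝ) : |(stretch r p).1 - 1 / 2| =
    min r (1 / 2) / min (centreDist p) (1 / 2) * |p.1 - 1 / 2| := by
  have hN : 0 ≤ centreDist p := le_max_of_le_left (abs_nonneg _)
  rw [stretch, add_sub_cancel_left, abs_mul, abs_of_nonneg (by positivity)]

lemma abs_stretch_snd {r : ℝ} (hr : 0 ≤ r) (p : ℝ × ℝ) :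
    |(stretch r p).2| = r / centreDist p * |p.2| := by
  have hN : 0 ≤ centreDist p := le_max_of_le_left (abs_nonneg _)
  rw [stretch, abs_mul, abs_of_nonneg (by positivity)]

lemma stretch_centreDist {p : ℝ × ℝ} (hp : p ∈ holedSq) : stretch (centreDist p) p = p := by
  have hN : 0 < centreDist p := by linarith [(mem_holedSq.1 hp).2.2]
  rw [stretch, div_self (by positivity), div_self hN.ne']
  ext <;> simp

namespace IsRadial

variable {h : ℝ → ℝ} {p : ℝ × ℝ}

lemma centreDist_stretch (hh : IsRadial h) (hp : p ∈ holedSq) :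
    centreDist (stretch (h (centreDist p)) p) = h (centreDist p) := by
  obtain ⟨⟨hx₀, hx₁⟩, hy, hN⟩ := mem_holedSq.1 hp
  have hx : |p.1 - 1 / 2| ≤ 1 / 2 := abs_le.2 ⟨by linarith, by linarith⟩
  have hN₁ : centreDist p ≤ 1 := max_le (by linarith) (abs_le.2 hy)
  have hr : 0 < h (centreDist p) := by linarith [(hh.mapsTo ⟨hN, hN₁⟩).1]
  rw [centreDist, abs_stretch_fst hr.le, abs_stretch_snd hr.le]
  rcases le_or_gt (centreDist p) (1 / 2) with hle | hgt
  · have hrle : h (centreDist p) ≤ 1 / 2 := (hh.monotone hle).trans_eq hh.apply_half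
    rw [min_eq_left hle, min_eq_left hrle, ← mul_max_of_nonneg _ _ (by positivity)]
    exact div_mul_cancel₀ _ (by linarith)
  · have hrge : 1 / 2 ≤ h (centreDist p) := hh.apply_half.symm.trans_le (hh.monotone hgt.le)
    have hNy : centreDist p = |p.2| := ((max_choice _ _).resolve_left fun h' => by
      rw [centreDist, h'] at hgt; linarith)
    rw [min_eq_right hgt.le, min_eq_right hrge, div_self (by norm_num), one_mul, ← hNy,
      div_mul_cancel₀ _ (by linarith), max_eq_right (hx.trans hrge)]

lemma stretch_mem (hh : IsRadial h) (hp : p ∈ holedSq) :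
    stretch (h (centreDist p)) p ∈ holedSq := by
  obtain ⟨⟨hx₀, hx₁⟩, hy, hN⟩ := mem_holedSq.1 hp
  have hx : |p.1 - 1 / 2| ≤ 1 / 2 := abs_le.2 ⟨by linarith, by linarith⟩
  have hr := hh.mapsTo ⟨hN, max_le (by linarith) (abs_le.2 hy)⟩
  have hfst : |(stretch (h (centreDist p)) p).1 - 1 / 2| ≤ 1 / 2 := by
    rw [abs_stretch_fst (by linarith [hr.1])]
    calc min (h (centreDist p)) (1 / 2) / min (centreDist p) (1 / 2) * |p.1 - 1 / 2|
        ≤ min (h (centreDist p)) (1 / 2) / min (centreDist p) (1 / 2) *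
            min (centreDist p) (1 / 2) := by
          have : 0 ≤ h (centreDist p) := by linarith [hr.1]
          have : 0 ≤ centreDist p := by linarith
          gcongr
          exact le_min (le_max_left _ _) hx
      _ = min (h (centreDist p)) (1 / 2) :=
          div_mul_cancel₀ _ (lt_min (by linarith) one_half_pos).ne'
      _ ≤ 1 / 2 := min_le_right _ _
  have hdist := hh.centreDist_stretch hp
  refine mem_holedSq.2 ⟨?_, abs_le.1 ?_, hdist.symm ▸ hr.1⟩
  · constructor <;> linarith [abs_le.1 hfst]
  · exact (le_max_right _ _).trans (hdist.trans_le hr.2)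

lemma seamInvariant_stretch (hh : IsRadial h) :
    SeamInvariant (toX ∘ fun p => stretch (h (centreDist p)) p) := by
  intro y hy
  have hN : 1 / 2 ≤ centreDist (0, y) := le_max_of_le_left (by norm_num)
  have hr : 1 / 2 ≤ h (centreDist (0, y)) := hh.apply_half.symm.trans_le (hh.monotone hN)
  have h₀ : stretch (h (centreDist (0, y))) (0, y) =
      (0, h (centreDist (0, y)) / centreDist (0, y) * y) := by
    simp only [stretch, min_eq_right hN, min_eq_right hr]
    norm_num
  have h₁ : stretch (h (centreDist (0, y))) (1, -y) =
      (1, -(h (centreDist (0, y)) / centreDist (0, y) * y)) := by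
    simp only [stretch, ← seamInvariant_centreDist y hy, min_eq_right hN, min_eq_right hr]
    norm_num
  have hmem := (mem_holedSq.1 (hh.stretch_mem (mem_holedSq_of_fst_eq_zero hy))).2.1
  rw [h₀] at hmem
  simp only [Function.comp_apply, ← seamInvariant_centreDist y hy, h₀, h₁]
  exact seamInvariant_toX _ hmem

end IsRadial

theorem exists_radial_homotopy {h : I → ℝ → ℝ} (hcont : Continuous (Function.uncurry h))
    (hh : ∀ t, IsRadial (h t)) : ∃ R : C(I × X, X),
      (∀ t x, radius (R (t, x)) = h t (radius x)) ∧
      ∀ t x, h t (radius x) = radius x → R (t, x) = x := by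
  have hcontinuous : ContinuousOn
      (Function.uncurry fun (t : I) p => stretch (h t (centreDist p)) p) (univ ×ˢ holedSq) := by
    have hN : Continuous fun p : I × ℝ × ℝ => centreDist p.2 :=
      continuous_centreDist.comp continuous_snd
    have hr : Continuous fun p : I × ℝ × ℝ => h p.1 (centreDist p.2) :=
      hcont.comp (continuous_fst.prodMk hN)
    have hpos : ∀ p ∈ (univ : Set I) ×ˢ holedSq, 0 < centreDist p.2 := fun p hp => by
      linarith [(mem_holedSq.1 hp.2).2.2]
    refine ContinuousOn.prodMk (continuousOn_const.add (ContinuousOn.mul (ContinuousOn.div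
      (hr.min continuous_const).continuousOn (hN.min continuous_const).continuousOn fun p hp =>
        (lt_min (hpos p hp) one_half_pos).ne') (by fun_prop))) (ContinuousOn.mul
      (hr.continuousOn.div hN.continuousOn fun p hp => (hpos p hp).ne') (by fun_prop))
  refine ⟨⟨_, continuous_toX_coords (fun t p hp => (hh t).stretch_mem hp)
    (fun t => (hh t).seamInvariant_stretch) hcontinuous⟩, fun t x => ?_, fun t x hx => ?_⟩
  · exact (radius_toX ((hh t).stretch_mem (coords_mem x))).trans
      ((hh t).centreDist_stretch (coords_mem x))
  · change toX (stretch (h t (radius x)) (coords x)) = x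
    rw [hx, radius, stretch_centreDist (coords_mem x), toX_coords]

lemma exists_homotopy_collar_subset_boundary : ∃ P : C(I × X, X), (∀ x, P (0, x) = x) ∧
    (∀ t, ∀ x ∈ Bd, P (t, x) = x) ∧ (∀ x, 3 / 4 ≤ radius x → P (1, x) ∈ C1) ∧
    ∀ x, radius x ≤ 3 / 8 → P (1, x) ∈ C2 := by
  obtain ⟨P, hrad, hfix⟩ := exists_radial_homotopy
    (h := fun t n => max (1 / 4) (min 1 (n + t * (n - 1 / 2)))) (by fun_prop)
    fun t => by
      have ht := t.2.1
      refine ⟨fun m n hmn => ?_, by norm_num, fun n _ => ?_⟩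
      · gcongr
      · exact ⟨le_max_left _ _, max_le (by norm_num) (min_le_left _ _)⟩
  refine ⟨P, fun x => hfix _ _ ?_, fun t x hx => hfix _ _ ?_, fun x hx => mem_C1_iff.2 ?_,
    fun x hx => mem_C2_iff.2 ?_⟩
  · have hx := radius_mem_Icc x
    rw [Icc.coe_zero, zero_mul, add_zero, min_eq_right hx.2, max_eq_right hx.1]
  · have ht := t.2.1
    rcases hx with hx | hx
    · rw [mem_C1_iff.1 hx, min_eq_left (by linarith), max_eq_right (by norm_num)]
    · rw [mem_C2_iff.1 hx, min_eq_right (by linarith), max_eq_left (by linarith)]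
  · rw [hrad, Icc.coe_one, min_eq_left (by linarith), max_eq_right (by norm_num)]
  · rw [hrad, Icc.coe_one, min_eq_right (by linarith), max_eq_left (by linarith)]

lemma exists_homotopy_avoiding_C1 : ∃ P : C(I × X, X), (∀ x, P (0, x) = x) ∧
    (∀ t, ∀ x ∈ C2, P (t, x) = x) ∧ ∀ x, P (1, x) ∉ C1 := by
  obtain ⟨P, hrad, hfix⟩ := exists_radial_homotopy
    (h := fun t n => n - t / 2 * max 0 (n - 1 / 2)) (by fun_prop)
    fun t => by
      have ht := t.2
      refine ⟨fun m n hmn => ?_, by norm_num, fun n hn => ?_⟩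
      · cases max_cases 0 (m - 1 / 2) <;> cases max_cases 0 (n - 1 / 2) <;> nlinarith [ht.1, ht.2]
      · constructor <;> cases max_cases 0 (n - 1 / 2) <;> nlinarith [ht.1, ht.2, hn.1, hn.2]
  refine ⟨P, fun x => hfix _ _ (by simp), fun t x hx => hfix _ _ ?_, fun x => ?_⟩
  · rw [mem_C2_iff.1 hx, max_eq_left (by norm_num), mul_zero, sub_zero]
  · have hx := radius_mem_Icc x
    rw [mem_C1_iff, hrad, Icc.coe_one]
    cases max_cases 0 (radius x - 1 / 2) <;> linarith [hx.1, hx.2]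

lemma exists_homotopy_avoiding_C2 : ∃ P : C(I × X, X), (∀ x, P (0, x) = x) ∧
    (∀ t, ∀ x ∈ C1, P (t, x) = x) ∧ ∀ x, P (1, x) ∉ C2 := by
  obtain ⟨P, hrad, hfix⟩ := exists_radial_homotopy
    (h := fun t n => n + t / 2 * max 0 (1 / 2 - n)) (by fun_prop)
    fun t => by
      have ht := t.2
      refine ⟨fun m n hmn => ?_, by norm_num, fun n hn => ?_⟩
      · cases max_cases 0 (1 / 2 - m) <;> cases max_cases 0 (1 / 2 - n) <;> nlinarith [ht.1, ht.2]
      · constructor <;> cases max_cases 0 (1 / 2 - n) <;> nlinarith [ht.1, ht.2, hn.1, hn.2]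
  refine ⟨P, fun x => hfix _ _ (by simp), fun t x hx => hfix _ _ ?_, fun x => ?_⟩
  · rw [mem_C1_iff.1 hx, max_eq_left (by norm_num), mul_zero, add_zero]
  · have hx := radius_mem_Icc x
    rw [mem_C2_iff, hrad, Icc.coe_one]
    cases max_cases 0 (1 / 2 - radius x) <;> linarith [hx.1, hx.2]

end Radial

/-! ### The retraction onto a bouquet of two circles and its lift -/

section Bouquet

open unitInterval Filter Topology FreeGroup

lemma mem_holedSq_iff_abs_snd {p : ℝ × ℝ} : p ∈ holedSq ↔ p.1 ∈ Icc (0 : ℝ) 1 ∧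
    p.2 ∈ Icc (-1 : ℝ) 1 ∧ (|p.1 - 1 / 2| < 1 / 4 → 1 / 4 ≤ |p.2|) := by
  rw [mem_holedSq, centreDist, le_max_iff, or_iff_not_imp_left, not_le]

/-- The vertical profile of the two loops of the bouquet: it vanishes at `0` and `1` and equals `1`
next to the hole. -/
noncomputable def profile (s : ℝ) : ℝ := max 0 (min 1 (min (4 * s) (4 * (1 - s))))

@[fun_prop]
lemma continuous_profile : Continuous profile := by
  unfold profile
  fun_prop

lemma profile_mem_Icc (s : ℝ) : profile s ∈ Icc (0 : ℝ) 1 :=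
  ⟨le_max_left _ _, max_le zero_le_one (min_le_left _ _)⟩

lemma profile_zero : profile 0 = 0 := by norm_num [profile]

lemma profile_one : profile 1 = 0 := by norm_num [profile]

lemma profile_eq_one {s : ℝ} (hs : |s - 1 / 2| ≤ 1 / 4) : profile s = 1 := by
  obtain ⟨h₀, h₁⟩ := abs_le.1 hs
  rw [profile, min_eq_left (le_min (by linarith) (by linarith)), max_eq_right zero_le_one]

lemma toX_one_zero : toX (1, 0) = toX (0, 0) := by
  simpa using (seamInvariant_toX 0 (by simp)).symm

lemma arc_mem_holedSq (b : Bool) (s : I) :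
    ((s : ℝ), (if b then 1 else -1) * profile s) ∈ holedSq := by
  have hm := profile_mem_Icc s
  refine mem_holedSq_iff_abs_snd.2 ⟨s.2, ?_, fun hs => ?_⟩
  · constructor <;> split_ifs <;> linarith [hm.1, hm.2]
  · dsimp only at hs ⊢
    rw [profile_eq_one hs.le]
    split_ifs <;> norm_num [abs_of_pos]

/-- The loops passing above and below the hole. -/
noncomputable def arc (b : Bool) : Path (toX (0, 0)) (toX (0, 0)) where
  toFun s := toX (s, (if b then 1 else -1) * profile s)
  continuous_toFun := continuousOn_toX.comp_continuous
    (continuous_subtype_val.prodMk (continuous_const.mul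
      (continuous_profile.comp continuous_subtype_val))) (arc_mem_holedSq b)
  source' := by simp [profile_zero]
  target' := by simp [profile_one, toX_one_zero]

lemma arc_apply (b : Bool) (s : I) : arc b s = toX (s, (if b then 1 else -1) * profile s) := rfl

/-- The coordinates of the deformation of `X` onto the bouquet of the loops `arc`. -/
noncomputable def squeeze (t : ℝ) (p : ℝ × ℝ) : ℝ × ℝ :=
  let x := (1 - t) * p.1 + t * projIcc (0 : ℝ) 1 zero_le_one (2 * p.1 - 1 / 2)
  (x, (1 - t + t * profile x) * ((1 - t) * p.2 + t * max (-1) (min 1 (4 * p.2))))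

lemma squeeze_snd (t : ℝ) (p : ℝ × ℝ) : (squeeze t p).2 = (1 - t + t * profile (squeeze t p).1) *
    ((1 - t) * p.2 + t * max (-1) (min 1 (4 * p.2))) := rfl

lemma squeeze_zero (p : ℝ × ℝ) : squeeze 0 p = p := by simp [squeeze]

lemma squeeze_one (p : ℝ × ℝ) :
    squeeze 1 p = ((projIcc (0 : ℝ) 1 zero_le_one (2 * p.1 - 1 / 2) : ℝ),
      profile (projIcc (0 : ℝ) 1 zero_le_one (2 * p.1 - 1 / 2)) * max (-1) (min 1 (4 * p.2))) := by
  simp [squeeze]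

lemma continuous_squeeze : Continuous fun p : ℝ × ℝ × ℝ => squeeze p.1 p.2 := by
  unfold squeeze
  fun_prop

lemma abs_squeeze_fst_sub_lt {t : ℝ} (ht : t ∈ I) {p : ℝ × ℝ}
    (h : |(squeeze t p).1 - 1 / 2| < 1 / 4) : |p.1 - 1 / 2| < 1 / 4 := by
  obtain ⟨ht₀, ht₁⟩ := ht
  obtain ⟨h₀, h₁⟩ := abs_lt.1 h
  refine abs_lt.2 ⟨?_, ?_⟩ <;> by_contra! hx <;>
    simp only [squeeze, coe_projIcc] at h₀ h₁
  · rw [max_eq_left (min_le_of_right_le (by linarith))] at h₀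
    nlinarith
  · rw [min_eq_left (by linarith), max_eq_right zero_le_one] at h₁
    nlinarith

lemma squeeze_mem_holedSq {t : ℝ} (ht : t ∈ I) {p : ℝ × ℝ} (hp : p ∈ holedSq) :
    squeeze t p ∈ holedSq := by
  obtain ⟨ht₀, ht₁⟩ := ht
  obtain ⟨hx, ⟨hy₀, hy₁⟩, hxy⟩ := mem_holedSq_iff_abs_snd.1 hp
  have hm := profile_mem_Icc (squeeze t p).1
  have hfactor : 1 - t + t * profile (squeeze t p).1 ∈ Icc (0 : ℝ) 1 :=
    ⟨by nlinarith [hm.1], by nlinarith [hm.2]⟩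
  refine mem_holedSq_iff_abs_snd.2 ⟨?_, ?_, fun h => ?_⟩
  · exact (convex_Icc (0 : ℝ) 1) hx (projIcc (0 : ℝ) 1 zero_le_one _).2 (by linarith) ht₀ (by ring)
  · have h := (convex_Icc (-1 : ℝ) 1) ⟨hy₀, hy₁⟩ (y := max (-1) (min 1 (4 * p.2)))
      ⟨le_max_left _ _, max_le (by norm_num) (min_le_left _ _)⟩ (sub_nonneg.2 ht₁) ht₀ (by ring)
    refine abs_le.1 ?_
    rw [squeeze_snd, abs_mul, abs_of_nonneg hfactor.1]
    exact mul_le_one₀ hfactor.2 (abs_nonneg _) (abs_le.2 h)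
  · rw [squeeze_snd, profile_eq_one h.le, mul_one, sub_add_cancel, one_mul]
    have hy := hxy (abs_squeeze_fst_sub_lt ⟨ht₀, ht₁⟩ h)
    rw [le_abs] at hy ⊢
    refine hy.imp (fun hy => ?_) fun hy => ?_
    · rw [min_eq_left (by linarith), max_eq_right (by norm_num)]
      nlinarith
    · rw [min_eq_right (by linarith), max_eq_left (by linarith)]
      nlinarith

lemma squeeze_zero_fst (t y : ℝ) : squeeze t (0, y) =
    (0, (1 - t) * ((1 - t) * y + t * max (-1) (min 1 (4 * y)))) := by
  have hx : (squeeze t (0, y)).1 = 0 := by norm_num [squeeze, coe_projIcc]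
  refine Prod.ext hx ?_
  rw [squeeze_snd, hx, profile_zero, mul_zero, add_zero]

lemma squeeze_one_fst (t y : ℝ) : squeeze t (1, -y) =
    (1, -((1 - t) * ((1 - t) * y + t * max (-1) (min 1 (4 * y))))) := by
  have hx : (squeeze t (1, -y)).1 = 1 := by norm_num [squeeze, coe_projIcc]
  have hodd : max (-1) (min 1 (4 * -y)) = -max (-1) (min 1 (4 * y)) := by grind
  refine Prod.ext hx ?_
  rw [squeeze_snd, hx, profile_one, hodd]
  ring

/-- The deformation of `X` onto the bouquet of the loops `arc`. -/
noncomputable def squeezeX : C(I × X, X) where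
  toFun p := toX (squeeze p.1 (coords p.2))
  continuous_toFun := continuous_toX_coords (φ := fun t : I => squeeze t)
    (fun t _ hp => squeeze_mem_holedSq t.2 hp)
    (fun t y hy => by
      have hmem := squeeze_mem_holedSq t.2 (mem_holedSq_of_fst_eq_zero hy)
      simp only [Function.comp_apply, squeeze_zero_fst, squeeze_one_fst] at hmem ⊢
      exact seamInvariant_toX _ (mem_holedSq.1 hmem).2.1)
    (continuous_squeeze.comp (by fun_prop : Continuous fun p : I × ℝ × ℝ =>
      ((p.1 : ℝ), p.2))).continuousOn

lemma squeezeX_zero (x : X) : squeezeX (0, x) = x := by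
  simp [squeezeX, squeeze_zero, toX_coords]

lemma continuousAt_coords {x : X} (hx : |(coords x).1 - 1 / 2| < 1 / 2) :
    ContinuousAt coords x := by
  have hweight : Continuous fun x : X => 1 / 2 - |(coords x).1 - 1 / 2| :=
    continuous_coords (φ := fun p => 1 / 2 - |p.1 - 1 / 2|) (fun y _ => by norm_num) (by fun_prop)
  have hfst : Continuous fun x : X => (1 / 2 - |(coords x).1 - 1 / 2|) * (coords x).1 :=
    continuous_coords (φ := fun p => (1 / 2 - |p.1 - 1 / 2|) * p.1) (fun y _ => by norm_num)
      (by fun_prop)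
  have hsnd : Continuous fun x : X => (1 / 2 - |(coords x).1 - 1 / 2|) * (coords x).2 :=
    continuous_coords (φ := fun p => (1 / 2 - |p.1 - 1 / 2|) * p.2) (fun y _ => by norm_num)
      (by fun_prop)
  have hne : 1 / 2 - |(coords x).1 - 1 / 2| ≠ 0 := (sub_pos.2 hx).ne'
  have hdiv := (hfst.continuousAt.div hweight.continuousAt hne).prodMk
    (hsnd.continuousAt.div hweight.continuousAt hne)
  refine hdiv.congr ?_
  filter_upwards [hweight.continuousAt.eventually_ne hne] with x' hx'
  exact Prod.ext (mul_div_cancel_left₀ _ hx') (mul_div_cancel_left₀ _ hx')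

/-- The horizontal distance of a point of `X` to the line through the centre of the hole that cuts
the two loops `arc`. -/
noncomputable def wallDist (x : X) : ℝ := |(coords x).1 - 1 / 2|

lemma continuous_wallDist : Continuous wallDist :=
  continuous_coords (φ := fun p => |p.1 - 1 / 2|) (fun y _ => by norm_num) (by fun_prop)

lemma snd_coords_ne_zero {x : X} (hx : wallDist x < 1 / 4) : (coords x).2 ≠ 0 := by
  have h := (mem_holedSq_iff_abs_snd.1 (coords_mem x)).2.2 hx
  exact abs_pos.1 (by linarith)

/-- The loop next to which a point of `X` lies. -/
noncomputable def side (x : X) : Bool := decide (0 < (coords x).2)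

/-- The trivialisations, off the two walls above and below the hole and near these walls, of the
universal covering of `X`, with values in the free fundamental group of the bouquet. -/
noncomputable def wallFrame : Bool → X → FreeGroup Bool
  | false, _ => 1
  | true, x => if 1 / 2 < (coords x).1 then of (side x) else 1

/-- The domains of `wallFrame`. -/
def wallCover : Bool → Set X
  | false => {x | wallDist x ≠ 0}
  | true => {x | wallDist x < 1 / 4}

lemma eventually_pos_iff {A : Type*} [TopologicalSpace A] {f : A → ℝ} {a : A}
    (hf : ContinuousAt f a) (ha : f a ≠ 0) : ∀ᶠ a' in 𝓝 a, (0 < f a' ↔ 0 < f a) := by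
  rcases ha.lt_or_gt with h | h
  · filter_upwards [hf.eventually (gt_mem_nhds h)] with a' ha'
    exact iff_of_false ha'.not_gt h.not_gt
  · filter_upwards [hf.eventually (lt_mem_nhds h)] with a' ha'
    exact iff_of_true ha' h

lemma eventually_side_eq {x : X} (hx : wallDist x < 1 / 4) : ∀ᶠ x' in 𝓝 x, side x' = side x := by
  have hcont : ContinuousAt coords x := continuousAt_coords (hx.trans (by norm_num))
  filter_upwards [eventually_pos_iff (continuous_snd.continuousAt.comp hcont)
    (snd_coords_ne_zero hx)] with x' h
  exact decide_eq_decide.2 h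

lemma eventually_wallFrame_eq {x : X} (h₀ : wallDist x ≠ 0) (h₁ : wallDist x < 1 / 4) :
    ∀ᶠ x' in 𝓝 x, wallFrame true x' = wallFrame true x := by
  have hcont : ContinuousAt coords x := continuousAt_coords (h₁.trans (by norm_num))
  have hfst : ContinuousAt (fun x' => (coords x').1 - 1 / 2) x :=
    (continuous_fst.continuousAt.comp hcont).sub continuousAt_const
  filter_upwards [eventually_side_eq h₁, eventually_pos_iff hfst (abs_ne_zero.1 h₀)] with x' hs hx
  simp only [sub_pos] at hx
  simp only [wallFrame, hs, hx]

lemma isFlatCocycle_wallFrame : IsFlatCocycle wallCover wallFrame where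
  isOpen
    | false => isOpen_ne_fun continuous_wallDist continuous_const
    | true => isOpen_lt continuous_wallDist continuous_const
  exists_mem x := by
    by_cases h : wallDist x = 0
    · exact ⟨true, h.trans_lt (by norm_num)⟩
    · exact ⟨false, h⟩
  ratio_eventually_eq
    | false, false, _, _ => by simp [wallFrame]
    | true, true, _, _ => by simp
    | false, true, x, hx => by
      filter_upwards [eventually_wallFrame_eq hx.1 hx.2] with x' h
      rw [h]; rfl
    | true, false, x, hx => by
      filter_upwards [eventually_wallFrame_eq hx.2 hx.1] with x' h
      rw [h]; rfl

/-- The point of the tree over `squeezeX (1, x)` in the sheet `g`. -/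
noncomputable def treeLift (x : X) (g : FreeGroup Bool) : WordTree (Bool × Bool) :=
  WordTree.edge ((wallFrame true x)⁻¹ * g) (side x)
    (projIcc 0 1 zero_le_one (2 * (coords x).1 - 1 / 2))

lemma arc_projIcc_coords (x : X) :
    arc (side x) (projIcc 0 1 zero_le_one (2 * (coords x).1 - 1 / 2)) = squeezeX (1, x) := by
  change _ = toX (squeeze 1 (coords x))
  rw [arc_apply, squeeze_one, mul_comm (profile _)]
  congr 2
  by_cases hx : wallDist x < 1 / 4
  · have hy := (mem_holedSq_iff_abs_snd.1 (coords_mem x)).2.2 hx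
    rcases le_abs.1 hy with hy | hy
    · rw [side, decide_eq_true (by linarith), min_eq_left (by linarith),
        max_eq_right (by norm_num)]
      rfl
    · rw [side, decide_eq_false (by linarith), min_eq_right (by linarith),
        max_eq_left (by linarith)]
      rfl
  · rcases le_abs.1 (not_lt.1 hx) with h | h
    · rw [projIcc_of_right_le _ (by linarith), profile_one, mul_zero, mul_zero]
    · rw [projIcc_of_le_left _ (by linarith), profile_zero, mul_zero, mul_zero]

lemma cayleyMap_treeLift (x : X) (g : FreeGroup Bool) :
    WordTree.cayleyMap arc (treeLift x g) = squeezeX (1, x) := by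
  rw [treeLift, WordTree.cayleyMap_edge, arc_projIcc_coords]

lemma treeLift_eq_ite (x : X) (g : FreeGroup Bool) : treeLift x g =
    if 1 / 2 < (coords x).1
    then WordTree.edge ((of (side x))⁻¹ * g) (side x)
      (projIcc 0 1 zero_le_one (1 / 2 + 2 * wallDist x))
    else WordTree.edge g (side x) (projIcc 0 1 zero_le_one (1 / 2 - 2 * wallDist x)) := by
  rw [treeLift, wallFrame, wallDist]
  split_ifs with h
  · rw [abs_of_pos (sub_pos.2 h)]
    ring_nf
  · rw [abs_of_nonpos (by linarith), inv_one, one_mul]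
    ring_nf

variable {A : Type*} [TopologicalSpace A] {φ : A → X} {a : A}

lemma continuousAt_treeLift_of_far (hφ : Continuous φ) (ha : 1 / 4 ≤ wallDist (φ a))
    (g : FreeGroup Bool) : ContinuousAt (fun a' => treeLift (φ a') g) a := by
  have hdist : Continuous fun a' => wallDist (φ a') := continuous_wallDist.comp hφ
  have hvertex : treeLift (φ a) g = WordTree.vertex g := by
    rw [treeLift_eq_ite, projIcc_of_right_le _ (by linarith), projIcc_of_le_left _ (by linarith)]
    exact (if_congr Iff.rfl ((WordTree.edge_one _ _).trans (by rw [mul_inv_cancel_left]))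
      (WordTree.edge_zero _ _)).trans (ite_self _)
  have hright (b : Bool) : Tendsto (fun a' => WordTree.edge ((of b)⁻¹ * g) b
      (projIcc 0 1 zero_le_one (1 / 2 + 2 * wallDist (φ a')))) (𝓝 a) (𝓝 (WordTree.vertex g)) := by
    refine Continuous.tendsto' (by fun_prop) _ _ ?_
    rw [projIcc_of_right_le _ (by linarith)]
    exact (WordTree.edge_one _ _).trans (by rw [mul_inv_cancel_left])
  have hleft (b : Bool) : Tendsto (fun a' => WordTree.edge g b
      (projIcc 0 1 zero_le_one (1 / 2 - 2 * wallDist (φ a')))) (𝓝 a) (𝓝 (WordTree.vertex g)) := by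
    refine Continuous.tendsto' (by fun_prop) _ _ ?_
    rw [projIcc_of_le_left _ (by linarith)]
    exact WordTree.edge_zero _ _
  rw [ContinuousAt, hvertex]
  simp only [treeLift_eq_ite]
  refine Tendsto.if' (fun s hs => mem_map.2 ?_) fun s hs => mem_map.2 ?_
  · filter_upwards [eventually_all.2 fun b => (hright b).eventually_mem hs] with a' h using h _
  · filter_upwards [eventually_all.2 fun b => (hleft b).eventually_mem hs] with a' h using h _

lemma continuous_treeLift {g : A → FreeGroup Bool} (hφ : Continuous φ)
    (hg : IsFlatAlong wallCover wallFrame φ g) : Continuous fun a => treeLift (φ a) (g a) := by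
  refine continuous_iff_continuousAt.2 fun a => ?_
  rcases lt_or_ge (wallDist (φ a)) (1 / 4) with ha | ha
  · have hcoords : ContinuousAt (fun a' => coords (φ a')) a :=
      (continuousAt_coords (ha.trans (by norm_num))).comp hφ.continuousAt
    have hedge : ContinuousAt (fun a' => WordTree.edge ((wallFrame true (φ a))⁻¹ * g a) (side (φ a))
        (projIcc 0 1 zero_le_one (2 * (coords (φ a')).1 - 1 / 2))) a := by
      fun_prop
    refine hedge.congr ?_
    filter_upwards [hg true a ha, hφ.continuousAt.eventually (eventually_side_eq ha)] with a' h hs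
    simp only [treeLift, h, hs]
  · have hne : wallDist (φ a) ≠ 0 := by linarith
    refine (continuousAt_treeLift_of_far hφ ha (g a)).congr ?_
    filter_upwards [hg false a hne] with a' h
    simp only [wallFrame, inv_one, one_mul] at h
    rw [h]

end Bouquet

/-! ### Maps that are constant on each boundary circle -/

section Contraction

open unitInterval Topology

lemma IsFlatAlong.apply_eq_of_isPreconnected {ι A B G : Type*} [TopologicalSpace A] [Group G]
    {W : ι → Set B} {e : ι → B → G} {φ : A → B} {g : A → G} (hW : ∀ b, ∃ i, b ∈ W i)
    (hg : IsFlatAlong W e φ g) {s : Set A} (hs : IsPreconnected s) {b : B}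
    (hφ : ∀ a ∈ s, φ a = b) {a a' : A} (ha : a ∈ s) (ha' : a' ∈ s) : g a = g a' := by
  have : PreconnectedSpace s := Subtype.preconnectedSpace hs
  have hgs := hg.comp ⟨((↑) : s → A), continuous_subtype_val⟩
  have hone : IsFlatAlong W e (φ ∘ ((↑) : s → A)) fun _ => (1 : G) := fun i x _ =>
    .of_forall fun x' => by simp only [Function.comp_apply, hφ _ x.2, hφ _ x'.2]
  simpa using
    (hone.isLocallyConstant_inv_mul hW hgs).apply_eq_of_preconnectedSpace ⟨a, ha⟩ ⟨a', ha'⟩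

-- The multiplier of `g` along the seam is constant, and going twice around the Möbius band along
-- the boundary shows that its square is `1`.
lemma IsFlatAlong.seamInvariant {ι B G : Type*} [Group G] [IsMulTorsionFree G]
    {W : ι → Set B} {e : ι → B → G} {φ : ℝ × ℝ → B} {g : ℝ × ℝ → G} (hW : ∀ b, ∃ i, b ∈ W i)
    (hg : IsFlatAlong W e φ g) (hφ : SeamInvariant φ) (htop : g (0, 1) = g (1, 1))
    (hbot : g (0, -1) = g (1, -1)) : SeamInvariant g := by
  have hleft := hg.comp (A' := Icc (-1 : ℝ) 1) ⟨fun y => (0, y), by fun_prop⟩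
  have hright := hg.comp (A' := Icc (-1 : ℝ) 1) ⟨fun y => (1, -y), by fun_prop⟩
  have heq : φ ∘ (fun y : Icc (-1 : ℝ) 1 => ((1 : ℝ), -(y : ℝ))) =
      φ ∘ fun y : Icc (-1 : ℝ) 1 => ((0 : ℝ), (y : ℝ)) :=
    funext fun y => (hφ y y.2).symm
  have : PreconnectedSpace (Icc (-1 : ℝ) 1) := Subtype.preconnectedSpace isPreconnected_Icc
  have hconst := (hleft.isLocallyConstant_inv_mul hW
    (heq ▸ hright : IsFlatAlong W e _ _)).apply_eq_of_preconnectedSpace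
  have hone (y : ℝ) (hy : y ∈ Icc (-1 : ℝ) 1) : (g (0, y))⁻¹ * g (1, -y) =
      (g (0, 1))⁻¹ * g (1, -1) := hconst ⟨y, hy⟩ ⟨1, by norm_num⟩
  have hsq : ((g (0, 1))⁻¹ * g (1, -1)) ^ 2 = 1 := by
    rw [pow_two]
    nth_rw 2 [← hone (-1) (by norm_num)]
    rw [hbot, htop, neg_neg]
    group
  intro y hy
  rw [← inv_mul_eq_one, hone y hy]
  exact (pow_eq_one_iff_left two_ne_zero).1 hsq

lemma exists_extension_filling_hole (F : C(X, X)) {b : X} (hF : ∀ x ∈ C2, F x = b) :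
    ∃ φ : C(ℝ × ℝ, X), (∀ p ∈ holedSq, φ p = F (toX p)) ∧ ∀ p, centreDist p ≤ 1 / 4 → φ p = b := by
  let clamp (p : ℝ × ℝ) : ℝ × ℝ :=
    (projIcc 0 1 zero_le_one p.1, projIcc (-1) 1 (by norm_num) p.2)
  have hclamp : Continuous clamp := by fun_prop
  have hmem (p) (hp : 1 / 4 ≤ centreDist (clamp p)) : clamp p ∈ holedSq :=
    mem_holedSq.2 ⟨Subtype.prop _, Subtype.prop _, hp⟩
  have clamp_eq (p : ℝ × ℝ) (h₁ : p.1 ∈ Icc (0 : ℝ) 1) (h₂ : p.2 ∈ Icc (-1 : ℝ) 1) :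
      clamp p = p := by
    simp only [clamp, projIcc_of_mem _ h₁, projIcc_of_mem _ h₂]
  have hb (p) (hp : p ∈ holedSq) (h : centreDist p = 1 / 4) : F (toX p) = b :=
    hF _ (mem_C2_iff.2 ((radius_toX hp).trans h))
  refine ⟨⟨fun p => if 1 / 4 ≤ centreDist (clamp p) then F (toX (clamp p)) else b,
    continuous_if_le continuous_const (continuous_centreDist.comp hclamp)
      (F.continuous.comp_continuousOn (continuousOn_toX.comp hclamp.continuousOn hmem))
      continuousOn_const fun p hp => hb _ (hmem p hp.le) hp.symm⟩, fun p hp => ?_, fun p hp => ?_⟩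
  · obtain ⟨h₁, h₂, hr⟩ := mem_holedSq.1 hp
    rw [ContinuousMap.coe_mk, clamp_eq p h₁ h₂, if_pos hr]
  · have h₁ := abs_le.1 ((le_max_left _ _).trans hp)
    have h₂ := abs_le.1 ((le_max_right _ _).trans hp)
    rw [ContinuousMap.coe_mk, clamp_eq p ⟨by linarith, by linarith⟩ ⟨by linarith, by linarith⟩]
    split_ifs with h
    · exact hb p (mem_holedSq.2 ⟨⟨by linarith, by linarith⟩, ⟨by linarith, by linarith⟩, h⟩)
        (hp.antisymm h)
    · rfl

lemma isPreconnected_centreDist_le (r : ℝ) : IsPreconnected {p | centreDist p ≤ r} := by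
  have h : {p | centreDist p ≤ r} = Metric.closedBall (1 / 2, 0) r := by
    ext p
    rw [Metric.mem_closedBall, dist_centre, mem_ofPred_eq]
  exact h ▸ (convex_closedBall _ _).isPreconnected

lemma coords_mem_of_mem_C1 {x : X} (hx : x ∈ C1) :
    coords x ∈ Icc (0 : ℝ) 1 ×ˢ {1} ∨ coords x ∈ Icc (0 : ℝ) 1 ×ˢ {-1} := by
  have hmem := (mem_holedSq.1 (coords_mem x)).1
  have h : |(coords x).1 - 1 / 2| < 1 := abs_lt.2 ⟨by linarith [hmem.1], by linarith [hmem.2]⟩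
  have hy : |(coords x).2| = 1 :=
    ((max_eq_iff.1 (mem_C1_iff.1 hx)).resolve_left fun h' => h.ne h'.1).1
  exact (eq_or_eq_neg_of_abs_eq hy).imp (⟨hmem, ·⟩) (⟨hmem, ·⟩)

lemma toX_mem_C1 {c : ℝ} (hc : |c| = 1) {p : ℝ × ℝ} (hp : p ∈ Icc (0 : ℝ) 1 ×ˢ {c}) :
    p ∈ holedSq ∧ toX p ∈ C1 := by
  obtain ⟨hs, rfl⟩ := hp
  have hle : 1 ≤ centreDist p := hc.symm.trans_le (le_max_right _ _)
  have hmem : p ∈ holedSq := mem_holedSq.2 ⟨hs, abs_le.1 hc.le, by linarith⟩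
  exact ⟨hmem, mem_C1_iff.2 ((radius_mem_Icc _).2.antisymm (hle.trans_eq (radius_toX hmem).symm))⟩

lemma exists_seamInvariant_treeLift (F : C(X, X)) {b₁ b₂ : X} (h₁ : ∀ x ∈ C1, F x = b₁)
    (h₂ : ∀ x ∈ C2, F x = b₂) : ∃ T : ℝ × ℝ → WordTree (Bool × Bool), Continuous T ∧
      SeamInvariant T ∧ (∀ p ∈ holedSq, WordTree.cayleyMap arc (T p) = squeezeX (1, F (toX p))) ∧
      (∀ c, |c| = 1 → ∀ p ∈ Icc (0 : ℝ) 1 ×ˢ {c}, ∀ q ∈ Icc (0 : ℝ) 1 ×ˢ {c}, T p = T q) ∧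
      ∀ p q, centreDist p ≤ 1 / 4 → centreDist q ≤ 1 / 4 → T p = T q := by
  obtain ⟨φ, hφ, hdisc⟩ := exists_extension_filling_hole F h₂
  obtain ⟨g, hg⟩ := isFlatCocycle_wallFrame.exists_isFlatAlong φ
  have hW := isFlatCocycle_wallFrame.exists_mem
  have hedge (c : ℝ) (hc : |c| = 1) (p) (hp : p ∈ Icc (0 : ℝ) 1 ×ˢ {c}) : φ p = b₁ := by
    obtain ⟨hmem, hC1⟩ := toX_mem_C1 hc hp
    rw [hφ p hmem, h₁ _ hC1]
  have hgedge (c : ℝ) (hc : |c| = 1) (p) (hp : p ∈ Icc (0 : ℝ) 1 ×ˢ {c}) (q)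
      (hq : q ∈ Icc (0 : ℝ) 1 ×ˢ {c}) : g p = g q :=
    hg.apply_eq_of_isPreconnected hW (isPreconnected_Icc.prod isPreconnected_singleton)
      (hedge c hc) hp hq
  have hφseam : SeamInvariant φ := fun y hy => by
    rw [hφ _ (mem_holedSq_of_fst_eq_zero hy), hφ _ (mem_holedSq_of_fst_eq_one
      ⟨by linarith [hy.2], by linarith [hy.1]⟩), seamInvariant_toX y hy]
  have hgseam : SeamInvariant g := hg.seamInvariant hW hφseam
    (hgedge 1 (by norm_num) _ (by simp) _ (by simp))
    (hgedge (-1) (by norm_num) _ (by simp) _ (by simp))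
  refine ⟨fun p => treeLift (φ p) (g p), continuous_treeLift φ.continuous hg,
    fun y hy => congrArg₂ treeLift (hφseam y hy) (hgseam y hy),
    fun p hp => (cayleyMap_treeLift _ _).trans (by rw [hφ p hp]),
    fun c hc p hp q hq => congrArg₂ treeLift ((hedge c hc p hp).trans (hedge c hc q hq).symm)
      (hgedge c hc p hp q hq),
    fun p q hp hq => congrArg₂ treeLift ((hdisc p hp).trans (hdisc q hq).symm)
      (hg.apply_eq_of_isPreconnected hW (isPreconnected_centreDist_le _) hdisc hp hq)⟩

theorem exists_cayleyMap_comp_eq_squeezeX (F : C(X, X)) {b₁ b₂ : X} (h₁ : ∀ x ∈ C1, F x = b₁)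
    (h₂ : ∀ x ∈ C2, F x = b₂) : ∃ T : C(X, WordTree (Bool × Bool)),
      (∀ x, WordTree.cayleyMap arc (T x) = squeezeX (1, F x)) ∧
      (∀ x ∈ C1, ∀ x' ∈ C1, T x = T x') ∧ ∀ x ∈ C2, ∀ x' ∈ C2, T x = T x' := by
  obtain ⟨T, hcont, hseam, hT, hedge, hdisc⟩ := exists_seamInvariant_treeLift F h₁ h₂
  have hC1 (x : X) (hx : x ∈ C1) : T (coords x) = T (0, 1) := by
    rcases coords_mem_of_mem_C1 hx with h | h
    · exact hedge 1 (by norm_num) _ h _ (by simp)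
    · exact (hedge (-1) (by norm_num) _ h _ (by simp)).trans (hseam 1 (by norm_num)).symm
  refine ⟨⟨fun x => T (coords x), continuous_coords hseam hcont.continuousOn⟩, fun x => ?_,
    fun x hx x' hx' => (hC1 x hx).trans (hC1 x' hx').symm,
    fun x hx x' hx' => hdisc _ _ (mem_C2_iff.1 hx).le (mem_C2_iff.1 hx').le⟩
  rw [ContinuousMap.coe_mk, hT _ (coords_mem x), toX_coords]

instance : CompactSpace X := by
  have : CompactSpace Sq := isCompact_iff_compactSpace.1 (isCompact_Icc.prod isCompact_Icc)
  have : CompactSpace M := isQuotientMap_qm.surjective.compactSpace isQuotientMap_qm.continuous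
  exact isCompact_iff_compactSpace.1 isClosed_Xset.isCompact

theorem exists_nullhomotopy_of_constant_on_circles (F : C(X, X)) {b₁ b₂ : X}
    (h₁ : ∀ x ∈ C1, F x = b₁) (h₂ : ∀ x ∈ C2, F x = b₂) :
    ∃ K : F.Homotopy (.const X (toX (0, 0))), ∀ t, (∀ x ∈ C1, ∀ x' ∈ C1, K (t, x) = K (t, x')) ∧
      ∀ x ∈ C2, ∀ x' ∈ C2, K (t, x) = K (t, x') := by
  obtain ⟨T, hT, hT₁, hT₂⟩ := exists_cayleyMap_comp_eq_squeezeX F h₁ h₂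
  obtain ⟨L, hL₀, hL₁, hL⟩ := WordTree.exists_homotopy_bouquetMap_comp
    (fun b : Bool × Bool => if b.2 then arc b.1 else (arc b.1).symm) T
  let S : F.Homotopy ⟨fun x => squeezeX (1, F x), by fun_prop⟩ :=
    { toFun p := squeezeX (p.1, F p.2)
      continuous_toFun := by fun_prop
      map_zero_left _ := squeezeX_zero _
      map_one_left _ := rfl }
  let N : ContinuousMap.Homotopy ⟨fun x => squeezeX (1, F x), by fun_prop⟩
      (.const X (toX (0, 0))) :=
    { toContinuousMap := L
      map_zero_left x := (hL₀ x).trans (hT x)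
      map_one_left := hL₁ }
  have hfibre (t : I) {x x' : X} (hF : F x = F x') (hT : T x = T x') :
      S.trans N (t, x) = S.trans N (t, x') := by
    rw [ContinuousMap.Homotopy.trans_apply, ContinuousMap.Homotopy.trans_apply]
    split_ifs
    · exact congrArg (fun z => squeezeX (_, z)) hF
    · exact hL _ _ _ hT
  exact ⟨S.trans N, fun t =>
    ⟨fun x hx x' hx' => hfibre t ((h₁ x hx).trans (h₁ x' hx').symm) (hT₁ x hx x' hx'),
      fun x hx x' hx' => hfibre t ((h₂ x hx).trans (h₂ x' hx').symm) (hT₂ x hx x' hx')⟩⟩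

end Contraction

/-! ### Boundary homotopies -/

section BoundaryHomotopy

open unitInterval

variable {f g k : C(X, X)}

lemma mem_Bd_iff {x : X} : x ∈ Bd ↔ radius x = 1 ∨ radius x = 1 / 4 :=
  or_congr mem_C1_iff mem_C2_iff

lemma exists_radius_eq {r : ℝ} (hr : r ∈ Icc (1 / 4 : ℝ) 1) : ∃ x, radius x = r := by
  have hdist : centreDist (1 / 2, r) = r := by
    simp [centreDist, abs_of_pos (by linarith [hr.1] : 0 < r), (by linarith [hr.1] : 0 ≤ r)]
  refine ⟨toX (1 / 2, r), (radius_toX (mem_holedSq.2 ⟨?_, ?_, hdist.symm ▸ hr.1⟩)).trans hdist⟩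
  · norm_num
  · exact ⟨by linarith [hr.1], hr.2⟩

lemma BoundaryHomotopic.trans (hfg : BoundaryHomotopic f g) (hgk : BoundaryHomotopic g k) :
    BoundaryHomotopic f k := by
  obtain ⟨H, hH⟩ := hfg
  obtain ⟨K, hK⟩ := hgk
  refine ⟨H.trans K, fun x hx t => ?_⟩
  rw [ContinuousMap.Homotopy.trans_apply]
  split_ifs
  · exact hH x hx _
  · exact hK x hx _

lemma BoundaryPreserving.boundaryHomotopic_of_rel (hf : BoundaryPreserving f) (H : C(I × X, X))
    (h₀ : ∀ x, H (0, x) = f x) (hrel : ∀ t, ∀ x ∈ Bd, H (t, x) = f x) :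
    BoundaryHomotopic f (H.comp (.prodMk (.const X 1) (.id X))) :=
  ⟨⟨H, h₀, fun _ => rfl⟩, fun x hx t => (hrel t x hx).symm ▸ hf hx⟩

lemma BoundaryHomotopic.radius_eq {c : ℝ} (hfg : BoundaryHomotopic f g)
    (hf : ∀ x ∈ Bd, radius (f x) = c) : ∀ x ∈ Bd, radius (g x) = c := by
  obtain ⟨H, hH⟩ := hfg
  intro x hx
  have hcont : Continuous fun t => radius (H (t, x)) := continuous_radius.comp (by fun_prop)
  have h := isPreconnected_univ.constant_of_mapsTo (T := {1, 1 / 4})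
    (Set.toFinite _).isDiscrete hcont.continuousOn
    (fun t _ => mem_Bd_iff.1 (hH x hx t)) (mem_univ 0) (mem_univ 1)
  rw [H.apply_zero, H.apply_one] at h
  rw [← h, hf x hx]

lemma Inessential.exists_continuousOn_contraction {s : Set X} {h : MapsTo f s Bd}
    (hf : Inessential (restrictMap f h)) : ∃ (L : I × X → X) (b : X),
      ContinuousOn L (univ ×ˢ s) ∧
      ∀ x ∈ s, L (0, x) = f x ∧ L (1, x) = b ∧ ∀ t, L (t, x) ∈ Bd := by
  classical
  obtain ⟨b, ⟨H⟩⟩ := hf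
  let L (p : I × X) : X := if hp : p.2 ∈ s then H (p.1, ⟨p.2, hp⟩) else p.2
  have hL (t : I) (x : X) (hx : x ∈ s) : L (t, x) = H (t, ⟨x, hx⟩) := dif_pos hx
  refine ⟨L, b, ?_, fun x hx => ⟨?_, ?_, fun t => ?_⟩⟩
  · rw [continuousOn_iff_continuous_domRestrict]
    have hcont : Continuous fun p : ↥((univ : Set I) ×ˢ s) => (H (p.1.1, ⟨p.1.2, p.2.2⟩) : X) := by
      fun_prop
    exact hcont.congr fun p => (hL _ _ p.2.2).symm
  · rw [hL 0 x hx, H.apply_zero]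
    rfl
  · rw [hL 1 x hx, H.apply_one]
    rfl
  · rw [hL t x hx]
    exact Subtype.prop _

/-- A rescaled distance to the boundary of `X`, as a function of the radius. -/
noncomputable def collarDist (r : ℝ) : ℝ := min (4 * (1 - r)) (8 * (r - 1 / 4))

@[fun_prop]
lemma continuous_collarDist : Continuous collarDist := by
  unfold collarDist
  fun_prop

lemma collarDist_radius_nonneg (x : X) : 0 ≤ collarDist (radius x) :=
  le_min (by linarith [(radius_mem_Icc x).2]) (by linarith [(radius_mem_Icc x).1])

lemma collarDist_radius_eq_zero {x : X} (hx : x ∈ Bd) : collarDist (radius x) = 0 := by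
  rcases mem_Bd_iff.1 hx with h | h <;> norm_num [collarDist, h]

lemma radius_of_collarDist_le_one {x : X} (hx : collarDist (radius x) ≤ 1) :
    3 / 4 ≤ radius x ∨ radius x ≤ 3 / 8 :=
  (min_le_iff.1 hx).imp (by intro; linarith) (by intro; linarith)

theorem exists_boundaryHomotopic_extending {L : I × X → X} (hL : ContinuousOn L (univ ×ˢ Bd))
    (h₀ : ∀ x ∈ Bd, L (0, x) = f x) (hBd : ∀ t, ∀ x ∈ Bd, L (t, x) ∈ Bd) :
    ∃ g : C(X, X), BoundaryHomotopic f g ∧ ∀ x ∈ Bd, g x = L (1, x) := by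
  obtain ⟨P, hP₀, hPfix, hP₁, hP₂⟩ := exists_homotopy_collar_subset_boundary
  have hcollar (x : X) (hx : collarDist (radius x) ≤ 1) : P (1, x) ∈ Bd :=
    (radius_of_collarDist_le_one hx).imp (hP₁ x) (hP₂ x)
  have hdist : Continuous fun p : I × X => collarDist (radius p.2) :=
    continuous_collarDist.comp (continuous_radius.comp continuous_snd)
  let G : C(I × X, X) :=
    { toFun p := if collarDist (radius p.2) ≤ 1
        then L (projIcc 0 1 zero_le_one (p.1 - collarDist (radius p.2)), P (1, p.2))
        else f (P (1, p.2))
      continuous_toFun := by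
        refine continuous_if_le hdist continuous_const (hL.comp (Continuous.continuousOn
          (by fun_prop)) fun p hp => ⟨trivial, hcollar _ hp⟩) (by fun_prop) fun p hp => ?_
        rw [hp, projIcc_of_le_left _ (by linarith [p.1.2.2])]
        exact h₀ _ (hcollar _ hp.le) }
  have hG₀ (x : X) : G (0, x) = f (P (1, x)) := by
    refine ite_eq_right_iff.2 fun hx => ?_
    rw [projIcc_of_le_left _ (by simpa using collarDist_radius_nonneg x)]
    exact h₀ _ (hcollar x hx)
  have hG (t : I) (x : X) (hx : x ∈ Bd) : G (t, x) = L (t, x) := by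
    have hzero := collarDist_radius_eq_zero hx
    refine (if_pos (hzero.trans_le zero_le_one)).trans ?_
    rw [hzero, sub_zero, projIcc_val, hPfix 1 x hx]
  have hf : BoundaryPreserving f := fun x hx => h₀ x hx ▸ hBd 0 x hx
  have hcomp := hf.boundaryHomotopic_of_rel (f.comp P) (fun x => congrArg f (hP₀ x))
    fun t x hx => congrArg f (hPfix t x hx)
  exact ⟨⟨fun x => G (1, x), by fun_prop⟩, hcomp.trans
    ⟨⟨G, hG₀, fun _ => rfl⟩, fun x hx t => (hG t x hx).symm ▸ hBd t x hx⟩, hG 1⟩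

theorem exists_boundaryHomotopic_constant_on_circles {hC1 : MapsTo f C1 Bd} {hC2 : MapsTo f C2 Bd}
    (h₁ : Inessential (restrictMap f hC1)) (h₂ : Inessential (restrictMap f hC2)) :
    ∃ (g : C(X, X)) (b₁ b₂ : X), BoundaryHomotopic f g ∧
      (∀ x ∈ C1, g x = b₁) ∧ ∀ x ∈ C2, g x = b₂ := by
  classical
  obtain ⟨L₁, b₁, hcont₁, hL₁⟩ := h₁.exists_continuousOn_contraction
  obtain ⟨L₂, b₂, hcont₂, hL₂⟩ := h₂.exists_continuousOn_contraction
  have hdisj (x : X) (hx : x ∈ C2) : x ∉ C1 := by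
    rw [mem_C1_iff, mem_C2_iff.1 hx]
    norm_num
  have hclosed₁ : IsClosed C1 := (Set.ext fun _ => mem_C1_iff : C1 = {x | radius x = 1}) ▸
    isClosed_eq continuous_radius continuous_const
  have hclosed₂ : IsClosed C2 := (Set.ext fun _ => mem_C2_iff : C2 = {x | radius x = 1 / 4}) ▸
    isClosed_eq continuous_radius continuous_const
  let L (p : I × X) : X := if p.2 ∈ C1 then L₁ p else L₂ p
  have hLC1 (t : I) (x : X) (hx : x ∈ C1) : L (t, x) = L₁ (t, x) := if_pos hx
  have hLC2 (t : I) (x : X) (hx : x ∈ C2) : L (t, x) = L₂ (t, x) := if_neg (hdisj x hx)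
  obtain ⟨g, hfg, hg⟩ := exists_boundaryHomotopic_extending (f := f) (L := L)
    (by
      rw [Bd, prod_union]
      exact (hcont₁.congr fun p hp => hLC1 _ _ hp.2).union_of_isClosed
        (hcont₂.congr fun p hp => hLC2 _ _ hp.2) (isClosed_univ.prod hclosed₁)
        (isClosed_univ.prod hclosed₂))
    (by
      rintro x (hx | hx)
      · exact (hLC1 0 x hx).trans (hL₁ x hx).1
      · exact (hLC2 0 x hx).trans (hL₂ x hx).1)
    (by
      rintro t x (hx | hx)
      · exact (hLC1 t x hx).symm ▸ (hL₁ x hx).2.2 t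
      · exact (hLC2 t x hx).symm ▸ (hL₂ x hx).2.2 t)
  exact ⟨g, b₁, b₂, hfg,
    fun x hx => (hg x (.inl hx)).trans ((hLC1 1 x hx).trans (hL₁ x hx).2.1),
    fun x hx => (hg x (.inr hx)).trans ((hLC2 1 x hx).trans (hL₂ x hx).2.1)⟩

end BoundaryHomotopy

/-! ### Maps that factor through the radius -/

section Radius

open unitInterval

/-- The self-map of `X` that runs along the path `γ` according to the radius. -/
noncomputable def compRadius (γ : C(ℝ, X)) : C(X, X) := γ.comp ⟨radius, continuous_radius⟩

lemma compRadius_apply (γ : C(ℝ, X)) (x : X) : compRadius γ x = γ (radius x) := rfl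

/-- The time at which a homotopy is read off at radius `r`: it is `0` on the boundary of `X` and
increases to `1` across the collars. -/
noncomputable def collarTime (r : ℝ) : I := projIcc 0 1 zero_le_one (collarDist r)

@[fun_prop]
lemma continuous_collarTime : Continuous collarTime := by
  unfold collarTime
  fun_prop

lemma collarTime_eq_one {r : ℝ} (hr : 1 ≤ collarDist r) : collarTime r = 1 :=
  projIcc_of_right_le _ hr

lemma collarTime_radius_eq_zero {x : X} (hx : x ∈ Bd) : collarTime (radius x) = 0 :=
  projIcc_of_le_left _ (collarDist_radius_eq_zero hx).le

lemma exists_path_of_nullhomotopy {F : C(X, X)} {y : X} (K : F.Homotopy (.const X y))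
    (hK : ∀ t, (∀ x ∈ C1, ∀ x' ∈ C1, K (t, x) = K (t, x')) ∧
      ∀ x ∈ C2, ∀ x' ∈ C2, K (t, x) = K (t, x')) :
    ∃ γ : C(ℝ, X), (∀ r, 1 / 2 ≤ r → ∀ x ∈ C1, γ r = K (collarTime r, x)) ∧
      (∀ r < 1 / 2, ∀ x ∈ C2, γ r = K (collarTime r, x)) ∧ ∀ r, 1 ≤ collarDist r → γ r = y := by
  obtain ⟨x₁, hx₁⟩ := exists_radius_eq (r := 1) (by norm_num)
  obtain ⟨x₂, hx₂⟩ := exists_radius_eq (r := 1 / 4) (by norm_num)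
  have hone (r : ℝ) (hr : 1 ≤ collarDist r) (x : X) : K (collarTime r, x) = y := by
    rw [collarTime_eq_one hr, K.apply_one, ContinuousMap.const_apply]
  refine ⟨⟨fun r => if 1 / 2 ≤ r then K (collarTime r, x₁) else K (collarTime r, x₂),
    continuous_if_le continuous_const continuous_id (Continuous.continuousOn (by fun_prop))
      (Continuous.continuousOn (by fun_prop)) fun r (hr : 1 / 2 = r) => ?_⟩,
    fun r hr x hx => (if_pos hr).trans ((hK _).1 _ (mem_C1_iff.2 hx₁) _ hx),
    fun r hr x hx => (if_neg hr.not_ge).trans ((hK _).2 _ (mem_C2_iff.2 hx₂) _ hx),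
    fun r hr => ?_⟩
  · have hdist : 1 ≤ collarDist r := by norm_num [collarDist, ← hr]
    rw [hone r hdist, hone r hdist]
  · simp only [ContinuousMap.coe_mk, hone r hr, ite_self]

theorem exists_boundaryHomotopic_compRadius {F : C(X, X)} (hF : BoundaryPreserving F) {b₁ b₂ : X}
    (h₁ : ∀ x ∈ C1, F x = b₁) (h₂ : ∀ x ∈ C2, F x = b₂) :
    ∃ γ, BoundaryHomotopic F (compRadius γ) := by
  obtain ⟨K, hK⟩ := exists_nullhomotopy_of_constant_on_circles F h₁ h₂
  obtain ⟨γ, hγ₁, hγ₂, hγ⟩ := exists_path_of_nullhomotopy K hK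
  obtain ⟨P, hP₀, hPfix, hP₁, hP₂⟩ := exists_homotopy_collar_subset_boundary
  let F' : C(X, X) := ⟨fun x => F (P (1, x)), by fun_prop⟩
  have hFF' : BoundaryHomotopic F F' := hF.boundaryHomotopic_of_rel (F.comp P)
    (fun x => congrArg F (hP₀ x)) fun t x hx => congrArg F (hPfix t x hx)
  have hF' : BoundaryPreserving F' := fun x hx => (congrArg F (hPfix 1 x hx)).symm ▸ hF hx
  let G : C(I × X, X) :=
    ⟨fun p => K (min p.1 (collarTime (radius p.2)), P (1, p.2)), by
      have := continuous_radius
      fun_prop⟩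
  have hG₁ (x : X) : G (1, x) = compRadius γ x := by
    change K (min 1 (collarTime (radius x)), P (1, x)) = γ (radius x)
    rw [min_eq_right le_one']
    rcases le_or_gt (collarDist (radius x)) 1 with hx | hx
    · rcases radius_of_collarDist_le_one hx with hr | hr
      · exact (hγ₁ _ (by linarith) _ (hP₁ x hr)).symm
      · exact (hγ₂ _ (by linarith) _ (hP₂ x hr)).symm
    · rw [hγ _ hx.le, collarTime_eq_one hx.le, K.apply_one, ContinuousMap.const_apply]
  have hG₀ (t : I) (x : X) (h : min t (collarTime (radius x)) = 0) : G (t, x) = F' x :=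
    (congrArg (fun s => K (s, P (1, x))) h).trans (K.apply_zero _)
  have hrel := hF'.boundaryHomotopic_of_rel G (fun x => hG₀ 0 x (min_eq_left nonneg'))
    fun t x hx => hG₀ t x (by rw [collarTime_radius_eq_zero hx, min_eq_right nonneg'])
  have hG : G.comp (.prodMk (.const X 1) (.id X)) = compRadius γ := ContinuousMap.ext hG₁
  exact ⟨γ, hFF'.trans (hG ▸ hrel)⟩

/-- `c` and `c'` are the radii of the two boundary circles of `X`, in either order. -/
def BoundaryRadii (c c' : ℝ) : Prop := c = 1 ∧ c' = 1 / 4 ∨ c = 1 / 4 ∧ c' = 1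

variable {c c' : ℝ}

lemma BoundaryRadii.mem_Bd_iff (h : BoundaryRadii c c') {x : X} :
    x ∈ Bd ↔ radius x = c ∨ radius x = c' := by
  rcases h with ⟨rfl, rfl⟩ | ⟨rfl, rfl⟩
  · exact PMB.mem_Bd_iff
  · exact PMB.mem_Bd_iff.trans or_comm

lemma BoundaryRadii.mem_Icc (h : BoundaryRadii c c') :
    c ∈ Icc (1 / 4 : ℝ) 1 ∧ c' ∈ Icc (1 / 4 : ℝ) 1 := by
  rcases h with ⟨rfl, rfl⟩ | ⟨rfl, rfl⟩ <;> norm_num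

lemma BoundaryRadii.exists_homotopy_avoiding (h : BoundaryRadii c c') : ∃ P : C(I × X, X),
    (∀ x, P (0, x) = x) ∧ (∀ t x, radius x = c → P (t, x) = x) ∧ ∀ x, radius (P (1, x)) ≠ c' := by
  rcases h with ⟨rfl, rfl⟩ | ⟨rfl, rfl⟩
  · obtain ⟨P, hP₀, hP, hP₁⟩ := exists_homotopy_avoiding_C2
    exact ⟨P, hP₀, fun t x hx => hP t x (mem_C1_iff.2 hx), fun x hx => hP₁ x (mem_C2_iff.2 hx)⟩
  · obtain ⟨P, hP₀, hP, hP₁⟩ := exists_homotopy_avoiding_C1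
    exact ⟨P, hP₀, fun t x hx => hP t x (mem_C2_iff.2 hx), fun x hx => hP₁ x (mem_C1_iff.2 hx)⟩

lemma BoundaryRadii.exists_boundaryHomotopic_avoiding (h : BoundaryRadii c c') {γ : C(ℝ, X)}
    (hγ : ∀ x ∈ Bd, radius (compRadius γ x) = c) : ∃ γ' : C(ℝ, X),
      BoundaryHomotopic (compRadius γ) (compRadius γ') ∧ ∀ r, radius (γ' r) ≠ c' := by
  obtain ⟨P, hP₀, hPfix, hP₁⟩ := h.exists_homotopy_avoiding
  have hpres : BoundaryPreserving (compRadius γ) := fun x hx => h.mem_Bd_iff.2 (.inl (hγ x hx))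
  exact ⟨⟨fun r => P (1, γ r), by fun_prop⟩, hpres.boundaryHomotopic_of_rel
    ⟨fun p => P (p.1, compRadius γ p.2), by fun_prop⟩ (fun x => hP₀ _)
    fun t x hx => hPfix t _ (hγ x hx), fun r => hP₁ _⟩

lemma exists_continuous_eqOn_const_of_notMem {S : Set ℝ} (hS : IsClosed S) (hc' : c' ∉ S) :
    ∃ χ : C(ℝ, ℝ), (∀ r ∈ S, χ r = c) ∧ χ c' = c' ∧ ∀ r, χ r ∈ segment ℝ c c' := by
  obtain ⟨u, hu₀, hu₁, hu⟩ := exists_continuous_zero_one_of_isClosed hS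
    (isClosed_singleton (x := c')) (disjoint_singleton_right.2 hc')
  refine ⟨⟨fun r => AffineMap.lineMap c c' (u r), by fun_prop⟩, fun r hr => ?_, ?_, fun r => ?_⟩
  · rw [ContinuousMap.coe_mk, hu₀ hr, Pi.zero_apply, AffineMap.lineMap_apply_zero]
  · rw [ContinuousMap.coe_mk, hu₁ rfl, Pi.one_apply, AffineMap.lineMap_apply_one]
  · rw [segment_eq_image_lineMap]
    exact mem_image_of_mem _ (hu r)

-- Retime `γ` by a map `χ` of the radius that is constant on the radii of the points of `γ`.
theorem BoundaryRadii.exists_boundaryHomotopic_unique_fixedPoint (h : BoundaryRadii c c')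
    {γ : C(ℝ, X)} (hγ : ∀ x ∈ Bd, radius (compRadius γ x) = c) (havoid : ∀ r, radius (γ r) ≠ c') :
    ∃ g, BoundaryHomotopic (compRadius γ) g ∧ ∃ x₀, {x | g x = x} = {x₀} := by
  have := continuous_radius
  obtain ⟨x, hx⟩ := exists_radius_eq h.mem_Icc.1
  have hγc : radius (γ c) = c := hx ▸ hγ x (h.mem_Bd_iff.2 (.inl hx))
  let S : Set ℝ := (fun r => radius (γ r)) '' Icc (1 / 4) 1
  obtain ⟨χ, hχS, hχc', hχ⟩ := exists_continuous_eqOn_const_of_notMem (c := c) (c' := c') (S := S)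
    (isCompact_Icc.image (by fun_prop)).isClosed (by rintro ⟨r, -, hr⟩; exact havoid r hr)
  have hχc : χ c = c := hχS c ⟨c, h.mem_Icc.1, hγc⟩
  have hpres : BoundaryPreserving (compRadius γ) := fun x hx => h.mem_Bd_iff.2 (.inl (hγ x hx))
  refine ⟨_, hpres.boundaryHomotopic_of_rel
    ⟨fun p => γ (AffineMap.lineMap (radius p.2) (χ (radius p.2)) (p.1 : ℝ)), by fun_prop⟩
    (fun x => by simp [compRadius_apply]) fun t x hx => ?_, γ c, ?_⟩
  · have hfix : χ (radius x) = radius x := by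
      rcases h.mem_Bd_iff.1 hx with hx | hx <;> rw [hx] <;> assumption
    simp [hfix, compRadius_apply]
  · refine Set.ext fun x => ?_
    change γ (AffineMap.lineMap (radius x) (χ (radius x)) (1 : ℝ)) = x ↔ x = γ c
    rw [AffineMap.lineMap_apply_one]
    refine ⟨fun hfix => ?_, fun hfix => by rw [hfix, hγc, hχc]⟩
    have hmem : χ (radius x) ∈ Icc (1 / 4 : ℝ) 1 :=
      (convex_Icc _ _).segment_subset h.mem_Icc.1 h.mem_Icc.2 (hχ _)
    have hχx : χ (radius x) = c := hχS _ ⟨_, hmem, congrArg radius hfix⟩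
    rw [← hfix, hχx]

end Radius

/-- A boundary-inessential boundary-preserving map of the punctured Möbius band whose
image of the boundary lies in a single boundary circle is boundary-homotopic to a map
with exactly one fixed point. -/
theorem stmt_5 (f : C(X, X)) (hf : BoundaryPreserving f)
    (h1 : Inessential (restrictMap f (hf.mono_left Set.subset_union_left : MapsTo f C1 Bd)))
    (h2 : Inessential (restrictMap f (hf.mono_left Set.subset_union_right : MapsTo f C2 Bd)))
    (him : MapsTo f Bd C1 ∨ MapsTo f Bd C2) :
    ∃ g : C(X, X), BoundaryHomotopic f g ∧ ∃ x₀ : X, {x : X | g x = x} = {x₀} := by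
  obtain ⟨F, b₁, b₂, hfF, hF₁, hF₂⟩ := exists_boundaryHomotopic_constant_on_circles h1 h2
  obtain ⟨c, c', hcc', hfc⟩ : ∃ c c', BoundaryRadii c c' ∧ ∀ x ∈ Bd, radius (f x) = c := by
    rcases him with him | him
    · exact ⟨1, 1 / 4, .inl ⟨rfl, rfl⟩, fun x hx => mem_C1_iff.1 (him hx)⟩
    · exact ⟨1 / 4, 1, .inr ⟨rfl, rfl⟩, fun x hx => mem_C2_iff.1 (him hx)⟩
  have hFc := hfF.radius_eq hfc
  obtain ⟨γ, hFγ⟩ := exists_boundaryHomotopic_compRadius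
    (fun x hx => hcc'.mem_Bd_iff.2 (.inl (hFc x hx))) hF₁ hF₂
  have hγc := hFγ.radius_eq hFc
  obtain ⟨γ', hγγ', havoid⟩ := hcc'.exists_boundaryHomotopic_avoiding hγc
  obtain ⟨g, hγg, hfix⟩ :=
    hcc'.exists_boundaryHomotopic_unique_fixedPoint (hγγ'.radius_eq hγc) havoid
  exact ⟨g, hfF.trans (hFγ.trans (hγγ'.trans hγg)), hfix⟩

end PMB
end

section
/- Let X be the punctured Möbius band with boundary circles C₁ and C₂. If f : X → X is a boundary-preserving map with f(C₁) ⊆ C₁ and f(C₂) ⊆ C₂, and both restrictions, viewed as maps f|C₁ : C₁ → C₁ and f|C₂ : C₂ → C₂, are essential, then f is surjective. -/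
open Set

namespace PMB

/-!
Suppose that `f` misses a point. Then it misses an interior point, and the complement of that point
collapses onto a bouquet of two circles, in which `C₁` and `C₂` become the two free generators
`a` and `b`. Cut `X` open to an annulus: the antipodal sides of the outer boundary that were glued
together turn the boundary periods of the composite into an equation `ρ² = (g bᵐ g⁻¹) (h aⁿ h⁻¹)` in
the free group on `a` and `b`, where `m` and `n` are the degrees of `f` on `C₂` and `C₁`. Counting
exponents shows that `m` and `n` are even. Solutions of `ρ² = u² v²` in a free group commute, and
conjugates of `a ^ q` and `b ^ p` commute only if `p = 0` or `q = 0`. So `f` has degree zero on one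
of the boundary circles, where it is inessential.
-/

section FreeGroup

/-- The integral Heisenberg group: the triple `(x, y, z)` is the upper unitriangular matrix
`[[1, x, z], [0, 1, y], [0, 0, 1]]`. Its centre detects determinants of exponent vectors. -/
@[ext]
structure Heisenberg where
  x : ℤ
  y : ℤ
  z : ℤ

namespace Heisenberg

instance : Mul Heisenberg := ⟨fun g h => ⟨g.x + h.x, g.y + h.y, g.z + h.z + g.x * h.y⟩⟩
instance : One Heisenberg := ⟨⟨0, 0, 0⟩⟩
instance : Inv Heisenberg := ⟨fun g => ⟨-g.x, -g.y, -g.z + g.x * g.y⟩⟩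

@[simp] lemma mul_x (g h : Heisenberg) : (g * h).x = g.x + h.x := rfl
@[simp] lemma mul_y (g h : Heisenberg) : (g * h).y = g.y + h.y := rfl
@[simp] lemma mul_z (g h : Heisenberg) : (g * h).z = g.z + h.z + g.x * h.y := rfl
@[simp] lemma one_x : (1 : Heisenberg).x = 0 := rfl
@[simp] lemma one_y : (1 : Heisenberg).y = 0 := rfl
@[simp] lemma one_z : (1 : Heisenberg).z = 0 := rfl
@[simp] lemma inv_x (g : Heisenberg) : g⁻¹.x = -g.x := rfl
@[simp] lemma inv_y (g : Heisenberg) : g⁻¹.y = -g.y := rfl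
@[simp] lemma inv_z (g : Heisenberg) : g⁻¹.z = -g.z + g.x * g.y := rfl

instance : Group Heisenberg :=
  Group.ofLeftAxioms (fun g h k => by ext <;> simp <;> ring) (fun g => by ext <;> simp)
    (fun g => by ext <;> simp)

/-- The abelianization of the Heisenberg group. -/
def toProd : Heisenberg →* Multiplicative (ℤ × ℤ) where
  toFun g := .ofAdd (g.x, g.y)
  map_one' := rfl
  map_mul' _ _ := rfl

@[simp] lemma zpow_x (g : Heisenberg) (n : ℤ) : (g ^ n).x = n * g.x := by
  have h := congrArg (fun v => v.toAdd.1) (map_zpow toProd g n)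
  rwa [toAdd_zpow, Prod.smul_fst, smul_eq_mul] at h

@[simp] lemma zpow_y (g : Heisenberg) (n : ℤ) : (g ^ n).y = n * g.y := by
  have h := congrArg (fun v => v.toAdd.2) (map_zpow toProd g n)
  rwa [toAdd_zpow, Prod.smul_snd, smul_eq_mul] at h

lemma mul_comm_xy_of_commute {g h : Heisenberg} (hgh : Commute g h) : g.x * h.y = h.x * g.y := by
  have := congrArg z hgh.eq
  simp only [mul_z] at this
  linarith

lemma even_of_sq_eq {a b c : Heisenberg} (h : a ^ 2 = b ^ 2 * c ^ 2) :
    a.x = b.x + c.x ∧ a.y = b.y + c.y ∧ Even (b.x * c.y + c.x * b.y) := by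
  simp only [sq, Heisenberg.ext_iff, mul_x, mul_y, mul_z] at h
  obtain ⟨hx, hy, hz⟩ := h
  have hax : a.x = b.x + c.x := by omega
  have hay : a.y = b.y + c.y := by omega
  rw [hax, hay] at hz
  exact ⟨hax, hay, b.z + c.z + 2 * b.x * c.y - a.z, by linarith⟩

end Heisenberg

open Heisenberg

lemma exists_xy_eq_of_mem_closure {K : Type*} [Group K] (Φ : K →* Heisenberg) {a b c g : K}
    (hax : (Φ a).x = (Φ b).x + (Φ c).x) (hay : (Φ a).y = (Φ b).y + (Φ c).y)
    (hg : g ∈ Subgroup.closure {a, b, c}) : ∃ i j : ℤ,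
      (Φ g).x = i * (Φ b).x + j * (Φ c).x ∧ (Φ g).y = i * (Φ b).y + j * (Φ c).y := by
  induction hg using Subgroup.closure_induction with
  | mem g hg =>
    obtain rfl | rfl | rfl := hg
    · exact ⟨1, 1, by simp [hax], by simp [hay]⟩
    · exact ⟨1, 0, by simp, by simp⟩
    · exact ⟨0, 1, by simp, by simp⟩
  | one => exact ⟨0, 0, by simp, by simp⟩
  | mul g g' _ _ hg hg' =>
    obtain ⟨i, j, hx, hy⟩ := hg
    obtain ⟨i', j', hx', hy'⟩ := hg'
    exact ⟨i + i', j + j', by simp only [map_mul, mul_x, hx, hx']; ring,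
      by simp only [map_mul, mul_y, hy, hy']; ring⟩
  | inv g _ hg =>
    obtain ⟨i, j, hx, hy⟩ := hg
    exact ⟨-i, -j, by simp only [map_inv, inv_x, hx]; ring,
      by simp only [map_inv, inv_y, hy]; ring⟩

/-- Two distinct free generators would map to a basis of `ℤ²` under the exponent map, whereas
the determinant of the exponent vectors of `b` and `c` is even. -/
lemma subsingleton_generators_of_sq_eq {K : Type*} [Group K] [IsFreeGroup K] {a b c : K}
    (h : a ^ 2 = b ^ 2 * c ^ 2) (hgen : Subgroup.closure {a, b, c} = ⊤) :
    Subsingleton (IsFreeGroup.Generators K) := by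
  classical
  refine ⟨fun s t => by_contra fun hst => ?_⟩
  let Φ : K →* Heisenberg :=
    IsFreeGroup.lift fun r => if r = s then ⟨1, 0, 0⟩ else if r = t then ⟨0, 1, 0⟩ else 1
  obtain ⟨hax, hay, heven⟩ := even_of_sq_eq
    (by simpa only [map_pow, map_mul] using congrArg Φ h : Φ a ^ 2 = Φ b ^ 2 * Φ c ^ 2)
  have hmem (g : K) : g ∈ Subgroup.closure {a, b, c} := hgen ▸ Subgroup.mem_top g
  obtain ⟨i, j, hsx, hsy⟩ := exists_xy_eq_of_mem_closure Φ hax hay (hmem (IsFreeGroup.of s))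
  obtain ⟨k, l, htx, hty⟩ := exists_xy_eq_of_mem_closure Φ hax hay (hmem (IsFreeGroup.of t))
  have hs : Φ (IsFreeGroup.of s) = ⟨1, 0, 0⟩ := by simp [Φ]
  have ht : Φ (IsFreeGroup.of t) = ⟨0, 1, 0⟩ := by simp [Φ, Ne.symm hst]
  rw [hs] at hsx hsy
  rw [ht] at htx hty
  have hdet : (i * l - j * k) * ((Φ b).x * (Φ c).y - (Φ c).x * (Φ b).y) = 1 :=
    calc _ = (i * (Φ b).x + j * (Φ c).x) * (k * (Φ b).y + l * (Φ c).y)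
          - (i * (Φ b).y + j * (Φ c).y) * (k * (Φ b).x + l * (Φ c).x) := by ring
      _ = 1 := by rw [← hsx, ← hsy, ← htx, ← hty]; norm_num
  have hodd : Odd ((Φ b).x * (Φ c).y - (Φ c).x * (Φ b).y) :=
    (Int.odd_mul.1 (hdet ▸ odd_one)).2
  obtain ⟨m, hm⟩ := heven
  obtain ⟨n, hn⟩ := hodd
  omega

lemma commute_of_subsingleton_generators {K : Type*} [Group K] [IsFreeGroup K]
    [Subsingleton (IsFreeGroup.Generators K)] (g h : K) : Commute g h := by
  have : IsMulCommutative (FreeGroup (IsFreeGroup.Generators K)) := by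
    obtain _ | ⟨⟨s⟩⟩ := isEmpty_or_nonempty (IsFreeGroup.Generators K)
    · exact ⟨⟨fun _ _ => Subsingleton.elim _ _⟩⟩
    · have := uniqueOfSubsingleton s
      infer_instance
  have e := (IsFreeGroup.mulEquiv K).symm
  exact e.injective (by rw [map_mul, map_mul, this.is_comm.comm])

theorem commute_of_sq_eq_sq_mul_sq {K : Type*} [Group K] [IsFreeGroup K] {a b c : K}
    (h : a ^ 2 = b ^ 2 * c ^ 2) : Commute b c := by
  let H := Subgroup.closure {a, b, c}
  let a' : H := ⟨a, Subgroup.subset_closure (by simp)⟩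
  let b' : H := ⟨b, Subgroup.subset_closure (by simp)⟩
  let c' : H := ⟨c, Subgroup.subset_closure (by simp)⟩
  have hgen : Subgroup.closure {a', b', c'} = ⊤ := by
    convert Subgroup.closure_closure_coe_preimage (k := {a, b, c})
    ext g
    simp [a', b', c', Subtype.ext_iff]
  have := subsingleton_generators_of_sq_eq (Subtype.ext h : a' ^ 2 = b' ^ 2 * c' ^ 2) hgen
  exact congrArg Subtype.val (commute_of_subsingleton_generators b' c').eq

/-- The exponents are even, so the equation has the form `ρ² = b² c²`, and then `b` and `c`
commute. -/
theorem eq_zero_of_sq_eq_conj_mul_conj {ι : Type*} {i j : ι} (hij : i ≠ j) {m n : ℤ}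
    {ρ g h : FreeGroup ι}
    (H : ρ ^ 2 = (g * .of i ^ m * g⁻¹) * (h * .of j ^ n * h⁻¹)) : m = 0 ∨ n = 0 := by
  classical
  let Φ : FreeGroup ι →* Heisenberg :=
    FreeGroup.lift fun r => if r = i then ⟨1, 0, 0⟩ else if r = j then ⟨0, 1, 0⟩ else 1
  have hi : Φ (.of i) = ⟨1, 0, 0⟩ := by simp [Φ]
  have hj : Φ (.of j) = ⟨0, 1, 0⟩ := by simp [Φ, hij.symm]
  have hx := congrArg (fun w => (Φ w).x) H
  have hy := congrArg (fun w => (Φ w).y) H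
  simp only [map_mul, map_inv, map_zpow, sq, mul_x, mul_y, inv_x, inv_y, zpow_x, zpow_y,
    hi, hj] at hx hy
  obtain ⟨p, rfl⟩ : ∃ p, m = 2 * p := ⟨(Φ ρ).x, by linarith⟩
  obtain ⟨q, rfl⟩ : ∃ q, n = 2 * q := ⟨(Φ ρ).y, by linarith⟩
  have hcomm : Commute (g * .of i ^ p * g⁻¹) (h * .of j ^ q * h⁻¹) := by
    apply commute_of_sq_eq_sq_mul_sq (a := ρ)
    rwa [conj_pow, conj_pow, ← zpow_natCast (_ ^ p), ← zpow_natCast (_ ^ q), ← zpow_mul,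
      ← zpow_mul, Nat.cast_ofNat, mul_comm p, mul_comm q]
  have hpq := mul_comm_xy_of_commute (hcomm.map Φ)
  simp only [map_mul, map_inv, map_zpow, mul_x, mul_y, inv_x, inv_y, zpow_x, zpow_y, hi, hj] at hpq
  have : p * q = 0 := by linarith
  obtain rfl | rfl := mul_eq_zero.1 this <;> simp

end FreeGroup

section Potential

variable {ι B G Y Z : Type*} [TopologicalSpace B] [TopologicalSpace Y] [TopologicalSpace Z]
  [Group G] [TopologicalSpace G] [DiscreteTopology G]

/-- A principal covering of `B` with structure group the discrete group `G`, given by possibly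
discontinuous sections: over `chart i` the gauge `gauge i` compares a section that need not be
continuous (the same for all `i`) with a continuous one. -/
structure GaugeAtlas (ι B G : Type*) [TopologicalSpace B] [Group G] [TopologicalSpace G] where
  chart : ι → Set B
  isOpen_chart : ∀ i, IsOpen (chart i)
  exists_mem_chart : ∀ b, ∃ i, b ∈ chart i
  gauge : ι → B → G
  continuousOn_gauge : ∀ i j, ContinuousOn (fun b => (gauge i b)⁻¹ * gauge j b) (chart i ∩ chart j)

namespace GaugeAtlas

variable (A : GaugeAtlas ι B G)

/-- The covering of `B` described by a gauge atlas. -/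
noncomputable def core : FiberBundleCore ι B G where
  baseSet := A.chart
  isOpen_baseSet := A.isOpen_chart
  indexAt b := (A.exists_mem_chart b).choose
  mem_baseSet_at b := (A.exists_mem_chart b).choose_spec
  coordChange i j b v := v * ((A.gauge i b)⁻¹ * A.gauge j b)
  coordChange_self i b _ v := by simp
  continuousOn_coordChange i j :=
    continuousOn_snd.mul ((A.continuousOn_gauge i j).comp continuousOn_fst fun _ hp => hp.1)
  coordChange_comp i j k b _ v := by group

/-- A potential of `f` is a lift of `f` to the covering of a gauge atlas, recorded by its
`G`-valued coordinate with respect to the discontinuous section. -/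
def IsPotential (f : C(Y, B)) (l : Y → G) : Prop :=
  ∀ i, ContinuousOn (fun y => l y * A.gauge i (f y)) (f ⁻¹' A.chart i)

variable {A} {f : C(Y, B)} {l l' : Y → G}

lemma exists_isPotential [SimplyConnectedSpace Y] [LocallyPathConnectedSpace Y]
    (A : GaugeAtlas ι B G) (f : C(Y, B)) : ∃ l, A.IsPotential f l := by
  obtain ⟨y₀⟩ : Nonempty Y := inferInstance
  have hcov : IsCoveringMap (Bundle.TotalSpace.proj : A.core.TotalSpace → B) :=
    FiberBundle.isCoveringMap (F := G) (E := A.core.Fiber)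
  obtain ⟨L, ⟨-, hL⟩, -⟩ := hcov.existsUnique_continuousMap_lifts f y₀ ⟨f y₀, (1 : G)⟩ rfl
  have hproj (y : Y) : (L y).proj = f y := congrFun hL y
  let coord (p : A.core.TotalSpace) : G := p.snd
  refine ⟨fun y => coord (L y) * (A.gauge (A.core.indexAt (L y).proj) (L y).proj)⁻¹, fun i => ?_⟩
  have hloc : ContinuousOn (fun y => (A.core.localTriv i (L y)).2) (f ⁻¹' A.chart i) := by
    refine continuous_snd.comp_continuousOn
      ((A.core.localTriv i).continuousOn.comp L.continuous.continuousOn fun y hy => ?_)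
    rw [FiberBundleCore.mem_localTriv_source]
    exact (hproj y).symm ▸ hy
  refine hloc.congr fun y _ => ?_
  change _ = coord (L y) * ((A.gauge (A.core.indexAt (L y).proj) (L y).proj)⁻¹ *
    A.gauge i (L y).proj)
  rw [← hproj, mul_assoc]

omit [DiscreteTopology G] in
lemma IsPotential.comp (h : A.IsPotential f l) (φ : C(Z, Y)) : A.IsPotential (f.comp φ) (l ∘ φ) :=
  fun i => (h i).comp φ.continuous.continuousOn fun _ hz => hz

lemma IsPotential.const_mul (h : A.IsPotential f l) (g : G) :
    A.IsPotential f (fun y => g * l y) := fun i => by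
  simpa only [mul_assoc, Function.comp_def] using (continuous_const_mul g).comp_continuousOn (h i)

lemma IsPotential.exists_eq_mul [PreconnectedSpace Y] (h : A.IsPotential f l)
    (h' : A.IsPotential f l') : ∃ g, ∀ y, l' y = g * l y := by
  have hquot : IsLocallyConstant fun y => l' y * (l y)⁻¹ := by
    refine (IsLocallyConstant.iff_continuous _).2 (continuous_iff_continuousAt.2 fun y => ?_)
    obtain ⟨i, hi⟩ := A.exists_mem_chart (f y)
    have hnhds : f ⁻¹' A.chart i ∈ nhds y := ((A.isOpen_chart i).preimage f.continuous).mem_nhds hi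
    exact (((h' i).continuousAt hnhds).mul ((h i).continuousAt hnhds).inv).congr
      (.of_forall fun y => by simp)
  obtain ⟨g, hg⟩ := hquot.exists_eq_const
  exact ⟨g, fun y => eq_mul_of_mul_inv_eq (congrFun hg y)⟩

lemma IsPotential.exists_eq_mul_on {Y' : Type*} [TopologicalSpace Y'] {f' : C(Y', B)} {l' : Y' → G}
    (h : A.IsPotential f l) (h' : A.IsPotential f' l') {s : Set Z} (hs : IsPreconnected s)
    {φ : Z → Y} {ψ : Z → Y'} (hφ : Continuous φ) (hψ : Continuous ψ)
    (heq : ∀ z ∈ s, f' (ψ z) = f (φ z)) : ∃ g, ∀ z ∈ s, l' (ψ z) = g * l (φ z) := by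
  have := isPreconnected_iff_preconnectedSpace.1 hs
  let φs : C(s, Y) := ⟨fun z => φ z, by fun_prop⟩
  let ψs : C(s, Y') := ⟨fun z => ψ z, by fun_prop⟩
  have hψs := h'.comp ψs
  rw [show f'.comp ψs = f.comp φs from ContinuousMap.ext fun z => heq z z.2] at hψs
  obtain ⟨g, hg⟩ := (h.comp φs).exists_eq_mul hψs
  exact ⟨g, fun z hz => hg ⟨z, hz⟩⟩

lemma IsPotential.mul_gauge_eq (h : A.IsPotential f l) {i : ι} {s : Set Y} (hs : IsPreconnected s)
    (hsi : MapsTo f s (A.chart i)) {y y' : Y} (hy : y ∈ s) (hy' : y' ∈ s) :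
    l y * A.gauge i (f y) = l y' * A.gauge i (f y') :=
  hs.constant ((h i).mono hsi) hy hy'

end GaugeAtlas

end Potential

lemma apply_add_mul_intCast {G : Type*} [Group G] {f : ℝ → G} {p : ℝ} {g : G}
    (h : ∀ t, f (t + p) = g * f t) (t : ℝ) (n : ℤ) : f (t + p * n) = g ^ n * f t := by
  have hstep (k : ℤ) : f (t + p * (k + 1 : ℤ)) = g * f (t + p * k) := by
    rw [← h]
    push_cast
    ring_nf
  induction n with
  | zero => simp
  | succ n ih => rw [hstep, ih, ← mul_assoc, ← zpow_one_add, add_comm]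
  | pred n ih =>
    have := hstep (-n - 1)
    rw [sub_add_cancel, ih] at this
    rw [sub_eq_neg_add, zpow_add, zpow_neg_one, mul_assoc, this, inv_mul_cancel_left,
      ← sub_eq_neg_add]

section Circle

open Real

lemma circleExp_pi : Circle.exp π = -1 := Circle.ext (by simp)

lemma eq_one_or_eq_neg_one_of_im_eq_zero {u : Circle} (h : (u : ℂ).im = 0) : u = 1 ∨ u = -1 := by
  have hsq : (u : ℂ).re * (u : ℂ).re = 1 := by
    simpa [Complex.normSq_apply, h] using Circle.normSq_coe u
  refine (mul_self_eq_one_iff.1 hsq).imp (fun hre => ?_) fun hre => ?_ <;>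
    exact Circle.ext (Complex.ext (by simpa using hre) (by simpa using h))

lemma circleExp_ne_neg_one {t : ℝ} (ht : t ∈ Ioo (-π) π) : Circle.exp t ≠ -1 := by
  intro h
  have := Circle.arg_exp ht.1 ht.2.le
  rw [h, Circle.coe_neg, Circle.coe_one, Complex.arg_neg_one] at this
  exact ht.2.ne this.symm

lemma circleExp_ne_one {t : ℝ} (ht : t ∈ Ioo 0 (2 * π)) : Circle.exp t ≠ 1 := by
  rw [← Circle.exp_zero]
  exact fun h => ht.1.ne' (Circle.exp_injOn_Ico (by simp) (Ioo_subset_Ico_self ht)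
    ⟨le_rfl, by positivity⟩ h)

lemma exists_lift_degree (φ : C(Circle, Circle)) : ∃ (D : C(ℝ, ℝ)) (n : ℤ),
    (∀ t, φ (Circle.exp t) = Circle.exp (D t)) ∧ (∀ t, D (t + 2 * π) = D t + 2 * π * n) := by
  obtain ⟨a, ha⟩ := Circle.exp_surjective (φ (Circle.exp 0))
  obtain ⟨D, ⟨-, hD⟩, -⟩ := Circle.isCoveringMap_exp.existsUnique_continuousMap_lifts
    (φ.comp Circle.exp) 0 a ha
  have hexp (t : ℝ) : φ (Circle.exp t) = Circle.exp (D t) := (congrFun hD t).symm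
  have hint (t : ℝ) : ∃ n : ℤ, D (t + 2 * π) - D t = 2 * π * n := by
    have := hexp (t + 2 * π)
    rw [Circle.exp_add_two_pi, hexp] at this
    obtain ⟨n, hn⟩ := Circle.exp_eq_exp.1 this.symm
    exact ⟨n, by linarith⟩
  choose n hn using hint
  have hcont : Continuous n := Int.isClosedEmbedding_coe_real.isInducing.continuous_iff.2 <| by
    have : ((↑) : ℤ → ℝ) ∘ n = fun t => (D (t + 2 * π) - D t) / (2 * π) :=
      funext fun t => by rw [hn]; simp
    rw [this]
    fun_prop
  refine ⟨D, n 0, hexp, fun t => ?_⟩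
  rw [PreconnectedSpace.constant inferInstance hcont (x := 0) (y := t), ← hn]
  ring

lemma nullhomotopic_of_periodic_lift {φ : C(Circle, Circle)} {D : C(ℝ, ℝ)}
    (hexp : ∀ t, φ (Circle.exp t) = Circle.exp (D t)) (hD : Function.Periodic D (2 * π)) :
    φ.Nullhomotopic := by
  have hquot : Topology.IsQuotientMap Circle.exp :=
    Circle.isCoveringMap_exp.isQuotientMap Circle.exp_surjective
  have hfactors : Function.FactorsThrough D Circle.exp := fun s t hst => by
    obtain ⟨k, rfl⟩ := Circle.exp_eq_exp.1 hst
    exact hD.int_mul k t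
  let D' : C(Circle, ℝ) := hquot.lift D hfactors
  have hφ : φ = (Circle.exp : C(ℝ, Circle)).comp D' := by
    ext1 u
    obtain ⟨t, rfl⟩ := Circle.exp_surjective u
    rw [hexp, ContinuousMap.comp_apply]
    exact congrArg _ (DFunLike.congr_fun (hquot.lift_comp D hfactors) t).symm
  exact hφ ▸ ((id_nullhomotopic ℝ).comp_left D').comp_right _

end Circle

section Bouquet

open Real

variable {ι : Type*}

/-- The bouquet of circles indexed by `ι`, as a subspace of the torus `ι → Circle`. -/
abbrev Bouquet (ι : Type*) : Type _ :=
  {w : ι → Circle // Pairwise fun i j => w i = 1 ∨ w j = 1}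

namespace Bouquet

/-- The inclusion of the `i`-th circle. -/
noncomputable def incl [DecidableEq ι] (i : ι) : C(Circle, Bouquet ι) where
  toFun u := ⟨(Pi.mulSingle i u : ι → Circle), fun j k hjk => by
    by_cases hj : j = i
    · exact .inr (Pi.mulSingle_eq_of_ne (hj ▸ hjk.symm) _)
    · exact .inl (Pi.mulSingle_eq_of_ne hj _)⟩
  continuous_toFun := (continuous_mulSingle (A := fun _ => Circle) i).subtype_mk _

@[simp] lemma incl_val [DecidableEq ι] (i : ι) (u : Circle) :
    (incl i u).1 = (Pi.mulSingle i u : ι → Circle) := rfl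

lemma incl_one [DecidableEq ι] (i j : ι) : incl i 1 = incl j 1 := Subtype.ext (by simp)

local instance : TopologicalSpace (FreeGroup ι) := ⊥

local instance : DiscreteTopology (FreeGroup ι) := ⟨rfl⟩

/-- The charts of the bouquet: near the wedge point, and one for each circle without it. -/
def chart : Option ι → Set (Bouquet ι)
  | none => {w | ∀ i, w.1 i ≠ -1}
  | some i => {w | w.1 i ≠ 1}

open scoped Classical in
/-- The section over the `i`-th open circle jumps by the generator `i` at `-1`. -/
noncomputable def gauge : Option ι → Bouquet ι → FreeGroup ι
  | none, _ => 1
  | some i, w => if (w.1 i : ℂ).im ≤ 0 then (.of i)⁻¹ else 1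

lemma continuous_coe_apply (i : ι) : Continuous fun w : Bouquet ι => w.1 i :=
  (continuous_apply i).comp continuous_subtype_val

lemma continuousOn_gauge (i : ι) :
    ContinuousOn (gauge (some i)) (chart none ∩ chart (some i)) := by
  have him : Continuous fun w : Bouquet ι => (w.1 i : ℂ).im :=
    Complex.continuous_im.comp (continuous_subtype_val.comp (continuous_coe_apply i))
  refine ContinuousOn.if (fun w hw => ?_) continuousOn_const continuousOn_const
  have hw0 := frontier_le_subset_eq him continuous_const hw.2
  exact ((eq_one_or_eq_neg_one_of_im_eq_zero hw0).elim hw.1.2 (hw.1.1 i)).elim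

lemma continuousOn_gauge_inv_mul_gauge (o o' : Option ι) :
    ContinuousOn (fun w : Bouquet ι => (gauge o w)⁻¹ * gauge o' w) (chart o ∩ chart o') := by
  obtain rfl | hne := eq_or_ne o o'
  · simpa only [inv_mul_cancel] using continuousOn_const
  match o, o' with
  | none, some j => simpa [gauge.eq_1] using continuousOn_gauge j
  | some i, none => simpa [gauge.eq_1, inter_comm] using (continuousOn_gauge i).fun_inv
  | some i, some j =>
    have hij : i ≠ j := fun h => hne (h ▸ rfl)
    have : chart (some i) ∩ chart (some j) = ∅ :=
      eq_empty_of_forall_notMem fun w hw => (w.2 hij).elim hw.1 hw.2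
    exact this ▸ continuousOn_empty _

variable [Finite ι]

/-- The universal covering of a finite bouquet of circles. -/
noncomputable def atlas (ι : Type*) [Finite ι] :
    GaugeAtlas (Option ι) (Bouquet ι) (FreeGroup ι) where
  chart := chart
  isOpen_chart
    | none => by
      simp only [chart, ofPred_forall]
      exact isOpen_iInter_of_finite fun i => isOpen_ne_fun (continuous_coe_apply i) continuous_const
    | some i => isOpen_ne_fun (continuous_coe_apply i) continuous_const
  exists_mem_chart w := by
    by_cases h : ∀ i, w.1 i ≠ -1
    · exact ⟨none, h⟩
    · obtain ⟨i, hi⟩ := not_forall_not.1 h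
      exact ⟨some i, by simp [chart, hi, Circle.ext_iff, neg_eq_iff_add_eq_zero]⟩
  gauge := gauge
  continuousOn_gauge := continuousOn_gauge_inv_mul_gauge

lemma atlas_gauge_none (w : Bouquet ι) : (atlas ι).gauge none w = 1 := rfl

variable [DecidableEq ι] (i : ι)

lemma incl_mem_chart_none {u : Circle} (hu : u ≠ -1) : incl i u ∈ (atlas ι).chart none := by
  intro j
  obtain rfl | hj := eq_or_ne j i
  · simpa using hu
  · simpa [hj] using (Circle.neg_ne_self 1).symm

lemma incl_mem_chart_some {u : Circle} (hu : u ≠ 1) : incl i u ∈ (atlas ι).chart (some i) := by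
  change (incl i u).1 i ≠ 1
  simpa using hu

lemma gauge_incl_of_im_nonpos {u : Circle} (hu : (u : ℂ).im ≤ 0) :
    (atlas ι).gauge (some i) (incl i u) = (.of i)⁻¹ :=
  if_pos (by simpa using hu)

lemma gauge_incl_of_im_pos {u : Circle} (hu : 0 < (u : ℂ).im) :
    (atlas ι).gauge (some i) (incl i u) = 1 :=
  if_neg (by simpa using hu)

/-- Crossing `1` costs nothing, and crossing `-1` costs the jump of the gauge. -/
lemma exists_isPotential_incl_exp : ∃ l : ℝ → FreeGroup ι,
    (atlas ι).IsPotential ((incl i).comp Circle.exp) l ∧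
      ∀ (t : ℝ) (n : ℤ), l (t + 2 * π * n) = .of i ^ n * l t := by
  obtain ⟨l, hl⟩ := GaugeAtlas.exists_isPotential (atlas ι) ((incl i).comp Circle.exp)
  obtain ⟨g, hg⟩ : ∃ g, ∀ t, l (t + 2 * π) = g * l t := by
    simpa using hl.exists_eq_mul_on hl isPreconnected_univ continuous_id
      (continuous_add_const (2 * π)) fun t _ => by simp
  have hpi := pi_pos
  have hnone {t : ℝ} (ht : t ∈ Ioo (-π) π) : l t = l 0 := by
    simpa [atlas_gauge_none] using hl.mul_gauge_eq (i := none) isPreconnected_Ioo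
      (fun s hs => incl_mem_chart_none i (circleExp_ne_neg_one hs)) ht
      (show (0 : ℝ) ∈ Ioo (-π) π by simp [hpi])
  have hsome := hl.mul_gauge_eq (i := some i) isPreconnected_Ioo
    (fun s hs => incl_mem_chart_some i (circleExp_ne_one hs))
    (y := π / 2) (y' := -(π / 2) + 2 * π) ⟨by linarith, by linarith⟩ ⟨by linarith, by linarith⟩
  have hjump : g * l 0 = l 0 * .of i := by
    have hpos : 0 < (Circle.exp (π / 2) : ℂ).im := by simp
    have hneg : (Circle.exp (-(π / 2) + 2 * π) : ℂ).im ≤ 0 := by simp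
    rw [ContinuousMap.comp_apply, ContinuousMap.comp_apply, gauge_incl_of_im_pos i hpos,
      gauge_incl_of_im_nonpos i hneg, hg,
      hnone (t := π / 2) ⟨by linarith, by linarith⟩,
      hnone (t := -(π / 2)) ⟨by linarith, by linarith⟩, mul_one] at hsome
    exact (eq_mul_inv_iff_mul_eq.1 hsome).symm
  refine ⟨fun t => (l 0)⁻¹ * l t, hl.const_mul _,
    apply_add_mul_intCast (f := fun t => (l 0)⁻¹ * l t) fun t => ?_⟩
  rw [hg, eq_mul_inv_of_mul_eq hjump]
  group

/-- The exponent `n` is the degree of `φ`. -/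
lemma exists_isPotential_incl_comp_exp (φ : C(Circle, Circle)) : ∃ (l : ℝ → FreeGroup ι) (n : ℤ),
    (atlas ι).IsPotential (((incl i).comp φ).comp Circle.exp) l ∧
      (∀ t, l (t + 2 * π) = .of i ^ n * l t) ∧ (n = 0 → φ.Nullhomotopic) := by
  obtain ⟨D, n, hexp, hD⟩ := exists_lift_degree φ
  obtain ⟨l, hl, hper⟩ := exists_isPotential_incl_exp i
  refine ⟨l ∘ D, n, ?_, fun t => ?_, ?_⟩
  · convert hl.comp D using 1
    exact ContinuousMap.ext fun t => congrArg (incl i) (hexp t)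
  · rw [Function.comp_apply, hD, hper, Function.comp_apply]
  · rintro rfl
    exact nullhomotopic_of_periodic_lift hexp fun t => by simp [hD]

end Bouquet

end Bouquet

section BoundaryFold

open Real

/-- The reflection of the left half of the circle to the right half. -/
noncomputable def absRe (z : Circle) : Circle := if 0 ≤ (z : ℂ).re then z else -z⁻¹

lemma absRe_of_nonneg {z : Circle} (hz : 0 ≤ (z : ℂ).re) : absRe z = z := if_pos hz

lemma neg_inv_eq_self_of_re_eq_zero {z : Circle} (hz : (z : ℂ).re = 0) : -z⁻¹ = z :=
  Circle.ext (by
    rw [Circle.coe_neg, Circle.coe_inv_eq_conj]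
    exact Complex.ext (by simp [hz]) (by simp))

lemma absRe_of_nonpos {z : Circle} (hz : (z : ℂ).re ≤ 0) : absRe z = -z⁻¹ := by
  obtain hz | hz := hz.lt_or_eq
  · exact if_neg hz.not_ge
  · rw [absRe_of_nonneg hz.ge, neg_inv_eq_self_of_re_eq_zero hz]

lemma continuous_absRe : Continuous absRe :=
  continuous_id.if_le (by fun_prop) continuous_const
    (Complex.continuous_re.comp continuous_subtype_val) fun _ hz =>
      (neg_inv_eq_self_of_re_eq_zero hz.symm).symm

/-- The boundary circle of the Möbius band as a quotient of the boundary of the square. The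
antipodal side arcs `0 ≤ re (u ^ 2)`, of which only the end points lie on that circle, are both
mapped by `u ^ 2`; the top arc runs through the left half of the circle and the bottom arc through
the right half. -/
noncomputable def boundaryFold (u : Circle) : Circle :=
  if (u : ℂ).im ≤ 0 then absRe (u ^ 2) else u ^ 2

lemma boundaryFold_of_im_pos {u : Circle} (hu : 0 < (u : ℂ).im) : boundaryFold u = u ^ 2 :=
  if_neg hu.not_ge

lemma boundaryFold_of_im_nonpos {u : Circle} (hu : (u : ℂ).im ≤ 0) :
    boundaryFold u = absRe (u ^ 2) := if_pos hu

lemma continuous_boundaryFold : Continuous boundaryFold := by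
  refine (continuous_absRe.comp (by fun_prop)).if_le (by fun_prop)
    (Complex.continuous_im.comp continuous_subtype_val) continuous_const fun u hu => ?_
  have hsq : u ^ 2 = 1 := by
    obtain rfl | rfl := eq_one_or_eq_neg_one_of_im_eq_zero hu <;> simp
  rw [Function.comp_apply, hsq, absRe_of_nonneg zero_le_one]

lemma boundaryFold_eq_sq {u : Circle} (hu : 0 ≤ ((u ^ 2 : Circle) : ℂ).re) :
    boundaryFold u = u ^ 2 := by
  obtain h | h := le_or_gt (u : ℂ).im 0
  · rw [boundaryFold_of_im_nonpos h, absRe_of_nonneg hu]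
  · exact boundaryFold_of_im_pos h

lemma re_circleExp_sq (t : ℝ) : ((Circle.exp t ^ 2 : Circle) : ℂ).re = cos (2 * t) := by
  rw [← Circle.exp_natCast_mul, Circle.coe_exp, Complex.exp_ofReal_mul_I_re, Nat.cast_ofNat]

lemma boundaryFold_circleExp_of_mem_top {t : ℝ} (ht : t ∈ Icc (π / 4) (3 * π / 4)) :
    boundaryFold (Circle.exp t) = Circle.exp (2 * t) := by
  have hpi := pi_pos
  rw [boundaryFold_of_im_pos, ← Circle.exp_natCast_mul, Nat.cast_ofNat]
  rw [Circle.coe_exp, Complex.exp_ofReal_mul_I_im]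
  exact sin_pos_of_pos_of_lt_pi (by linarith [ht.1]) (by linarith [ht.2])

lemma re_circleExp_sq_nonneg_of_mem_side {t : ℝ} (ht : t ∈ Icc (-(π / 4)) (π / 4)) :
    0 ≤ ((Circle.exp t ^ 2 : Circle) : ℂ).re := by
  rw [re_circleExp_sq]
  exact cos_nonneg_of_mem_Icc ⟨by linarith [ht.1], by linarith [ht.2]⟩

lemma re_circleExp_sq_nonpos_of_mem_top {t : ℝ} (ht : t ∈ Icc (π / 4) (3 * π / 4)) :
    ((Circle.exp t ^ 2 : Circle) : ℂ).re ≤ 0 := by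
  rw [re_circleExp_sq]
  exact cos_nonpos_of_pi_div_two_le_of_le (by linarith [ht.1]) (by linarith [ht.2])

lemma re_circleExp_sq_nonpos_of_mem_bottom {t : ℝ} (ht : t ∈ Icc (5 * π / 4) (7 * π / 4)) :
    ((Circle.exp t ^ 2 : Circle) : ℂ).re ≤ 0 := by
  rw [re_circleExp_sq, ← cos_sub_two_pi]
  exact cos_nonpos_of_pi_div_two_le_of_le (by linarith [ht.1]) (by linarith [ht.2])

lemma boundaryFold_circleExp_of_mem_bottom {t : ℝ} (ht : t ∈ Icc (5 * π / 4) (7 * π / 4)) :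
    boundaryFold (Circle.exp t) = Circle.exp (5 * π - 2 * t) := by
  have hpi := pi_pos
  have hsin : (Circle.exp t : ℂ).im ≤ 0 := by
    rw [Circle.coe_exp, Complex.exp_ofReal_mul_I_im, ← sin_sub_two_pi]
    exact sin_nonpos_of_nonpos_of_neg_pi_le (by linarith [ht.2]) (by linarith [ht.1])
  rw [boundaryFold_of_im_nonpos hsin, absRe_of_nonpos (re_circleExp_sq_nonpos_of_mem_bottom ht),
    ← Circle.exp_natCast_mul, show 5 * π - 2 * t = π + -(2 * t) + 2 * π + 2 * π by ring,
    Circle.exp_add_two_pi, Circle.exp_add_two_pi, Circle.exp_add, circleExp_pi, Circle.exp_neg,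
    Nat.cast_ofNat, neg_one_mul]

lemma re_neg_inv (z : Circle) : ((-z⁻¹ : Circle) : ℂ).re = -(z : ℂ).re := by
  rw [Circle.coe_neg, Circle.coe_inv_eq_conj, Complex.neg_re, Complex.conj_re]

lemma re_absRe_nonneg (z : Circle) : 0 ≤ (absRe z : ℂ).re := by
  obtain h | h := le_total 0 (z : ℂ).re
  · rwa [absRe_of_nonneg h]
  · rw [absRe_of_nonpos h, re_neg_inv]
    exact neg_nonneg.2 h

lemma absRe_boundaryFold (u : Circle) : absRe (boundaryFold u) = absRe (u ^ 2) := by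
  obtain h | h := le_or_gt (u : ℂ).im 0
  · rw [boundaryFold_of_im_nonpos h, absRe_of_nonneg (re_absRe_nonneg _)]
  · rw [boundaryFold_of_im_pos h]

lemma re_sq_nonneg_of_im_eq_zero {u : Circle} (hu : (u : ℂ).im = 0) :
    0 ≤ ((u ^ 2 : Circle) : ℂ).re := by
  obtain rfl | rfl := eq_one_or_eq_neg_one_of_im_eq_zero hu <;> simp

lemma boundaryFold_neg_ne {u : Circle} (hu : ((u ^ 2 : Circle) : ℂ).re < 0) :
    boundaryFold (-u) ≠ boundaryFold u := by
  have hne {v : Circle} (hv : ((v ^ 2 : Circle) : ℂ).re < 0) (him : 0 < (v : ℂ).im) :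
      boundaryFold (-v) ≠ boundaryFold v := fun h => by
    have him_neg : ((-v : Circle) : ℂ).im ≤ 0 := by
      rw [Circle.coe_neg, Complex.neg_im]
      exact neg_nonpos.2 him.le
    rw [boundaryFold_of_im_nonpos him_neg, boundaryFold_of_im_pos him] at h
    exact hv.not_ge (h ▸ re_absRe_nonneg _)
  obtain h | h | h := lt_trichotomy 0 (u : ℂ).im
  · exact hne hu h
  · exact absurd hu (re_sq_nonneg_of_im_eq_zero h.symm).not_gt
  · have := hne (v := -u) (by rwa [neg_sq]) (by simpa using h)
    rw [neg_neg] at this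
    exact this.symm

lemma eq_or_eq_neg_of_boundaryFold_eq {u v : Circle} (hu : ((u ^ 2 : Circle) : ℂ).re ≤ 0)
    (hv : ((v ^ 2 : Circle) : ℂ).re ≤ 0) (h : boundaryFold u = boundaryFold v) :
    u = v ∨ 0 ≤ ((u ^ 2 : Circle) : ℂ).re ∧ v = -u := by
  have hsq : v ^ 2 = u ^ 2 := by
    have := congrArg absRe h
    rw [absRe_boundaryFold, absRe_boundaryFold, absRe_of_nonpos hu, absRe_of_nonpos hv] at this
    simpa using this.symm
  obtain hvu | hvu := sq_eq_sq_iff_eq_or_eq_neg.1 (congrArg ((↑) : Circle → ℂ) hsq)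
  · exact .inl (Circle.ext hvu.symm)
  · obtain rfl : v = -u := Circle.ext hvu
    exact .inr ⟨not_lt.1 fun hlt => boundaryFold_neg_ne hlt h.symm, rfl⟩

lemma exists_sq_eq_and_im_nonneg (z : Circle) : ∃ u : Circle, u ^ 2 = z ∧ 0 ≤ (u : ℂ).im := by
  obtain ⟨u, rfl⟩ : ∃ u : Circle, u ^ 2 = z := ⟨Circle.exp (Complex.arg z / 2), by
    rw [← Circle.exp_natCast_mul, Nat.cast_ofNat, mul_div_cancel₀ _ two_ne_zero, Circle.exp_arg]⟩
  obtain h | h := le_total 0 (u : ℂ).im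
  · exact ⟨u, rfl, h⟩
  · exact ⟨-u, neg_sq u, by simpa using h⟩

lemma exists_boundaryFold_eq (z : Circle) :
    ∃ u : Circle, ((u ^ 2 : Circle) : ℂ).re ≤ 0 ∧ boundaryFold u = z := by
  obtain h | h := lt_or_ge (z : ℂ).re 0
  · obtain ⟨u, rfl, hu⟩ := exists_sq_eq_and_im_nonneg z
    exact ⟨u, h.le, boundaryFold_of_im_pos
      (hu.lt_of_ne fun him => h.not_ge (re_sq_nonneg_of_im_eq_zero him.symm))⟩
  · obtain ⟨u, hu, him⟩ := exists_sq_eq_and_im_nonneg (-z⁻¹)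
    have hre : (((-u) ^ 2 : Circle) : ℂ).re ≤ 0 := by
      rw [neg_sq, hu, re_neg_inv]
      exact neg_nonpos.2 h
    refine ⟨-u, hre, ?_⟩
    rw [boundaryFold_of_im_nonpos (by simpa using him), absRe_of_nonpos hre, neg_sq, hu]
    simp

/-- The quotient of `boundaryFold u` by `u` runs from `exp (-π / 4)` to `exp (5 * π / 4)` and back,
so that `boundaryFold` has degree one. -/
lemma boundaryFold_ne_exp_mul (u : Circle) : boundaryFold u ≠ Circle.exp (-(π / 2)) * u := by
  have hexp : (Circle.exp (-(π / 2)) : ℂ) = -Complex.I := by simp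
  have hnorm : (u : ℂ).re ^ 2 + (u : ℂ).im ^ 2 = 1 := by
    simpa [Complex.normSq_apply, sq] using Circle.normSq_coe u
  have hsq_ne (h : u ^ 2 = Circle.exp (-(π / 2)) * u) : (u : ℂ) = -Complex.I := by
    rw [sq, mul_left_inj] at h
    rw [h, hexp]
  intro h
  obtain him | him := lt_or_ge 0 (u : ℂ).im
  · rw [boundaryFold_of_im_pos him] at h
    norm_num [hsq_ne h] at him
  obtain hre | hre := le_total 0 ((u ^ 2 : Circle) : ℂ).re
  · rw [boundaryFold_eq_sq hre] at h
    norm_num [hsq_ne h] at hre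
  · rw [boundaryFold_of_im_nonpos him, absRe_of_nonpos hre] at h
    have hcube : Circle.exp (-(π / 2)) * u ^ 3 = -1 := by
      rw [pow_succ', ← mul_assoc, ← h, neg_mul, inv_mul_cancel]
    have hcube_re : (u : ℂ).im * (3 * (u : ℂ).re ^ 2 - (u : ℂ).im ^ 2) = -1 := by
      have := congrArg (fun z : Circle => (z : ℂ).re) hcube
      simp only [Circle.coe_mul, hexp, Complex.mul_re, Complex.mul_im, pow_succ,
        pow_zero, Complex.neg_re, Complex.neg_im, Complex.I_re, Complex.I_im, Circle.coe_neg,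
        Circle.coe_one, Complex.one_re, Complex.one_im] at this
      linear_combination this
    have hre_le : (u : ℂ).re ^ 2 ≤ (u : ℂ).im ^ 2 := by simpa [sq] using hre
    have hroot : ((u : ℂ).im - 1) * (2 * (u : ℂ).im + 1) ^ 2 = 0 := by
      linear_combination 3 * (u : ℂ).im * hnorm - hcube_re
    have : (u : ℂ).im = -(1 / 2) := by
      obtain h | h := mul_eq_zero.1 hroot
      · linarith
      · linarith [pow_eq_zero_iff two_ne_zero |>.1 h]
    nlinarith

end BoundaryFold

section Annulus

open Real Bouquet

/-- The periods `x` and `y` of the boundary circles of the punctured Möbius band satisfy the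
relation of its fundamental group: `l₀` and `l₁` are coordinates along the inner and the outer
circle of the annulus with total period `κ`, the sides of the outer circle are identified
antipodally, and `lψ` is the coordinate along the boundary circle made of the two remaining arcs. -/
lemma sq_eq_conj_mul_conj_of_boundary_periods {G : Type*} [Group G] {l₀ l₁ lφ lψ : ℝ → G}
    {x y κ k ρ g h : G} (hφ : ∀ t, lφ (t + 2 * π) = x * lφ t) (hψ : ∀ t, lψ (t + 2 * π) = y * lψ t)
    (hl₀ : ∀ t, l₀ (t + 2 * π) = κ * l₀ t) (hl₁ : ∀ t, l₁ (t + 2 * π) = κ * l₁ t)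
    (hk : ∀ t, l₀ t = k * lφ t) (hρ : ∀ t ∈ Icc (-(π / 4)) (π / 4), l₁ (t + π) = ρ * l₁ t)
    (hg : ∀ t ∈ Icc (π / 4) (3 * π / 4), l₁ t = g * lψ (2 * t))
    (hh : ∀ t ∈ Icc (5 * π / 4) (7 * π / 4), l₁ t = h * lψ (5 * π - 2 * t)) :
    ρ ^ 2 = (k * x * k⁻¹) * ((ρ⁻¹ * g) * y * (ρ⁻¹ * g)⁻¹) := by
  have hpi := pi_pos
  have hκ : κ = k * x * k⁻¹ := by
    have := hl₀ 0
    rw [hk, hk, hφ, ← mul_assoc, ← mul_assoc, mul_left_inj] at this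
    exact eq_mul_inv_of_mul_eq this.symm
  have hneg : g * lψ (3 * π / 2) = ρ * l₁ (-(π / 4)) := by
    rw [← hρ _ ⟨le_rfl, by linarith⟩, show -(π / 4) + π = 3 * π / 4 by ring,
      hg _ ⟨by linarith, le_rfl⟩]
    ring_nf
  have hneg' : h * lψ (3 * π / 2) = κ * l₁ (-(π / 4)) := by
    rw [← hl₁, show -(π / 4) + 2 * π = 7 * π / 4 by ring, hh _ ⟨by linarith, le_rfl⟩]
    ring_nf
  have hpos : ρ * (g * lψ (π / 2)) = h * (y * lψ (π / 2)) := by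
    have := hρ (π / 4) ⟨by linarith, le_rfl⟩
    rw [show π / 4 + π = 5 * π / 4 by ring, hh _ ⟨le_rfl, by linarith⟩,
      hg _ ⟨le_rfl, by linarith⟩, show 5 * π - 2 * (5 * π / 4) = π / 2 + 2 * π by ring, hψ] at this
    rw [this]
    ring_nf
  have hh_eq : h = κ * ρ⁻¹ * g := by
    rw [← mul_left_inj (lψ (3 * π / 2)), hneg', mul_assoc, hneg]
    group
  rw [← mul_assoc, ← mul_assoc, mul_left_inj, hh_eq] at hpos
  calc ρ ^ 2 = ρ * g * g⁻¹ * ρ := by rw [mul_inv_cancel_right, sq]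
    _ = κ * ((ρ⁻¹ * g) * y * (ρ⁻¹ * g)⁻¹) := by rw [hpos]; group
    _ = _ := by rw [hκ]

variable {ι : Type*} [Finite ι] [DecidableEq ι]

local instance : TopologicalSpace (FreeGroup ι) := ⊥

local instance : DiscreteTopology (FreeGroup ι) := ⟨rfl⟩

/-- The punctured Möbius band is the annulus `Circle × unitInterval` with `u` and `-u` identified in
the two arcs `0 ≤ re (u ^ 2)` of its outer boundary. The inner boundary circle remains one, and
`boundaryFold` parametrizes the other. -/
theorem nullhomotopic_or_of_punctured_moebius {i j : ι} (hij : i ≠ j) {φ ψ : C(Circle, Circle)}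
    (R : C(Circle × unitInterval, Bouquet ι)) (hinner : ∀ u, R (u, 0) = incl i (φ u))
    (hside : ∀ u : Circle, 0 ≤ ((u ^ 2 : Circle) : ℂ).re → R (-u, 1) = R (u, 1))
    (houter : ∀ u : Circle, ((u ^ 2 : Circle) : ℂ).re ≤ 0 →
      R (u, 1) = incl j (ψ (boundaryFold u))) :
    φ.Nullhomotopic ∨ ψ.Nullhomotopic := by
  obtain ⟨lφ, m, hlφ, hm, hφ⟩ := exists_isPotential_incl_comp_exp i φ
  obtain ⟨lψ, n, hlψ, hn, hψ⟩ := exists_isPotential_incl_comp_exp j ψ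
  let strip : C(ℝ × ℝ, Circle × unitInterval) :=
    Circle.exp.prodMap ⟨projIcc 0 1 zero_le_one, continuous_projIcc⟩
  have hstrip_zero (t : ℝ) : strip (t, 0) = (Circle.exp t, 0) := by simp [strip]
  have hstrip_one (t : ℝ) : strip (t, 1) = (Circle.exp t, 1) := by simp [strip]
  have hstrip_period (p : ℝ × ℝ) : strip (p.1 + 2 * π, p.2) = strip p :=
    Prod.ext (Circle.exp_add_two_pi _) rfl
  obtain ⟨l, hl⟩ := GaugeAtlas.exists_isPotential (atlas ι) (R.comp strip)
  obtain ⟨κ, hκ⟩ := hl.exists_eq_mul_on hl isPreconnected_univ continuous_id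
    (ψ := fun p => (p.1 + 2 * π, p.2)) (by fun_prop) fun p _ => congrArg R (hstrip_period p)
  obtain ⟨k, hk⟩ := hlφ.exists_eq_mul_on hl isPreconnected_univ continuous_id
    (ψ := fun t => (t, 0)) (by fun_prop) fun t _ => (congrArg R (hstrip_zero t)).trans (hinner _)
  obtain ⟨ρ, hρ⟩ := hl.exists_eq_mul_on hl (s := Icc (-(π / 4)) (π / 4)) isPreconnected_Icc
    (φ := fun t => (t, 1)) (ψ := fun t => (t + π, 1)) (by fun_prop) (by fun_prop) fun t ht => by
      simpa [hstrip_one, circleExp_pi] using hside _ (re_circleExp_sq_nonneg_of_mem_side ht)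
  obtain ⟨g, hg⟩ := hlψ.exists_eq_mul_on hl (s := Icc (π / 4) (3 * π / 4)) isPreconnected_Icc
    (φ := fun t => 2 * t) (ψ := fun t => (t, 1)) (by fun_prop) (by fun_prop) fun t ht => by
      simpa [hstrip_one, boundaryFold_circleExp_of_mem_top ht] using
        houter _ (re_circleExp_sq_nonpos_of_mem_top ht)
  obtain ⟨h, hh⟩ := hlψ.exists_eq_mul_on hl (s := Icc (5 * π / 4) (7 * π / 4)) isPreconnected_Icc
    (φ := fun t => 5 * π - 2 * t) (ψ := fun t => (t, 1)) (by fun_prop) (by fun_prop) fun t ht => by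
      simpa only [ContinuousMap.comp_apply, hstrip_one, boundaryFold_circleExp_of_mem_bottom ht]
        using houter _ (re_circleExp_sq_nonpos_of_mem_bottom ht)
  have hrel := sq_eq_conj_mul_conj_of_boundary_periods hm hn (fun t => hκ (t, 0) trivial)
    (fun t => hκ (t, 1) trivial) (fun t => hk t trivial) hρ hg hh
  exact (eq_zero_of_sq_eq_conj_mul_conj hij hrel).imp hφ hψ

end Annulus

section MoebiusBand

open Real

lemma rel_iff_eq_or_eq_reflection {p q : Sq} : rel p q ↔
    (p : ℝ × ℝ) = q ∨
      ((p : ℝ × ℝ).1 = 0 ∨ (p : ℝ × ℝ).1 = 1) ∧ (q : ℝ × ℝ) = (1 - p.1.1, -p.1.2) := by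
  simp only [rel, Prod.ext_iff]
  grind

/-- The coordinates of the square, seen in a solid torus: a segment that makes a half turn while its
midpoint goes once around. -/
noncomputable def solidTorusCoord (p : ℝ × ℝ) : Circle × ℂ :=
  (Circle.exp (2 * π * p.1), p.2 * Circle.exp (π * p.1))

lemma rel_iff_solidTorusCoord_eq {p q : Sq} :
    rel p q ↔ solidTorusCoord p = solidTorusCoord q := by
  obtain ⟨⟨x, y⟩, ⟨hx0, hx1⟩, hy⟩ := p
  obtain ⟨⟨x', y'⟩, ⟨hx0', hx1'⟩, hy'⟩ := q
  simp only at hx0 hx1 hx0' hx1'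
  simp only [rel, solidTorusCoord, Prod.mk.injEq]
  constructor
  · rintro (⟨rfl, rfl⟩ | ⟨rfl, rfl, rfl⟩ | ⟨rfl, rfl, rfl⟩) <;> simp
  · rintro ⟨hexp, hy⟩
    obtain ⟨n, hn⟩ := Circle.exp_eq_exp.1 hexp
    have hx : x = x' + n := mul_left_cancel₀ two_pi_pos.ne' (hn.trans (by ring))
    have hn_le : n ≤ 1 := by exact_mod_cast (by linarith : (n : ℝ) ≤ 1)
    have hn_ge : -1 ≤ n := by exact_mod_cast (by linarith : (-1 : ℝ) ≤ n)
    interval_cases n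
    · obtain ⟨rfl, rfl⟩ : x = 0 ∧ x' = 1 := by
        push_cast at hx
        constructor <;> linarith
      refine .inr (.inl ⟨rfl, rfl, ?_⟩)
      simpa [← Complex.ofReal_neg] using hy
    · obtain rfl : x = x' := by simpa using hx
      exact .inl ⟨rfl, by simpa using hy⟩
    · obtain ⟨rfl, rfl⟩ : x = 1 ∧ x' = 0 := by
        push_cast at hx
        constructor <;> linarith
      refine .inr (.inr ⟨rfl, rfl, ?_⟩)
      simpa [← Complex.ofReal_neg] using hy.symm

/-- The embedding of the Möbius band in the solid torus. -/
noncomputable def solidTorusEmbedding : M → Circle × ℂ :=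
  Quot.lift (solidTorusCoord ·) fun _ _ => rel_iff_solidTorusCoord_eq.1

lemma continuous_solidTorusEmbedding : Continuous solidTorusEmbedding :=
  continuous_quot_lift _ (by unfold solidTorusCoord; fun_prop)

lemma qm_eq_qm_iff {p q : Sq} : qm p = qm q ↔ rel p q :=
  ⟨fun h => rel_iff_solidTorusCoord_eq.2 (congrArg solidTorusEmbedding h), Quot.sound⟩

lemma injective_solidTorusEmbedding : Function.Injective solidTorusEmbedding :=
  Quot.ind fun _ => Quot.ind fun _ h => qm_eq_qm_iff.2 (rel_iff_solidTorusCoord_eq.2 h)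

lemma qm_mem_image_iff {S : Set Sq} (hS : ∀ p q, rel p q → p ∈ S → q ∈ S) {p : Sq} :
    qm p ∈ qm '' S ↔ p ∈ S :=
  ⟨fun ⟨_, hq, hqp⟩ => hS _ _ (qm_eq_qm_iff.1 hqp) hq, mem_image_of_mem qm⟩

instance : T2Space M :=
  .of_injective_continuous injective_solidTorusEmbedding continuous_solidTorusEmbedding

section Polar

/-- The point in the direction of `u` on the unit sphere of `ℝ × ℝ`, which is the boundary of a
square since `ℝ × ℝ` carries the maximum norm. -/
noncomputable def squareDir (u : Circle) : ℝ × ℝ :=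
  ‖Complex.equivRealProdCLM u‖⁻¹ • Complex.equivRealProdCLM u

lemma equivRealProdCLM_coe_ne_zero (u : Circle) : Complex.equivRealProdCLM u ≠ 0 :=
  EmbeddingLike.map_ne_zero_iff.2 u.coe_ne_zero

lemma squareDir_neg (u : Circle) : squareDir (-u) = -squareDir u := by
  rw [squareDir, Circle.coe_neg, map_neg, norm_neg, smul_neg, squareDir]

lemma continuous_squareDir : Continuous squareDir := by
  have h : Continuous fun u : Circle => Complex.equivRealProdCLM u := by fun_prop
  exact (h.norm.inv₀ fun u => norm_ne_zero_iff.2 (equivRealProdCLM_coe_ne_zero u)).smul h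

lemma norm_squareDir (u : Circle) : ‖squareDir u‖ = 1 :=
  norm_smul_inv_norm (𝕜 := ℝ) (equivRealProdCLM_coe_ne_zero u)

lemma injective_squareDir : Function.Injective squareDir := fun u v h => by
  have hray := (sameRay_iff_inv_norm_smul_eq_of_ne (equivRealProdCLM_coe_ne_zero u)
    (equivRealProdCLM_coe_ne_zero v)).2 h
  exact Circle.ext (((SameRay.sameRay_map_iff Complex.equivRealProdCLM.toLinearEquiv).1
    hray).eq_of_norm_eq ((Circle.norm_coe u).trans (Circle.norm_coe v).symm))

lemma exists_squareDir_eq {d : ℝ × ℝ} (hd : ‖d‖ = 1) : ∃ u, squareDir u = d := by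
  obtain ⟨z, rfl⟩ := Complex.equivRealProdCLM.surjective d
  have hz : Complex.equivRealProdCLM z ≠ 0 := norm_ne_zero_iff.1 (hd ▸ one_ne_zero)
  refine ⟨Circle.exp z.arg, ?_⟩
  have hray : SameRay ℝ (Circle.exp z.arg : ℂ) z := by
    conv_rhs => rw [← Complex.norm_mul_exp_arg_mul_I z, ← Circle.coe_exp, ← Complex.real_smul]
    exact SameRay.sameRay_nonneg_smul_right _ (norm_nonneg z)
  have hnormalize := (sameRay_iff_inv_norm_smul_eq_of_ne (equivRealProdCLM_coe_ne_zero _) hz).1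
    ((SameRay.sameRay_map_iff Complex.equivRealProdCLM.toLinearEquiv).2 hray)
  rw [squareDir, hnormalize, hd, inv_one, one_smul]

lemma abs_squareDir_fst_eq_one_iff {u : Circle} :
    |(squareDir u).1| = 1 ↔ 0 ≤ ((u ^ 2 : Circle) : ℂ).re := by
  have hpos := norm_pos_iff.2 (equivRealProdCLM_coe_ne_zero u)
  rw [squareDir, Prod.smul_fst, smul_eq_mul, abs_mul, abs_inv, abs_norm, inv_mul_eq_one₀ hpos.ne',
    Prod.norm_def]
  simp [sq, abs_le_iff_mul_self_le]

lemma abs_squareDir_snd_eq_one_iff {u : Circle} :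
    |(squareDir u).2| = 1 ↔ ((u ^ 2 : Circle) : ℂ).re ≤ 0 := by
  have hpos := norm_pos_iff.2 (equivRealProdCLM_coe_ne_zero u)
  rw [squareDir, Prod.smul_snd, smul_eq_mul, abs_mul, abs_inv, abs_norm, inv_mul_eq_one₀ hpos.ne',
    Prod.norm_def]
  simp [sq, abs_le_iff_mul_self_le]

lemma norm_eq_one_iff {d : ℝ × ℝ} :
    ‖d‖ = 1 ↔ (|d.1| ≤ 1 ∧ |d.2| ≤ 1) ∧ (|d.1| = 1 ∨ |d.2| = 1) := by
  simp only [Prod.norm_def, Real.norm_eq_abs]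
  grind

/-- The rectangles around the removed disc, parametrized by direction. The one at level `0` is the
boundary of the disc (a square in the maximum norm) and the one at level `1` is the boundary of
`Sq`. -/
noncomputable def rectangle (p : Circle × unitInterval) : ℝ × ℝ :=
  (1 / 2 + (1 + p.2) / 4 * (squareDir p.1).1, (1 + 3 * p.2) / 4 * (squareDir p.1).2)

/-- The level of the rectangle through a point, which is negative inside the removed disc. -/
noncomputable def level (p : ℝ × ℝ) : ℝ := max (4 * |p.1 - 1 / 2| - 1) ((4 * |p.2| - 1) / 3)

lemma level_eq_iff {d : ℝ × ℝ} {s : ℝ} (hs : 0 ≤ s) :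
    level (1 / 2 + (1 + s) / 4 * d.1, (1 + 3 * s) / 4 * d.2) = s ↔ ‖d‖ = 1 := by
  have h1 : 0 < 1 + s := by positivity
  have h3 : 0 < (1 + 3 * s) / 3 := by positivity
  have hlevel : level (1 / 2 + (1 + s) / 4 * d.1, (1 + 3 * s) / 4 * d.2) =
      s + max ((1 + s) * (|d.1| - 1)) ((1 + 3 * s) / 3 * (|d.2| - 1)) := by
    rw [← max_add_add_left, level, add_sub_cancel_left, abs_mul, abs_mul,
      abs_of_pos (by positivity : 0 < (1 + s) / 4),
      abs_of_pos (by positivity : 0 < (1 + 3 * s) / 4)]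
    ring_nf
  rw [hlevel, add_eq_left, Prod.norm_def, Real.norm_eq_abs, Real.norm_eq_abs, max_eq_iff,
    max_eq_iff]
  simp only [mul_eq_zero_iff_left h1.ne', mul_eq_zero_iff_left h3.ne', sub_eq_zero]
  refine or_congr (and_congr_right fun h => ?_) (and_congr_right fun h => ?_)
  · rw [h, sub_self, mul_zero, ← smul_eq_mul, smul_nonpos_iff_nonpos_of_pos_left h3, sub_nonpos]
  · rw [h, sub_self, mul_zero, ← smul_eq_mul, smul_nonpos_iff_nonpos_of_pos_left h1, sub_nonpos]

lemma level_rectangle (p : Circle × unitInterval) : level (rectangle p) = p.2 :=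
  (level_eq_iff p.2.2.1).2 (norm_squareDir p.1)

lemma injective_rectangle : Function.Injective rectangle := fun p q h => by
  have hs : p.2 = q.2 := Subtype.ext (by rw [← level_rectangle, h, level_rectangle])
  have hq := q.2.2.1
  refine Prod.ext (injective_squareDir ?_) hs
  simp only [rectangle, hs, Prod.mk.injEq, add_right_inj] at h
  exact Prod.ext (mul_left_cancel₀ (by positivity) h.1) (mul_left_cancel₀ (by positivity) h.2)

lemma rectangle_mem_Sq (p : Circle × unitInterval) : rectangle p ∈ Sq := by
  obtain ⟨u, s, hs0, hs1⟩ := p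
  obtain ⟨⟨h1, h2⟩, -⟩ := norm_eq_one_iff.1 (norm_squareDir u)
  rw [abs_le] at h1 h2
  refine ⟨⟨?_, ?_⟩, ?_, ?_⟩ <;> simp only [rectangle] <;> nlinarith

lemma level_le_one {p : ℝ × ℝ} (hp : p ∈ Sq) : level p ≤ 1 := by
  have hx : |p.1 - 1 / 2| ≤ 1 / 2 := abs_le.2 ⟨by linarith [hp.1.1], by linarith [hp.1.2]⟩
  have hy : |p.2| ≤ 1 := abs_le.2 hp.2
  exact max_le (by linarith) (by linarith)

lemma exists_rectangle_eq {p : ℝ × ℝ} (hp : p ∈ Sq) (h : 0 ≤ level p) : ∃ a, rectangle a = p := by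
  let d : ℝ × ℝ := (4 / (1 + level p) * (p.1 - 1 / 2), 4 / (1 + 3 * level p) * p.2)
  have hp_eq : (1 / 2 + (1 + level p) / 4 * d.1, (1 + 3 * level p) / 4 * d.2) = p :=
    Prod.ext (by simp only [d]; field_simp; ring) (by simp only [d]; field_simp)
  obtain ⟨u, hu⟩ := exists_squareDir_eq ((level_eq_iff h).1 (congrArg level hp_eq))
  exact ⟨(u, ⟨level p, h, level_le_one hp⟩), by rw [rectangle, hu, hp_eq]⟩

lemma continuous_rectangle : Continuous rectangle := by
  have hdir : Continuous fun p : Circle × unitInterval => squareDir p.1 :=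
    continuous_squareDir.comp continuous_fst
  exact (continuous_const.add (.mul (by fun_prop) hdir.fst)).prodMk (.mul (by fun_prop) hdir.snd)

lemma mem_Bdisc_iff {p : ℝ × ℝ} : p ∈ Bdisc ↔ level p < 0 := by
  rw [Bdisc, Metric.mem_ball, Prod.dist_eq, Real.dist_eq, Real.dist_eq, level, max_lt_iff,
    max_lt_iff, sub_zero]
  constructor <;> rintro ⟨hx, hy⟩ <;> constructor <;> linarith

lemma mem_Scirc_iff {p : ℝ × ℝ} : p ∈ Scirc ↔ level p = 0 := by
  rw [Scirc, Metric.mem_sphere, Prod.dist_eq, Real.dist_eq, Real.dist_eq, level, max_eq_iff,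
    max_eq_iff, sub_zero]
  grind

lemma level_eq_of_rel {p q : Sq} (h : rel p q) : level p = level q := by
  obtain h | ⟨-, h⟩ := rel_iff_eq_or_eq_reflection.1 h
  · rw [h]
  · rw [h, level, level, abs_neg, ← abs_neg (_ - _)]
    ring_nf

lemma abs_snd_eq_of_rel {p q : Sq} (h : rel p q) : |p.1.2| = |q.1.2| := by
  obtain h | ⟨-, h⟩ := rel_iff_eq_or_eq_reflection.1 h
  · rw [h]
  · rw [h, abs_neg]

lemma qm_mem_Xset_iff {p : Sq} : qm p ∈ Xset ↔ 0 ≤ level p := by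
  rw [← not_lt, ← mem_Bdisc_iff]
  refine not_congr (qm_mem_image_iff fun p q h hp => ?_)
  simpa only [mem_ofPred_eq, mem_Bdisc_iff, level_eq_of_rel h] using hp

/-- Polar coordinates on the punctured Möbius band, centred at the removed disc. -/
noncomputable def polar : C(Circle × unitInterval, X) where
  toFun p := ⟨qm ⟨rectangle p, rectangle_mem_Sq p⟩,
    qm_mem_Xset_iff.2 ((level_rectangle p).symm ▸ p.2.2.1)⟩
  continuous_toFun := (continuous_quot_mk.comp (continuous_rectangle.subtype_mk _)).subtype_mk _

lemma polar_surjective : Function.Surjective polar := by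
  rintro ⟨⟨p⟩, hp⟩
  obtain ⟨a, ha⟩ := exists_rectangle_eq p.2 (qm_mem_Xset_iff.1 hp)
  exact ⟨a, Subtype.ext (congrArg qm (Subtype.ext ha))⟩

instance inst_s6 : CompactSpace X := polar_surjective.compactSpace polar.continuous

lemma isQuotientMap_polar : Topology.IsQuotientMap polar :=
  .of_surjective_continuous polar_surjective polar.continuous

lemma abs_mul_eq_one_iff {a b : ℝ} (ha : 0 ≤ a) (ha1 : a ≤ 1) (hb : |b| ≤ 1) :
    |a * b| = 1 ↔ a = 1 ∧ |b| = 1 := by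
  rw [abs_mul, abs_of_nonneg ha]
  refine ⟨fun h => ?_, fun ⟨h, h'⟩ => by rw [h, h', one_mul]⟩
  have : a = 1 := by nlinarith [abs_nonneg b]
  exact ⟨this, by rwa [this, one_mul] at h⟩

lemma rectangle_fst_eq_zero_or_one_iff {p : Circle × unitInterval} :
    (rectangle p).1 = 0 ∨ (rectangle p).1 = 1 ↔ p.2 = 1 ∧ 0 ≤ ((p.1 ^ 2 : Circle) : ℂ).re := by
  obtain ⟨u, s, hs0, hs1⟩ := p
  have hx : (rectangle (u, ⟨s, hs0, hs1⟩)).1 = 1 / 2 + 1 / 2 * ((1 + s) / 2 * (squareDir u).1) := by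
    simp only [rectangle]
    ring
  have h := abs_mul_eq_one_iff (a := (1 + s) / 2) (by linarith) (by linarith)
    (norm_eq_one_iff.1 (norm_squareDir u)).1.1
  have hiff {z : ℝ} : 1 / 2 + 1 / 2 * z = 0 ∨ 1 / 2 + 1 / 2 * z = 1 ↔ |z| = 1 := by
    rw [abs_eq zero_le_one, or_comm]
    refine or_congr ?_ ?_ <;> constructor <;> intro hz <;> linarith
  rw [hx, hiff, h, ← abs_squareDir_fst_eq_one_iff, ← Icc.coe_eq_one]
  refine and_congr_left fun _ => ?_
  constructor <;> intro hs <;> linarith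

lemma abs_rectangle_snd_eq_one_iff {p : Circle × unitInterval} :
    |(rectangle p).2| = 1 ↔ p.2 = 1 ∧ ((p.1 ^ 2 : Circle) : ℂ).re ≤ 0 := by
  obtain ⟨u, s, hs0, hs1⟩ := p
  have h := abs_mul_eq_one_iff (a := (1 + 3 * s) / 4) (by linarith) (by linarith)
    (norm_eq_one_iff.1 (norm_squareDir u)).1.2
  rw [rectangle, h, ← abs_squareDir_snd_eq_one_iff, ← Icc.coe_eq_one]
  refine and_congr_left fun _ => ?_
  constructor <;> intro hs <;> linarith

lemma rectangle_neg_one (u : Circle) :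
    rectangle (-u, 1) = (1 - (rectangle (u, 1)).1, -(rectangle (u, 1)).2) := by
  simp only [rectangle, squareDir_neg, Prod.fst_neg, Prod.snd_neg, Icc.coe_one]
  ring_nf

lemma polar_eq_polar_iff {p q : Circle × unitInterval} : polar p = polar q ↔
    p = q ∨ p.2 = 1 ∧ 0 ≤ ((p.1 ^ 2 : Circle) : ℂ).re ∧ q = (-p.1, 1) := by
  rw [← and_assoc, ← rectangle_fst_eq_zero_or_one_iff, Subtype.ext_iff]
  refine qm_eq_qm_iff.trans (rel_iff_eq_or_eq_reflection.trans
    (or_congr injective_rectangle.eq_iff (and_congr_right fun h => ?_)))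
  have hp : p = (p.1, 1) := Prod.ext rfl (rectangle_fst_eq_zero_or_one_iff.1 h).1
  rw [← injective_rectangle.eq_iff, rectangle_neg_one, ← hp]

lemma polar_neg_one {u : Circle} (hu : 0 ≤ ((u ^ 2 : Circle) : ℂ).re) :
    polar (-u, 1) = polar (u, 1) :=
  (polar_eq_polar_iff (p := (u, 1)) (q := (-u, 1)).2 (.inr ⟨rfl, hu, rfl⟩)).symm

lemma polar_preimage_compl_singleton {p : Circle × unitInterval} (hp : p.2 ≠ 1) :
    polar ⁻¹' {polar p}ᶜ = {p}ᶜ := by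
  ext q
  refine not_congr ⟨fun h => ?_, congrArg polar⟩
  obtain rfl | ⟨-, -, rfl⟩ := polar_eq_polar_iff.1 h
  · rfl
  · exact absurd rfl hp

lemma polar_mem_C1_iff {p : Circle × unitInterval} :
    polar p ∈ C1 ↔ p.2 = 1 ∧ ((p.1 ^ 2 : Circle) : ℂ).re ≤ 0 := by
  rw [← abs_rectangle_snd_eq_one_iff]
  refine Iff.trans ?_ (qm_mem_image_iff
    (p := ⟨rectangle p, rectangle_mem_Sq p⟩) (S := {q | |q.1.2| = 1}) fun p q h hp => ?_)
  · simp only [C1, polar, ← abs_eq zero_le_one]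
    exact exists_congr fun _ => and_comm
  · exact (abs_snd_eq_of_rel h).symm.trans hp

lemma polar_mem_C2_iff {p : Circle × unitInterval} : polar p ∈ C2 ↔ p.2 = 0 := by
  rw [← Icc.coe_eq_zero, ← level_rectangle]
  refine Iff.trans ?_ (qm_mem_image_iff
    (p := ⟨rectangle p, rectangle_mem_Sq p⟩) (S := {q | level q = 0}) fun p q h hp => ?_)
  · simp only [C2, polar, mem_Scirc_iff]
    exact exists_congr fun _ => and_comm
  · exact (level_eq_of_rel h).symm.trans hp

end Polar

section BoundaryCircles

/-- The boundary circle of the removed disc, parametrized by direction. -/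
noncomputable def innerCircleHomeo : Circle ≃ₜ C2 := by
  refine IsHomeomorph.homeomorph (fun u => ⟨polar (u, 0), polar_mem_C2_iff.2 rfl⟩)
    (isHomeomorph_iff_continuous_bijective.2 ⟨by fun_prop, fun u v h => ?_, fun ⟨x, hx⟩ => ?_⟩)
  · obtain h | ⟨h, -⟩ := polar_eq_polar_iff.1 (Subtype.ext_iff.1 h)
    · exact congrArg Prod.fst h
    · exact absurd h zero_ne_one
  · obtain ⟨⟨u, s⟩, rfl⟩ := polar_surjective x
    obtain rfl : s = 0 := polar_mem_C2_iff.1 hx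
    exact ⟨u, rfl⟩

lemma coe_innerCircleHomeo (u : Circle) : (innerCircleHomeo u : X) = polar (u, 0) := rfl

lemma factorsThrough_boundaryFold : Function.FactorsThrough
    (ContinuousMap.comp ⟨boundaryFold, continuous_boundaryFold⟩ .fst) polar := fun p q h => by
  obtain rfl | ⟨-, hp, rfl⟩ := polar_eq_polar_iff.1 h
  · rfl
  · exact (boundaryFold_eq_sq hp).trans ((neg_sq p.1).symm.trans
      (boundaryFold_eq_sq (by rwa [neg_sq])).symm)

/-- The extension of the parametrization of `C1` by `boundaryFold` to the whole surface, constant on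
radii. -/
noncomputable def fold : C(X, Circle) := isQuotientMap_polar.lift _ factorsThrough_boundaryFold

lemma fold_polar (p : Circle × unitInterval) : fold (polar p) = boundaryFold p.1 :=
  DFunLike.congr_fun (isQuotientMap_polar.lift_comp _ factorsThrough_boundaryFold) p

lemma isClosed_C1 : IsClosed C1 := by
  rw [← isQuotientMap_polar.isClosed_preimage]
  have : polar ⁻¹' C1 = {p | p.2 = 1} ∩ {p | ((p.1 ^ 2 : Circle) : ℂ).re ≤ 0} :=
    Set.ext fun p => polar_mem_C1_iff
  rw [this]
  exact (isClosed_eq (by fun_prop) (by fun_prop)).inter (isClosed_le (by fun_prop) (by fun_prop))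

lemma bijective_fold_C1 : Function.Bijective fun x : C1 => fold x := by
  constructor
  · rintro ⟨x, hx⟩ ⟨y, hy⟩ h
    obtain ⟨⟨u, s⟩, rfl⟩ := polar_surjective x
    obtain ⟨⟨v, t⟩, rfl⟩ := polar_surjective y
    obtain ⟨rfl, hu⟩ : s = 1 ∧ _ := polar_mem_C1_iff.1 hx
    obtain ⟨rfl, hv⟩ : t = 1 ∧ _ := polar_mem_C1_iff.1 hy
    simp only [fold_polar] at h
    refine Subtype.ext (polar_eq_polar_iff.2 ?_)
    obtain rfl | ⟨hu', rfl⟩ := eq_or_eq_neg_of_boundaryFold_eq hu hv h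
    · exact .inl rfl
    · exact .inr ⟨rfl, hu', rfl⟩
  · intro z
    obtain ⟨u, hu, rfl⟩ := exists_boundaryFold_eq z
    exact ⟨⟨polar (u, 1), polar_mem_C1_iff.2 ⟨rfl, hu⟩⟩, fold_polar _⟩

/-- The boundary circle of the Möbius band, made of two arcs of the outer circle. -/
noncomputable def outerCircleHomeo : C1 ≃ₜ Circle :=
  have : CompactSpace C1 := isCompact_iff_compactSpace.1 isClosed_C1.isCompact
  IsHomeomorph.homeomorph (fun x => fold x)
    (isHomeomorph_iff_continuous_bijective.2 ⟨by fun_prop, bijective_fold_C1⟩)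

lemma outerCircleHomeo_apply (x : C1) : outerCircleHomeo x = fold x := rfl

lemma outerCircleHomeo_symm_boundaryFold {u : Circle} (hu : ((u ^ 2 : Circle) : ℂ).re ≤ 0) :
    outerCircleHomeo.symm (boundaryFold u) = ⟨polar (u, 1), polar_mem_C1_iff.2 ⟨rfl, hu⟩⟩ :=
  outerCircleHomeo.symm_apply_eq.2 (fold_polar (u, 1)).symm

end BoundaryCircles

section Collapse

lemma mem_slitPlane_of_ne_neg_one {z : Circle} (hz : z ≠ -1) : (z : ℂ) ∈ Complex.slitPlane := by
  refine Complex.mem_slitPlane_iff_arg.2 ⟨fun h => hz ?_, z.coe_ne_zero⟩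
  rw [← Circle.exp_arg z, h, circleExp_pi]

lemma exists_eq_circleExp_of_ne {Y : Type*} [TopologicalSpace Y] {φ : C(Y, Circle)} {w : Circle}
    (hφ : ∀ y, φ y ≠ w) : ∃ h : C(Y, ℝ), ∀ y, φ y = Circle.exp (h y) := by
  refine ⟨⟨fun y => Complex.arg ↑(-w⁻¹ * φ y) + Complex.arg ↑(-w), ?_⟩, fun y => ?_⟩
  · refine Continuous.add (continuous_iff_continuousAt.2 fun y => ?_) continuous_const
    refine (Complex.continuousAt_arg (mem_slitPlane_of_ne_neg_one fun h => hφ y ?_)).comp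
      (f := fun y => ((-w⁻¹ * φ y : Circle) : ℂ)) (by fun_prop)
    rw [neg_mul, neg_inj, inv_mul_eq_one] at h
    exact h.symm
  · change φ y = Circle.exp (Complex.arg ↑(-w⁻¹ * φ y) + Complex.arg ↑(-w))
    rw [Circle.exp_add, Circle.exp_arg, Circle.exp_arg]
    simp

/-- The circle map `z ↦ -z` for `t = 0`, deformed to a map that is `1` away from `z = 1` for
`t = 1`. -/
noncomputable def pinch (t : ℝ) (z : Circle) : Circle :=
  -z * Circle.exp (-2 * Complex.arg (1 - t * z))

lemma pinch_zero (z : Circle) : pinch 0 z = -z := by simp [pinch]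

lemma pinch_one {z : Circle} (hz : z ≠ 1) : pinch 1 z = 1 := by
  have hsub : (1 - z : ℂ) ≠ 0 := sub_ne_zero.2 fun h => hz (Circle.ext h.symm)
  set e := Circle.exp (1 - z : ℂ).arg with he
  have hpolar : (‖(1 - z : ℂ)‖ : ℂ) * e = 1 - z := by
    rw [he, Circle.coe_exp, Complex.norm_mul_exp_arg_mul_I]
  have hpolar_conj : (‖(1 - z : ℂ)‖ : ℂ) * (e⁻¹ : Circle) = 1 - (z⁻¹ : Circle) := by
    simpa only [map_mul, map_sub, map_one, Complex.conj_ofReal, ← Circle.coe_inv_eq_conj] using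
      congrArg (starRingEnd ℂ) hpolar
  have hsq : e = -z * e⁻¹ := by
    refine Circle.ext (mul_left_cancel₀ (Complex.ofReal_ne_zero.2 (norm_ne_zero_iff.2 hsub)) ?_)
    rw [hpolar, Circle.coe_mul, mul_left_comm, hpolar_conj, mul_sub, ← Circle.coe_mul, neg_mul,
      mul_inv_cancel, Circle.coe_neg, Circle.coe_neg, Circle.coe_one]
    ring
  rw [pinch, Complex.ofReal_one, one_mul, neg_mul 2, two_mul, neg_add, Circle.exp_add,
    Circle.exp_neg, ← he, ← mul_assoc, ← hsq, mul_inv_cancel]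

lemma one_sub_mul_mem_slitPlane {t : ℝ} {z : Circle} (h0 : 0 ≤ t) (h1 : t ≤ 1)
    (h : t = 1 → z ≠ 1) : 1 - t * (z : ℂ) ∈ Complex.slitPlane := by
  obtain rfl | hlt := h1.eq_or_lt
  · by_cases him : (z : ℂ).im = 0
    · obtain rfl := (eq_one_or_eq_neg_one_of_im_eq_zero him).resolve_left (h rfl)
      norm_num [Complex.mem_slitPlane_iff]
    · exact .inr (by simpa using him)
  · refine .inl ?_
    have hre : (t * (z : ℂ)).re ≤ t := by
      refine (Complex.re_le_norm _).trans_eq ?_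
      rw [norm_mul, Circle.norm_coe, mul_one, Complex.norm_of_nonneg h0]
    rw [Complex.sub_re, Complex.one_re]
    linarith

lemma continuousOn_pinch : ContinuousOn (fun p : ℝ × Circle => pinch p.1 p.2)
    {p | 0 ≤ p.1 ∧ p.1 ≤ 1 ∧ (p.1 = 1 → p.2 ≠ 1)} := by
  refine ContinuousOn.mul (by fun_prop) (Circle.exp.continuous.comp_continuousOn
    (continuousOn_const.mul fun p ⟨h0, h1, h⟩ => ContinuousAt.continuousWithinAt ?_))
  exact (Complex.continuousAt_arg (one_sub_mul_mem_slitPlane h0 h1 h)).comp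
    (f := fun p : ℝ × Circle => 1 - p.1 * (p.2 : ℂ)) (by fun_prop)

lemma exists_boundaryFold_eq_mul_exp (c : Circle) :
    ∃ h : C(Circle, ℝ), ∀ u, boundaryFold u = -(u / c) * Circle.exp (h u) := by
  obtain ⟨h, hh⟩ := exists_eq_circleExp_of_ne (w := -c * Circle.exp (-(π / 2)))
    (φ := ⟨fun u => -c * boundaryFold u / u, by
      have := continuous_boundaryFold
      fun_prop⟩) fun u hu => boundaryFold_ne_exp_mul u (by
        have := div_eq_iff_eq_mul.1 hu
        rwa [mul_assoc, mul_right_inj] at this)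
  refine ⟨h, fun u => ?_⟩
  rw [← hh]
  change _ = -(u / c) * (-c * boundaryFold u / u)
  rw [neg_mul, neg_mul, neg_div, mul_neg, neg_neg, mul_div_assoc, ← mul_assoc, div_mul_cancel,
    mul_div_cancel]

/-- The extension to the punctured annulus of the map that wraps the inner circle around the first
circle of the bouquet and the outer circle around the second one, the latter with phase `h`. The
circle through the puncture `p` is collapsed to the base point. -/
noncomputable def annulusCollapse (p : Circle × unitInterval) (h : C(Circle, ℝ))
    (q : Circle × unitInterval) : Bouquet Bool :=
  if q.2 ≤ p.2 then Bouquet.incl false (pinch (q.2 / p.2) (q.1 / p.1))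
  else Bouquet.incl true (pinch ((1 - q.2) / (1 - p.2)) (q.1 / p.1) *
    Circle.exp ((1 - (1 - q.2) / (1 - p.2)) * h q.1))

variable {p : Circle × unitInterval}

lemma annulusCollapse_inner (hp : p.2 ∈ Ioo 0 1) (h : C(Circle, ℝ)) (u : Circle) :
    annulusCollapse p h (u, 0) = Bouquet.incl false (-(u / p.1)) := by
  rw [annulusCollapse, if_pos hp.1.le, Icc.coe_zero, zero_div, pinch_zero]

lemma annulusCollapse_outer (hp : p.2 ∈ Ioo 0 1) (h : C(Circle, ℝ)) (u : Circle) :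
    annulusCollapse p h (u, 1) = Bouquet.incl true (-(u / p.1) * Circle.exp (h u)) := by
  rw [annulusCollapse, if_neg hp.2.not_ge, Icc.coe_one, sub_self, zero_div, sub_zero, pinch_zero,
    one_mul]

lemma continuousOn_annulusCollapse (hp : p.2 ∈ Ioo 0 1) (h : C(Circle, ℝ)) :
    ContinuousOn (annulusCollapse p h) {p}ᶜ := by
  have hp0 : (0 : ℝ) < p.2 := hp.1
  have hp1 : (0 : ℝ) < 1 - p.2 := sub_pos.2 hp.2
  have hdiv {q : Circle × unitInterval} (hq : q ≠ p) (hs : q.2 = p.2) : q.1 / p.1 ≠ 1 := fun hu =>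
    hq (Prod.ext (div_eq_one.1 hu) hs)
  rw [continuousOn_iff_continuous_domRestrict]
  refine continuous_if_le (f := fun q : ({p}ᶜ : Set (Circle × unitInterval)) => q.1.2)
    (g := fun _ => p.2) (by fun_prop) (by fun_prop)
    ((Bouquet.incl false).continuous.comp_continuousOn ?_)
    ((Bouquet.incl true).continuous.comp_continuousOn (.mul ?_ (by fun_prop))) fun ⟨q, hq⟩ hs => ?_
  · refine continuousOn_pinch.comp (f := fun q : ({p}ᶜ : Set (Circle × unitInterval)) =>
      ((q.1.2 : ℝ) / p.2, q.1.1 / p.1)) (by fun_prop) fun ⟨q, hq⟩ hs => ?_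
    exact ⟨div_nonneg q.2.2.1 hp0.le, (div_le_one hp0).2 hs,
      fun h => hdiv hq (Subtype.ext ((div_eq_one_iff_eq hp0.ne').1 h))⟩
  · refine continuousOn_pinch.comp (f := fun q : ({p}ᶜ : Set (Circle × unitInterval)) =>
      ((1 - q.1.2 : ℝ) / (1 - p.2), q.1.1 / p.1)) (by fun_prop) fun ⟨q, hq⟩ hs => ?_
    exact ⟨div_nonneg (sub_nonneg.2 q.2.2.2) hp1.le, (div_le_one hp1).2 (sub_le_sub_left hs 1),
      fun h => hdiv hq (Subtype.ext (sub_right_injective ((div_eq_one_iff_eq hp1.ne').1 h)))⟩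
  · have hs : q.2 = p.2 := hs
    simp only [hs]
    rw [div_self hp0.ne', div_self hp1.ne', pinch_one (hdiv hq hs), sub_self, zero_mul,
      Circle.exp_zero, mul_one, Bouquet.incl_one]

lemma factorsThrough_annulusCollapse (hp : p.2 ∈ Ioo 0 1) {h : C(Circle, ℝ)}
    (hh : ∀ u, boundaryFold u = -(u / p.1) * Circle.exp (h u)) :
    Function.FactorsThrough (annulusCollapse p h) polar := fun q q' hq => by
  obtain rfl | ⟨hq1, -, rfl⟩ := polar_eq_polar_iff.1 hq
  · rfl
  · obtain ⟨u, s⟩ := q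
    obtain rfl : s = 1 := hq1
    rw [annulusCollapse_outer hp, annulusCollapse_outer hp, ← hh, ← hh, ← fold_polar (u, 1), hq,
      fold_polar]

/-- The complement of an interior point retracts onto the two boundary circles joined by an arc. -/
lemma exists_collapse (hp : p.2 ∈ Ioo 0 1) : ∃ (R : X → Bouquet Bool) (e : C2 ≃ₜ Circle),
    ContinuousOn R {polar p}ᶜ ∧ (∀ x : C1, R x = Bouquet.incl true (outerCircleHomeo x)) ∧
      ∀ x : C2, R x = Bouquet.incl false (e x) := by
  obtain ⟨h, hh⟩ := exists_boundaryFold_eq_mul_exp p.1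
  let R : X → Bouquet Bool := annulusCollapse p h ∘ Function.surjInv polar_surjective
  have hR (q : Circle × unitInterval) : R (polar q) = annulusCollapse p h q :=
    factorsThrough_annulusCollapse hp hh (Function.surjInv_eq polar_surjective _)
  refine ⟨R, innerCircleHomeo.symm.trans ((Homeomorph.divRight p.1).trans (.neg Circle)), ?_,
    fun x => ?_, fun x => ?_⟩
  · rw [isQuotientMap_polar.continuousOn_isOpen_iff isOpen_compl_singleton,
      polar_preimage_compl_singleton hp.2.ne, show R ∘ polar = annulusCollapse p h from funext hR]
    exact continuousOn_annulusCollapse hp h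
  · obtain ⟨x, hx⟩ := x
    obtain ⟨⟨u, s⟩, rfl⟩ := polar_surjective x
    obtain rfl : s = 1 := (polar_mem_C1_iff.1 hx).1
    rw [hR, annulusCollapse_outer hp, ← hh, outerCircleHomeo_apply, fold_polar]
  · obtain ⟨u, rfl⟩ := innerCircleHomeo.surjective x
    rw [coe_innerCircleHomeo, hR, annulusCollapse_inner hp]
    simp

end Collapse

lemma exists_polar_notMem_range {f : C(X, X)} (hf : ¬ Function.Surjective f) :
    ∃ p, p.2 ∈ Ioo 0 1 ∧ polar p ∉ range f := by
  have hdense : Dense (Ioo (0 : unitInterval) 1) := by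
    have : Ioo (0 : unitInterval) 1 = univ \ {0, 1} := by
      rw [← Icc_sdiff_both, unitInterval.univ_eq_Icc]
    rw [this]
    exact dense_univ.sdiff_finite (toFinite _)
  have hopen : IsOpen (range f)ᶜ := (isCompact_range f.continuous).isClosed.isOpen_compl
  obtain ⟨_, hz, p, hp, rfl⟩ := (polar_surjective.denseRange.dense_image polar.continuous
    (hdense.preimage isOpenMap_snd)).inter_open_nonempty _ hopen
    (nonempty_compl.2 (mt range_eq_univ.1 hf))
  exact ⟨p, hp, hz⟩

lemma nullhomotopic_of_homeomorph_comp_comp {α β γ δ : Type*} [TopologicalSpace α]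
    [TopologicalSpace β] [TopologicalSpace γ] [TopologicalSpace δ] {g : C(α, β)} (e : β ≃ₜ δ)
    (e' : γ ≃ₜ α) (h : ((e : C(β, δ)).comp (g.comp (e' : C(γ, α)))).Nullhomotopic) :
    g.Nullhomotopic := by
  have := (h.comp_left (e'.symm : C(α, γ))).comp_right (e.symm : C(δ, β))
  convert this
  ext x
  simp

end MoebiusBand

/-- A boundary-essential boundary-preserving map of the punctured Möbius band sending
each boundary circle to itself is surjective. -/
theorem stmt_6 (f : C(X, X)) (hf : BoundaryPreserving f)
    (h11 : MapsTo f C1 C1) (h22 : MapsTo f C2 C2)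
    (he1 : Essential (restrictMap f h11)) (he2 : Essential (restrictMap f h22)) :
    Function.Surjective f := by
  by_contra hsurj
  obtain ⟨p, hp, hpf⟩ := exists_polar_notMem_range hsurj
  obtain ⟨R, e, hR, hR1, hR2⟩ := exists_collapse hp
  let φ : C(Circle, Circle) := .comp e (.comp (restrictMap f h22) innerCircleHomeo)
  let ψ : C(Circle, Circle) :=
    .comp outerCircleHomeo (.comp (restrictMap f h11) outerCircleHomeo.symm)
  let Rf : C(Circle × unitInterval, Bouquet Bool) :=
    ⟨fun q => R (f (polar q)), hR.comp_continuous (by fun_prop) fun q hq => hpf ⟨polar q, hq⟩⟩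
  have hinner (u : Circle) : Rf (u, 0) = Bouquet.incl false (φ u) :=
    hR2 (restrictMap f h22 (innerCircleHomeo u))
  have hside (u : Circle) (hu : 0 ≤ ((u ^ 2 : Circle) : ℂ).re) : Rf (-u, 1) = Rf (u, 1) :=
    congrArg (R ∘ f) (polar_neg_one hu)
  have houter (u : Circle) (hu : ((u ^ 2 : Circle) : ℂ).re ≤ 0) :
      Rf (u, 1) = Bouquet.incl true (ψ (boundaryFold u)) := by
    refine (hR1 (restrictMap f h11 ⟨polar (u, 1), polar_mem_C1_iff.2 ⟨rfl, hu⟩⟩)).trans ?_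
    rw [← outerCircleHomeo_symm_boundaryFold hu]
    rfl
  obtain h | h := nullhomotopic_or_of_punctured_moebius Bool.false_ne_true Rf hinner hside houter
  · exact he2 (nullhomotopic_of_homeomorph_comp_comp e innerCircleHomeo h)
  · exact he1 (nullhomotopic_of_homeomorph_comp_comp outerCircleHomeo outerCircleHomeo.symm h)

end PMB
end
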